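/- arXiv:2403.10757 — 16 statements merged into one kernel-verified Lean document; each statement's English description precedes it below -/
import Mathlib

section
/- Let n ≥ 1 be a natural number and let H be a subgroup of the free group F_n = FreeGroup (Fin n) of finite index k = [F_n : H] (k ≠ 0). Then H is a free group of rank k·(n−1)+1; in particular rank(H) − 1 = k·(n−1) (Schreier index formula). -/
/-- The rank of a subgroup: the minimal cardinality of a (finite) generating set. -/
noncomputable def rkSubgroup {G : Type*} [Group G] (H : Subgroup G) : ℕ :=
  sInf {n : ℕ | ∃ S : Finset G, S.card = n ∧ Subgroup.closure (S : Set G) = H}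

open Function

/-- Crossed cocycles of a group acting on a set. -/
def SchCocycle (G A K : Type) [Group G] [MulAction G A] [CommGroup K] : Type :=
  {c : G → A → K // ∀ g h a, c (g * h) a = c g (h • a) * c h a}

/-- Cocycles on a free group are determined freely by their values on generators. -/
theorem schCocycle_bij (X A K : Type) [MulAction (FreeGroup X) A] [CommGroup K] :
    Bijective (fun (c : SchCocycle (FreeGroup X) A K) (i : X) (a : A) =>
      c.1 (FreeGroup.of i) a) := by
  have h1 : ∀ (c : SchCocycle (FreeGroup X) A K) a, c.1 1 a = 1 := by
    intro c a
    have := c.2 1 1 a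
    simpa using this
  have hinv : ∀ (c : SchCocycle (FreeGroup X) A K) g a, c.1 g⁻¹ a = (c.1 g (g⁻¹ • a))⁻¹ := by
    intro c g a
    have := c.2 g g⁻¹ a
    rw [mul_inv_cancel, h1] at this
    exact eq_inv_of_mul_eq_one_right this.symm
  constructor
  · intro c d h
    apply Subtype.ext
    funext g
    have h' : ∀ i a, c.1 (FreeGroup.of i) a = d.1 (FreeGroup.of i) a :=
      fun i a => congrFun (congrFun h i) a
    induction g using FreeGroup.induction_on with
    | C1 => funext a; rw [h1, h1]
    | of i => funext a; exact h' i a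
    | inv_of i ih => funext a; rw [hinv, hinv, h']
    | mul x y hx hy => funext a; rw [c.2, d.2, hx, hy]
  · intro f
    let F : FreeGroup X →* (A → K) ⋊[mulAutArrow] (FreeGroup X) :=
      FreeGroup.lift (fun i => ⟨fun b => f i ((FreeGroup.of i)⁻¹ • b), FreeGroup.of i⟩)
    have hr : ∀ g, (F g).right = g := by
      intro g
      have : SemidirectProduct.rightHom.comp F = MonoidHom.id _ := by
        ext i
        simp [F]
      exact DFunLike.congr_fun this g
    refine ⟨⟨fun g a => (F g).left (g • a), ?_⟩, ?_⟩
    · intro g h a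
      simp only [map_mul, SemidirectProduct.mul_left, hr, Pi.mul_apply]
      congr 1
      · rw [mul_smul]
      · change (F h).left (g⁻¹ • (g * h) • a) = _
        rw [mul_smul, inv_smul_smul]
    · funext i a
      simp [F]

/-- Shapiro-type bijection. -/
theorem schShapiro_bij (G K : Type) [Group G] [CommGroup K] (H : Subgroup G) :
    Nonempty (SchCocycle G (G ⧸ H) K × K ≃ (H →* K) × ((G ⧸ H) → K)) := by
  let s : G ⧸ H → G := Quotient.out
  have hs : ∀ a, ((s a : G) : G ⧸ H) = a := fun a => Quotient.out_eq' a
  let a0 : G ⧸ H := ((1 : G) : G ⧸ H)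
  have hs0 : ∀ a, s a • a0 = a := by
    intro a
    change ((s a * 1 : G) : G ⧸ H) = a
    rw [mul_one, hs]
  have hH : ∀ h : H, (h : G) • a0 = a0 := by
    intro h
    change (((h : G) * 1 : G) : G ⧸ H) = ((1 : G) : G ⧸ H)
    rw [QuotientGroup.eq]
    simp
  have hr : ∀ (g : G) (a : G ⧸ H), (s (g • a))⁻¹ * g * s a ∈ H := by
    intro g a
    rw [mul_assoc, ← QuotientGroup.eq, hs]
    change g • a = g • ((s a : G) : G ⧸ H)
    rw [hs]
  let r : G → G ⧸ H → H := fun g a => ⟨_, hr g a⟩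
  have rmul : ∀ g h a, r (g * h) a = r g (h • a) * r h a := by
    intro g h a
    apply Subtype.ext
    simp only [r, Subgroup.coe_mul, mul_smul]
    group
  let φ : SchCocycle G (G ⧸ H) K → (H →* K) := fun c =>
    MonoidHom.mk' (fun h => c.1 h a0) (by
      intro x y
      change c.1 ((x : G) * y) a0 = _
      rw [c.2, hH])
  refine ⟨Equiv.ofBijective (fun p => (φ p.1, fun a => p.1.1 (s a) a0 * p.2)) ⟨?_, ?_⟩⟩
  · rintro ⟨c, x⟩ ⟨d, y⟩ h
    obtain ⟨e1, e2⟩ := Prod.mk.inj h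
    have e1' : ∀ h : H, c.1 h a0 = d.1 h a0 := fun h => DFunLike.congr_fun e1 h
    have e2' : ∀ a, c.1 (s a) a0 * x = d.1 (s a) a0 * y := fun a => congrFun e2 a
    have hxy : x = y := by
      have hm : s a0 ∈ H := by
        have := hs a0
        have h2 := QuotientGroup.eq.1 this.symm
        simpa using h2
      have h1 := e1' ⟨s a0, hm⟩
      have h2 := e2' a0
      simp only at h1
      rw [h1] at h2
      exact mul_left_cancel h2
    subst hxy
    have e3 : ∀ a, c.1 (s a) a0 = d.1 (s a) a0 := fun a => mul_right_cancel (e2' a)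
    have key : ∀ (c : SchCocycle G (G ⧸ H) K) g a,
        c.1 g a = c.1 (s (g • a)) a0 * c.1 (r g a) a0 * (c.1 (s a) a0)⁻¹ := by
      intro c g a
      have h1 := c.2 g (s a) a0
      have h2 := c.2 (s (g • a)) (r g a) a0
      rw [hs0] at h1
      rw [hH] at h2
      have h3 : s (g • a) * (r g a : G) = g * s a := by
        simp only [r]; group
      rw [h3, h1] at h2
      exact eq_mul_inv_of_mul_eq h2
    have : c = d := by
      apply Subtype.ext
      funext g a
      rw [key c, key d, e3, e3, e1']
    rw [this]
  · rintro ⟨ψ, f⟩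
    have hm : s a0 ∈ H := by
      have := hs a0
      have h2 := QuotientGroup.eq.1 this.symm
      simpa using h2
    refine ⟨⟨⟨fun g a => f (g • a) * ψ (r g a) * (f a)⁻¹, ?_⟩, f a0 * (ψ ⟨s a0, hm⟩)⁻¹⟩, ?_⟩
    · intro g h a
      simp only [rmul, map_mul, mul_smul]
      have : ∀ x y z u v : K, x * (y * z) * u⁻¹ = x * y * v⁻¹ * (v * z * u⁻¹) := by
        intro x y z u v
        group
      exact this _ _ _ _ _
    · refine Prod.ext ?_ ?_
      · ext h
        change f ((h : G) • a0) * ψ (r h a0) * (f a0)⁻¹ = ψ h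
        have : r h a0 = (⟨s a0, hm⟩ : H)⁻¹ * h * ⟨s a0, hm⟩ := by
          apply Subtype.ext
          simp only [r, hH, Subgroup.coe_mul, Subgroup.coe_inv]
        rw [this, hH, map_mul, map_mul, map_inv, mul_inv_cancel_comm, mul_comm, ← mul_assoc,
          mul_inv_cancel, one_mul]
      · funext a
        change f (s a • a0) * ψ (r (s a) a0) * (f a0)⁻¹ * (f a0 * (ψ ⟨s a0, hm⟩)⁻¹) = f a
        have : r (s a) a0 = ⟨s a0, hm⟩ := by
          apply Subtype.ext
          simp only [r, hs0]
          group
        rw [this, hs0]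
        group

/-- **Schreier index formula**: a subgroup `H` of finite index `k ≠ 0` in the free group
of rank `n ≥ 1` is free of rank `k·(n−1)+1`; in particular `rank(H) − 1 = k·(n−1)`. -/
theorem schreier_index_formula (n k : ℕ) (hn : 1 ≤ n)
    (H : Subgroup (FreeGroup (Fin n))) (hk : H.index = k) (hk0 : k ≠ 0) :
    Nonempty (H ≃* FreeGroup (Fin (k * (n - 1) + 1))) ∧
      rkSubgroup H - 1 = k * (n - 1) := by
  let K := Multiplicative (ZMod 2)
  have cK : Nat.card K = 2 := by
    simp [K]
  have hcA : Nat.card (FreeGroup (Fin n) ⧸ H) = k := hk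
  have : Finite (FreeGroup (Fin n) ⧸ H) := Nat.finite_of_card_ne_zero (by rw [hcA]; exact hk0)
  have : Finite K := Nat.finite_of_card_ne_zero (by rw [cK]; decide)
  have : Nontrivial K := by
    rw [← Finite.one_lt_card_iff_nontrivial, cK]; decide
  obtain ⟨E⟩ := schShapiro_bij (FreeGroup (Fin n)) K H
  let E1 := Equiv.ofBijective _ (schCocycle_bij (Fin n) (FreeGroup (Fin n) ⧸ H) K)
  have c1 : Nat.card (SchCocycle (FreeGroup (Fin n)) (FreeGroup (Fin n) ⧸ H) K)
      = (2 ^ k) ^ n := by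
    rw [Nat.card_congr E1, Nat.card_fun, Nat.card_fun, cK, hcA, Nat.card_fin]
  have c2 := Nat.card_congr E
  rw [Nat.card_prod, Nat.card_prod, c1, cK, Nat.card_fun, cK, hcA] at c2
  let X := IsFreeGroup.Generators H
  let E2 : (X → K) ≃ (H →* K) := IsFreeGroup.lift
  have hHom : Nat.card (H →* K) ≠ 0 := by
    intro h0
    rw [h0] at c2
    have : 0 < (2 ^ k) ^ n * 2 := by positivity
    omega
  have finHom : Finite (H →* K) := Nat.finite_of_card_ne_zero hHom
  have finX : Finite X := by
    have : Finite (X → K) := Finite.of_equiv _ E2.symm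
    by_contra hinf
    rw [not_finite_iff_infinite] at hinf
    exact not_finite (X → K)
  have c3 : Nat.card (H →* K) = 2 ^ Nat.card X := by
    rw [← Nat.card_congr E2, Nat.card_fun, cK]
  have cX : Nat.card X = k * (n - 1) + 1 := by
    rw [c3, ← pow_mul, ← pow_succ, ← pow_add] at c2
    have := Nat.pow_right_injective (le_refl 2) c2
    obtain ⟨m, rfl⟩ := Nat.exists_eq_add_of_le hn
    simp only [Nat.add_sub_cancel_left]
    have h2 : k * (1 + m) = k + k * m := by ring
    omega
  have eX : X ≃ Fin (k * (n - 1) + 1) := (Finite.equivFin X).trans (finCongr cX)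
  refine ⟨⟨(IsFreeGroup.toFreeGroup H).trans (FreeGroup.freeGroupCongr eX)⟩, ?_⟩
  suffices rkSubgroup H = k * (n - 1) + 1 by omega
  have hmem : (k * (n - 1) + 1) ∈ {j : ℕ | ∃ S : Finset (FreeGroup (Fin n)), S.card = j ∧
      Subgroup.closure (S : Set (FreeGroup (Fin n))) = H} := by
    classical
    have := Fintype.ofFinite X
    let ι : X → FreeGroup (Fin n) := fun x => (IsFreeGroup.of x : H)
    have hι : Injective ι :=
      Subtype.val_injective.comp (IsFreeGroup.basis H).injective
    refine ⟨Finset.univ.image ι, ?_, ?_⟩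
    · rw [Finset.card_image_of_injective _ hι, Finset.card_univ, ← Nat.card_eq_fintype_card, cX]
    · have e1 : ((Finset.univ.image ι : Finset _) : Set (FreeGroup (Fin n)))
          = H.subtype '' (Set.range (IsFreeGroup.of (G := H))) := by
        ext z; simp [ι, X]
      have e2 : Set.range (IsFreeGroup.of (G := H))
          = (IsFreeGroup.mulEquiv H).toMonoidHom '' (Set.range FreeGroup.of) := by
        rw [← Set.range_comp]; rfl
      rw [e1, ← MonoidHom.map_closure, e2, ← MonoidHom.map_closure, FreeGroup.closure_range_of,
        ← MonoidHom.range_eq_map, MonoidHom.range_eq_top.2 (IsFreeGroup.mulEquiv H).surjective,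
        ← MonoidHom.range_eq_map, Subgroup.range_subtype]
  apply le_antisymm
  · exact Nat.sInf_le hmem
  · refine le_csInf ⟨_, hmem⟩ ?_
    rw [← cX]
    rintro j ⟨S, hS, hcl⟩
    have hSH : ∀ z ∈ S, z ∈ H := fun z hz => hcl ▸ Subgroup.subset_closure hz
    have hinj : Injective (fun (f : H →* K) (z : S) => f ⟨z.1, hSH z.1 z.2⟩) := by
      intro f g hfg
      have hall : ∀ z (hz : z ∈ Subgroup.closure (S : Set (FreeGroup (Fin n)))) (hz' : z ∈ H),
          f ⟨z, hz'⟩ = g ⟨z, hz'⟩ := by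
        intro z hz
        induction hz using Subgroup.closure_induction with
        | mem x hx => intro _; exact congrFun hfg ⟨x, hx⟩
        | one => intro _; exact (map_one f).trans (map_one g).symm
        | mul x y hx hy ihx ihy =>
          intro _
          rw [hcl] at hx hy
          have := congrArg₂ (· * ·) (ihx hx) (ihy hy)
          simp only [← map_mul] at this
          exact this
        | inv x hx ih =>
          intro _
          rw [hcl] at hx
          have := congrArg (·⁻¹) (ih hx)
          exact (map_inv f ⟨x, hx⟩).trans (this.trans (map_inv g ⟨x, hx⟩).symm)
      ext z
      rw [hall z.1 (hcl ▸ z.2) z.2]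
    have := Nat.card_le_card_of_injective _ hinj
    rw [c3, Nat.card_fun, cK, Nat.card_eq_fintype_card (α := S), Fintype.card_coe, hS] at this
    exact (Nat.pow_le_pow_iff_right (by norm_num)).1 this
end

section
/- Let A be a countable type with at least two distinct elements and let B be any countable type. Then there exists a subgroup H of FreeGroup A that is isomorphic as a group to FreeGroup B; i.e., a free group of rank κ with 2 ≤ κ ≤ ℵ₀ contains subgroups isomorphic to the free group of every rank μ ≤ ℵ₀. -/
/-- The shift action of `ℤ` on the free group on `ℤ`. -/
def shiftHom : Multiplicative ℤ →* MulAut (FreeGroup ℤ) where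
  toFun n := FreeGroup.freeGroupCongr (Equiv.addLeft n.toAdd)
  map_one' := by
    apply MulEquiv.toMonoidHom_injective
    ext x
    simp
  map_mul' m n := by
    apply MulEquiv.toMonoidHom_injective
    ext x
    simp [add_assoc]

/-- A free group of countable rank at least 2 contains a subgroup isomorphic to the
free group on any countable type `B`. -/
theorem exists_subgroup_iso_freeGroup {A B : Type*} [Countable A] [Countable B]
    (a b : A) (hab : a ≠ b) :
    ∃ H : Subgroup (FreeGroup A), Nonempty (H ≃* FreeGroup B) := by
  classical
  obtain ⟨f, hf⟩ := exists_injective_nat B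
  let c : B → ℤ := fun x => (f x : ℤ)
  have hc : Function.Injective c := fun x y h => hf (by simpa [c] using h)
  let g : FreeGroup B →* FreeGroup A :=
    FreeGroup.lift fun x => FreeGroup.of a ^ (c x) * FreeGroup.of b * (FreeGroup.of a ^ (c x))⁻¹
  let p : FreeGroup A →* FreeGroup ℤ ⋊[shiftHom] Multiplicative ℤ :=
    FreeGroup.lift fun x =>
      if x = a then SemidirectProduct.inr (Multiplicative.ofAdd 1)
      else SemidirectProduct.inl (FreeGroup.of 0)
  have hpg : p.comp g = SemidirectProduct.inl.comp (FreeGroup.map c) := by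
    ext1 x
    have h1 : p (FreeGroup.of a) = SemidirectProduct.inr (Multiplicative.ofAdd 1) := by simp [p]
    have h2 : p (FreeGroup.of b) = SemidirectProduct.inl (FreeGroup.of 0) := by
      simp [p, hab.symm]
    simp only [MonoidHom.comp_apply, g, FreeGroup.lift_apply_of, map_mul, map_inv, map_zpow, h1, h2,
      FreeGroup.map.of]
    rw [← map_zpow, ← map_inv, ← SemidirectProduct.inl_aut]
    congr 1
    simp [shiftHom]
  have hg : Function.Injective g := by
    have : Function.Injective (p.comp g) := by
      rw [hpg]
      exact SemidirectProduct.inl_injective.comp (FreeGroup.map_injective hc)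
    exact Function.Injective.of_comp (f := p) this
  exact ⟨g.range, ⟨(MonoidHom.ofInjective hg).symm⟩⟩
end

section
/- Let A be a countable type with at least two distinct elements. Then the free group FreeGroup A has uncountably many subgroups; i.e., the type Subgroup (FreeGroup A) is not countable. -/
open Classical in
/-- Flip the sign over the integers in `S`. -/
noncomputable def flipPerm (S : Set ℤ) : Equiv.Perm (ℤ × Bool) :=
  Function.Involutive.toPerm (fun p => (p.1, xor p.2 (decide (p.1 ∈ S)))) (by
    rintro ⟨n, c⟩
    simp)

/-- Translate the integer coordinate. -/
def shiftPerm : Multiplicative ℤ →* Equiv.Perm (ℤ × Bool) where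
  toFun k := (Equiv.addRight k.toAdd).prodCongr (Equiv.refl Bool)
  map_one' := by ext p <;> simp
  map_mul' x y := by ext p <;> simp [add_comm, add_left_comm]

open Classical in
/-- The action of the free group attached to `S`. -/
noncomputable def actHom {A : Type*} (a : A) (S : Set ℤ) :
    FreeGroup A →* Equiv.Perm (ℤ × Bool) :=
  FreeGroup.lift (fun x => if x = a then shiftPerm (Multiplicative.ofAdd 1) else flipPerm S)

/-- The stabilizer of the base point. -/
noncomputable def stab {A : Type*} (a : A) (S : Set ℤ) : Subgroup (FreeGroup A) :=
  (MulAction.stabilizer (Equiv.Perm (ℤ × Bool)) ((0, false) : ℤ × Bool)).comap (actHom a S)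

theorem mem_stab {A : Type*} (a b : A) (hab : a ≠ b) (S : Set ℤ) (n : ℤ) :
    (FreeGroup.of a ^ n)⁻¹ * FreeGroup.of b * FreeGroup.of a ^ n ∈ stab a S ↔ n ∉ S := by
  have ha : actHom a S (FreeGroup.of a) = shiftPerm (Multiplicative.ofAdd 1) := by
    simp [actHom]
  have hb : actHom a S (FreeGroup.of b) = flipPerm S := by
    simp [actHom, hab.symm]
  have hs : shiftPerm (Multiplicative.ofAdd n) (0, false) = (n, false) := by
    simp [shiftPerm]
  have hn : actHom a S (FreeGroup.of a ^ n) = shiftPerm (Multiplicative.ofAdd n) := by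
    rw [map_zpow, ha, ← map_zpow, ← ofAdd_zsmul]
    simp
  rw [stab, Subgroup.mem_comap, MulAction.mem_stabilizer_iff, map_mul, map_mul, map_inv, hn, hb,
    Equiv.Perm.smul_def, Equiv.Perm.mul_apply, Equiv.Perm.mul_apply, Equiv.Perm.inv_eq_iff_eq, hs]
  classical
  have hflip : flipPerm S (n, false) = (n, xor false (decide (n ∈ S))) := by
    unfold flipPerm
    refine Prod.ext rfl ?_
    change xor false (decide _) = xor false (decide _)
    congr
  rw [hflip]
  simp

/-- A free group of countable rank at least 2 has uncountably many subgroups. -/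
theorem uncountably_many_subgroups {A : Type*} [Countable A] (a b : A) (hab : a ≠ b) :
    ¬ Countable (Subgroup (FreeGroup A)) := by
  intro h
  have hinj : Function.Injective (stab a) := by
    intro S T hST
    ext n
    have h1 := mem_stab a b hab S n
    rw [hST, mem_stab a b hab T n] at h1
    exact (not_iff_not.mp h1).symm
  have hc : Countable (Set ℤ) := hinj.countable
  obtain ⟨f, hf⟩ := hc.exists_injective_nat
  exact Function.cantor_injective (fun s => (f s : ℤ)) (fun x y hxy => hf (by simpa using hxy))
end

section
/- Let A be a finite type. Then every surjective group endomorphism φ : FreeGroup A →* FreeGroup A is injective (hence an automorphism); i.e., finitely generated free groups are Hopfian. -/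
/-- Left multiplication by `g`, restricted to a finite set `S`, extends to a permutation of `S`. -/
theorem exists_perm_extending {G : Type*} [Group G] (S : Set G) [Finite S] (g : G) :
    ∃ σ : Equiv.Perm S, ∀ (s : S) (h : g * s.1 ∈ S), σ s = ⟨g * s.1, h⟩ := by
  classical
  have := Fintype.ofFinite S
  let e : {s : S // g * s.1 ∈ S} ≃ {s : S // g⁻¹ * s.1 ∈ S} :=
    { toFun := fun s => ⟨⟨g * s.1.1, s.2⟩, by simp⟩
      invFun := fun s => ⟨⟨g⁻¹ * s.1.1, s.2⟩, by simp⟩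
      left_inv := fun s => by simp
      right_inv := fun s => by simp }
  exact ⟨e.extendSubtype, fun s h => by rw [Equiv.extendSubtype_apply_of_mem e s h]; rfl⟩

/-- Free groups are residually finite. -/
theorem freeGroup_exists_finite_quotient {A : Type*} (w : FreeGroup A) (hw : w ≠ 1) :
    ∃ (S : Set (FreeGroup A)) (_ : Finite S) (f : FreeGroup A →* Equiv.Perm S), f w ≠ 1 := by
  classical
  obtain ⟨L, rfl⟩ : ∃ L, FreeGroup.mk L = w := ⟨w.toWord, FreeGroup.mk_toWord⟩
  let S : Set (FreeGroup A) := FreeGroup.mk '' {l | l ∈ L.tails}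
  have hS : Finite S := ((List.finite_toSet L.tails).image _).to_subtype
  have hmem : ∀ l, l <:+ L → FreeGroup.mk l ∈ S := fun l hl => ⟨l, by simpa using hl, rfl⟩
  choose σ hσ using fun a : A => exists_perm_extending S (FreeGroup.of a)
  refine ⟨S, hS, FreeGroup.lift σ, fun h => hw ?_⟩
  have key : ∀ l (hl : l <:+ L), FreeGroup.lift σ (FreeGroup.mk l) ⟨1, hmem [] List.nil_suffix⟩
      = ⟨FreeGroup.mk l, hmem l hl⟩ := by
    intro l
    induction l with
    | nil => intro hl; rfl
    | cons x l ih =>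
      intro hl
      have hl' : l <:+ L := (List.suffix_cons x l).trans hl
      have hm := hmem _ hl
      obtain ⟨a, b⟩ := x
      have hsplit : FreeGroup.mk ((a, b) :: l) = FreeGroup.mk [(a, b)] * FreeGroup.mk l := by
        simp
      cases b with
      | true =>
        have h2 := hσ a ⟨_, hmem l hl'⟩ (by rw [hsplit] at hm; exact hm)
        have h3 : FreeGroup.mk [(a, true)] = FreeGroup.of a := rfl
        simp only [hsplit, map_mul, Equiv.Perm.mul_apply, ih hl', h3, FreeGroup.lift_apply_of, h2]
      | false =>
        have h3 : FreeGroup.mk [(a, false)] = (FreeGroup.of a)⁻¹ := rfl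
        have h4 : FreeGroup.of a * FreeGroup.mk ((a, false) :: l) = FreeGroup.mk l := by
          rw [hsplit, h3]; simp
        have h2 := hσ a ⟨_, hm⟩ (by simpa only [h4] using hmem l hl')
        simp only [h4] at h2
        have h5 : FreeGroup.lift σ (FreeGroup.mk ((a, false) :: l))
            = (σ a)⁻¹ * FreeGroup.lift σ (FreeGroup.mk l) := by
          rw [hsplit, h3]; simp
        rw [h5, Equiv.Perm.mul_apply, ih hl', Equiv.Perm.inv_eq_iff_eq, h2]
  have := key L List.suffix_rfl
  rw [h] at this
  exact (congrArg Subtype.val this).symm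

/-- Finitely generated free groups are Hopfian: every surjective endomorphism of
`FreeGroup A`, for `A` finite, is injective. -/
theorem freeGroup_hopfian {A : Type*} [Finite A]
    (φ : FreeGroup A →* FreeGroup A) (hφ : Function.Surjective φ) :
    Function.Injective φ := by
  rw [injective_iff_map_eq_one]
  intro w hw
  by_contra hne
  obtain ⟨S, hS, f, hf⟩ := freeGroup_exists_finite_quotient w hne
  have hfin : Finite (FreeGroup A →* Equiv.Perm S) := Finite.of_equiv _ FreeGroup.lift
  have hinj : Function.Injective (fun g : FreeGroup A →* Equiv.Perm S => g.comp φ) :=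
    fun g₁ g₂ h => (MonoidHom.cancel_right hφ).1 h
  obtain ⟨g, hg⟩ := Finite.surjective_of_injective hinj f
  apply hf
  rw [← hg]
  simp [hw]
end

section
/- Let G be a finitely generated group and let k ≥ 1 be a natural number. Then the set {H : Subgroup G | H.index = k} of subgroups of G of index k is finite. -/
/-- A finitely generated group has only finitely many subgroups of any given
finite index `k ≥ 1`. -/
theorem finitely_many_subgroups_of_index {G : Type*} [Group G] [Group.FG G]
    (k : ℕ) (hk : 1 ≤ k) :
    {H : Subgroup G | H.index = k}.Finite := by
  obtain ⟨S, hS⟩ := (Group.fg_def (G := G)).1 inferInstance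
  have hfin : Finite (G →* Equiv.Perm (Fin k)) := by
    refine Finite.of_injective
      (fun (f : G →* Equiv.Perm (Fin k)) (s : S) => f s) ?_
    intro f g hfg
    refine MonoidHom.eq_of_eqOn_dense hS ?_
    intro x hx
    exact congrFun hfg ⟨x, hx⟩
  refine (Set.finite_range (fun p : (G →* Equiv.Perm (Fin k)) × Fin k =>
    (MulAction.stabilizer (Equiv.Perm (Fin k)) p.2).comap p.1)).subset ?_
  intro H hH
  have hH' : Nat.card (G ⧸ H) = k := hH
  have : Finite (G ⧸ H) := Nat.finite_of_card_ne_zero (by omega)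
  let e : (G ⧸ H) ≃ Fin k := Finite.equivFinOfCardEq hH'
  refine ⟨(e.permCongrHom.toMonoidHom.comp (MulAction.toPermHom G (G ⧸ H)),
    e ((1 : G) : G ⧸ H)), ?_⟩
  ext g
  have h1 : g • ((1 : G) : G ⧸ H) = ((1 : G) : G ⧸ H) ↔ g ∈ H := by
    rw [← MulAction.mem_stabilizer_iff, MulAction.stabilizer_quotient]
  rw [← h1]
  simp [MulAction.mem_stabilizer_iff, Equiv.permCongrHom, Equiv.permCongr_apply]
end

section
/- For n ≥ 1 and k ≥ 1, let N_n(k) denote the (finite) number of subgroups of index k of the free group FreeGroup (Fin n) of rank n, i.e., N_n(k) = Nat.card {H : Subgroup (FreeGroup (Fin n)) | H.index = k}. Then N_n(1) = 1 and, for every k ≥ 1, N_n(k) = k·(k!)^{n−1} − ∑_{i=1}^{k−1} ((k−i)!)^{n−1}·N_n(i); equivalently, k·(k!)^{n−1} = ∑_{i=1}^{k} ((k−i)!)^{n−1}·N_n(i) (M. Hall's recursion formula). -/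
/-- The number of subgroups of index `k` in the free group of rank `n`. -/
noncomputable def numSubgroupsOfIndex (n k : ℕ) : ℕ :=
  Nat.card {H : Subgroup (FreeGroup (Fin n)) | H.index = k}

theorem hallCardPermExtend {A X : Type} [Finite X] (f g : A ↪ X) :
    Nat.card {σ : Equiv.Perm X // ∀ a, σ (f a) = g a} =
      (Nat.card X - Nat.card A).factorial := by
  classical
  have : Finite A := Finite.of_injective f f.injective
  have := Fintype.ofFinite X
  have := Fintype.ofFinite A
  -- an extension
  obtain ⟨τ, hτ⟩ : ∃ τ : Equiv.Perm X, ∀ a, τ (f a) = g a := by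
    let e : {x // x ∈ Set.range f} ≃ {x // x ∈ Set.range g} :=
      (Equiv.ofInjective f f.injective).symm.trans (Equiv.ofInjective g g.injective)
    refine ⟨e.extendSubtype, fun a => ?_⟩
    rw [Equiv.extendSubtype_apply_of_mem e (f a) ⟨a, rfl⟩]
    have : (⟨f a, ⟨a, rfl⟩⟩ : {x // x ∈ Set.range f}) = Equiv.ofInjective f f.injective a := rfl
    simp only [e, this, Equiv.trans_apply, Equiv.symm_apply_apply]
    rfl
  have e1 : {σ : Equiv.Perm X // ∀ a, σ (f a) = g a} ≃
      {σ : Equiv.Perm X // ∀ x, ¬ (x ∉ Set.range f) → σ x = x} :=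
    { toFun := fun σ => ⟨τ⁻¹ * σ.1, by
        intro x hx
        rw [not_not] at hx
        obtain ⟨a, rfl⟩ := hx
        rw [Equiv.Perm.mul_apply, σ.2, ← hτ]
        simp⟩
      invFun := fun σ => ⟨τ * σ.1, by
        intro a
        rw [Equiv.Perm.mul_apply, σ.2 _ (by simp), hτ]⟩
      left_inv := fun σ => by ext; simp
      right_inv := fun σ => by ext; simp }
  rw [Nat.card_congr (e1.trans (Equiv.Perm.subtypeEquivSubtypePerm (fun x => x ∉ Set.range f)).symm)]
  rw [Nat.card_perm]
  congr 1
  have h2 : Nat.card {x // x ∈ Set.range f} = Nat.card A :=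
    Nat.card_congr (Equiv.ofInjective f f.injective).symm
  have h3 := Nat.card_congr (Equiv.sumCompl (fun x => x ∈ Set.range f))
  rw [Nat.card_sum, h2] at h3
  omega

/-- Disjoint unions of sets of constant cardinality (no finiteness of the base needed). -/
theorem hallCardSigmaConst {B : Type} {C : B → Type} (c : ℕ) (hf : ∀ b, Finite (C b))
    (h : ∀ b, Nat.card (C b) = c) : Nat.card (Σ b, C b) = Nat.card B * c := by
  have e : (Σ b, C b) ≃ B × Fin c :=
    (Equiv.sigmaCongrRight (fun b => Finite.equivFinOfCardEq (h b))).trans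
      (Equiv.sigmaEquivProd B (Fin c))
  rw [Nat.card_congr e, Nat.card_prod, Nat.card_fin]

theorem hallCardPointedEmb {A X : Type} [Finite X] [Finite A] (a₀ : A) (x₀ : X)
    (hAX : Nat.card A ≤ Nat.card X) :
    Nat.card {f : A ↪ X // f a₀ = x₀} * (Nat.card X - Nat.card A).factorial =
      (Nat.card X - 1).factorial := by
  classical
  have := Fintype.ofFinite X
  have := Fintype.ofFinite A
  obtain ⟨f₁⟩ : Nonempty (A ↪ X) :=
    Function.Embedding.nonempty_of_card_le (by simpa [Nat.card_eq_fintype_card] using hAX)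
  let f₀ : A ↪ X := f₁.trans (Equiv.swap (f₁ a₀) x₀).toEmbedding
  have hf₀ : f₀ a₀ = x₀ := by simp [f₀]
  have h1 := hallCardPermExtend (A := Unit) (X := X)
    ⟨fun _ => x₀, fun _ _ _ => rfl⟩ ⟨fun _ => x₀, fun _ _ _ => rfl⟩
  rw [Nat.card_unique (α := Unit)] at h1
  rw [← h1, ← hallCardSigmaConst
    (C := fun f : {f : A ↪ X // f a₀ = x₀} => {σ : Equiv.Perm X // ∀ a, σ (f₀ a) = f.1 a})
    _ (fun _ => inferInstance) (fun f => hallCardPermExtend f₀ f.1)]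
  refine Nat.card_congr
    { toFun := fun p => ⟨p.2.1, fun _ => ?_⟩
      invFun := fun σ => ⟨⟨f₀.trans σ.1.toEmbedding, ?_⟩, ⟨σ.1, fun a => rfl⟩⟩
      left_inv := ?_
      right_inv := ?_ }
  · have := p.2.2 a₀
    rw [hf₀, p.1.2] at this
    exact this
  · have h : σ.1 x₀ = x₀ := σ.2 ()
    change σ.1 (f₀ a₀) = x₀
    rw [hf₀, h]
  · rintro ⟨⟨f, hf⟩, ⟨σ, hσ⟩⟩
    have : f = f₀.trans σ.toEmbedding := by
      ext a; exact (hσ a).symm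
    subst this
    rfl
  · intro σ; rfl

/-- The stabilizer of `x₀` for the action given by images of the generators. -/
def hallStab {n : ℕ} {X : Type} (x₀ : X) (φ : Fin n → Equiv.Perm X) :
    Subgroup (FreeGroup (Fin n)) :=
  (MulAction.stabilizer (Equiv.Perm X) x₀).comap (FreeGroup.lift φ)

theorem hall_mem_stab {n : ℕ} {X : Type} (x₀ : X) (φ : Fin n → Equiv.Perm X)
    (g : FreeGroup (Fin n)) : g ∈ hallStab x₀ φ ↔ FreeGroup.lift φ g x₀ = x₀ := Iff.rfl

theorem hall_equivariant {n : ℕ} {X : Type} (H : Subgroup (FreeGroup (Fin n)))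
    (f : (FreeGroup (Fin n) ⧸ H) → X) (φ : Fin n → Equiv.Perm X)
    (h : ∀ j q, φ j (f q) = f (FreeGroup.of j • q)) (g : FreeGroup (Fin n)) :
    ∀ q, FreeGroup.lift φ g (f q) = f (g • q) := by
  induction g using FreeGroup.induction_on with
  | C1 => intro q; simp
  | of j => intro q; simpa using h j q
  | inv_of j ih =>
    intro q
    rw [map_inv, Equiv.Perm.inv_eq_iff_eq, ih, smul_inv_smul]
  | mul x y hx hy =>
    intro q
    rw [map_mul, Equiv.Perm.mul_apply, hy, hx, mul_smul]

theorem hall_unique {n : ℕ} {X : Type} (x₀ : X) (H : Subgroup (FreeGroup (Fin n)))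
    (f : (FreeGroup (Fin n) ⧸ H) → X) (hf : f (1 : FreeGroup (Fin n)) = x₀)
    (φ : Fin n → Equiv.Perm X)
    (h : ∀ j q, φ j (f q) = f (FreeGroup.of j • q)) (g : FreeGroup (Fin n)) :
    f (g : FreeGroup (Fin n) ⧸ H) = FreeGroup.lift φ g x₀ := by
  rw [← hf, hall_equivariant H f φ h g]
  congr 1
  rw [MulAction.Quotient.smul_coe, smul_eq_mul, mul_one]

theorem hall_stab_eq {n : ℕ} {X : Type} (x₀ : X) (H : Subgroup (FreeGroup (Fin n)))
    (f : (FreeGroup (Fin n) ⧸ H) ↪ X) (hf : f (1 : FreeGroup (Fin n)) = x₀)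
    (φ : Fin n → Equiv.Perm X)
    (h : ∀ j q, φ j (f q) = f (FreeGroup.of j • q)) : hallStab x₀ φ = H := by
  ext g
  rw [hall_mem_stab, ← hall_unique x₀ H f hf φ h g]
  nth_rewrite 1 [← hf]
  rw [f.injective.eq_iff, eq_comm, QuotientGroup.eq]
  simp

theorem hall_exists {n : ℕ} {X : Type} (x₀ : X) (φ : Fin n → Equiv.Perm X) :
    ∃ f : (FreeGroup (Fin n) ⧸ hallStab x₀ φ) ↪ X, f (1 : FreeGroup (Fin n)) = x₀ ∧
      ∀ j q, φ j (f q) = f (FreeGroup.of j • q) := by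
  have key : ∀ a b : FreeGroup (Fin n), a⁻¹ * b ∈ hallStab x₀ φ ↔
      FreeGroup.lift φ a x₀ = FreeGroup.lift φ b x₀ := by
    intro a b
    rw [hall_mem_stab, map_mul, map_inv, Equiv.Perm.mul_apply, Equiv.Perm.inv_eq_iff_eq, eq_comm]
  refine ⟨⟨fun q => Quotient.liftOn' q (fun g => FreeGroup.lift φ g x₀) ?_, ?_⟩, ?_, ?_⟩
  · intro a b hab
    rw [QuotientGroup.leftRel_apply] at hab
    exact (key a b).1 hab
  · intro p q
    induction p using QuotientGroup.induction_on with | H a => ?_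
    induction q using QuotientGroup.induction_on with | H b => ?_
    intro hab
    exact QuotientGroup.eq.2 ((key a b).2 hab)
  · change FreeGroup.lift φ 1 x₀ = x₀
    simp
  · intro j q
    induction q using QuotientGroup.induction_on with | H a => ?_
    change φ j (FreeGroup.lift φ a x₀) = FreeGroup.lift φ (FreeGroup.of j * a) x₀
    simp

theorem hallCardStab {n k : ℕ} (x₀ : Fin k) (H : Subgroup (FreeGroup (Fin n)))
    (h1 : 1 ≤ H.index) (hk : H.index ≤ k) :
    Nat.card {φ : Fin n → Equiv.Perm (Fin k) // hallStab x₀ φ = H} * (k - H.index).factorial =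
      (k - 1).factorial * (k - H.index).factorial ^ n := by
  classical
  have hcard : Nat.card (FreeGroup (Fin n) ⧸ H) = H.index := rfl
  have : Finite (FreeGroup (Fin n) ⧸ H) := Nat.finite_of_card_ne_zero (by omega)
  let a₀ : FreeGroup (Fin n) ⧸ H := ((1 : FreeGroup (Fin n)) : FreeGroup (Fin n) ⧸ H)
  have hE := hallCardPointedEmb a₀ x₀ (by rw [hcard, Nat.card_fin]; exact hk)
  rw [hcard, Nat.card_fin] at hE
  have hS := hallCardSigmaConst
    (B := {f : (FreeGroup (Fin n) ⧸ H) ↪ Fin k // f a₀ = x₀})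
    (C := fun f => {φ : Fin n → Equiv.Perm (Fin k) //
      ∀ j q, φ j (f.1 q) = f.1 (FreeGroup.of j • q)})
    ((k - H.index).factorial ^ n) (fun _ => inferInstance) (by
      intro f
      rw [Nat.card_congr (Equiv.subtypePiEquivPi
        (p := fun j (σ : Equiv.Perm (Fin k)) => ∀ q, σ (f.1 q) = f.1 (FreeGroup.of j • q))),
        Nat.card_pi]
      have : ∀ j : Fin n, Nat.card {σ : Equiv.Perm (Fin k) //
          ∀ q, σ (f.1 q) = f.1 (FreeGroup.of j • q)} = (k - H.index).factorial := by
        intro j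
        have := hallCardPermExtend f.1 ((MulAction.toPerm (FreeGroup.of j)).toEmbedding.trans f.1)
        rw [hcard, Nat.card_fin] at this
        exact this
      rw [Finset.prod_congr rfl (fun j _ => this j)]
      simp)
  have hB : Nat.card {φ : Fin n → Equiv.Perm (Fin k) // hallStab x₀ φ = H} =
      Nat.card (Σ f : {f : (FreeGroup (Fin n) ⧸ H) ↪ Fin k // f a₀ = x₀},
        {φ : Fin n → Equiv.Perm (Fin k) //
          ∀ j q, φ j (f.1 q) = f.1 (FreeGroup.of j • q)}) := by
    symm
    refine Nat.card_congr (Equiv.ofBijective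
      (fun p => ⟨p.2.1, hall_stab_eq x₀ H p.1.1 p.1.2 p.2.1 p.2.2⟩) ⟨?_, ?_⟩)
    · rintro ⟨⟨f, hf⟩, ⟨φ, hφ⟩⟩ ⟨⟨f', hf'⟩, ⟨φ', hφ'⟩⟩ heq
      obtain rfl : φ = φ' := congrArg Subtype.val heq
      obtain rfl : f = f' := by
        ext q
        induction q using QuotientGroup.induction_on with | H a => ?_
        rw [hall_unique x₀ H f hf φ hφ a, hall_unique x₀ H f' hf' φ hφ' a]
      rfl
    · rintro ⟨φ, rfl⟩
      obtain ⟨f, hf, hφ⟩ := hall_exists x₀ φ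
      exact ⟨⟨⟨f, hf⟩, ⟨φ, hφ⟩⟩, rfl⟩
  rw [hB, hS, ← hE]
  ring

theorem hallStab_index {n k : ℕ} (x₀ : Fin k) (φ : Fin n → Equiv.Perm (Fin k)) :
    1 ≤ (hallStab x₀ φ).index ∧ (hallStab x₀ φ).index ≤ k := by
  obtain ⟨f, -, -⟩ := hall_exists x₀ φ
  have : Finite (FreeGroup (Fin n) ⧸ hallStab x₀ φ) := Finite.of_injective f f.injective
  constructor
  · exact Nat.card_pos
  · have := Nat.card_le_card_of_injective f f.injective
    rwa [Nat.card_fin] at this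

theorem hallCardIndex {n k : ℕ} (hn : 1 ≤ n) (x₀ : Fin k) (i : ℕ) (h1 : 1 ≤ i) (hk : i ≤ k) :
    Nat.card {φ : Fin n → Equiv.Perm (Fin k) // (hallStab x₀ φ).index = i} =
      (k - 1).factorial * ((k - i).factorial ^ (n - 1) * numSubgroupsOfIndex n i) := by
  have hS := hallCardSigmaConst
    (B := {H : Subgroup (FreeGroup (Fin n)) // H.index = i})
    (C := fun H => {φ : Fin n → Equiv.Perm (Fin k) // hallStab x₀ φ = H.1})
    ((k - 1).factorial * (k - i).factorial ^ (n - 1)) (fun _ => inferInstance) (by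
      rintro ⟨H, rfl⟩
      have := hallCardStab x₀ H h1 hk
      apply Nat.eq_of_mul_eq_mul_right (Nat.factorial_pos (k - H.index))
      rw [this, mul_assoc, ← pow_succ, Nat.sub_add_cancel hn])
  have hB : Nat.card {φ : Fin n → Equiv.Perm (Fin k) // (hallStab x₀ φ).index = i} =
      Nat.card (Σ H : {H : Subgroup (FreeGroup (Fin n)) // H.index = i},
        {φ : Fin n → Equiv.Perm (Fin k) // hallStab x₀ φ = H.1}) := by
    refine Nat.card_congr
      { toFun := fun φ => ⟨⟨hallStab x₀ φ.1, φ.2⟩, ⟨φ.1, rfl⟩⟩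
        invFun := fun p => ⟨p.2.1, by rw [p.2.2]; exact p.1.2⟩
        left_inv := fun φ => rfl
        right_inv := ?_ }
    rintro ⟨⟨H, hH⟩, ⟨φ, hφ⟩⟩
    dsimp only at hφ
    subst hφ
    rfl
  have hN : Nat.card {H : Subgroup (FreeGroup (Fin n)) // H.index = i} =
    numSubgroupsOfIndex n i := rfl
  rw [hB, hS, hN]
  ring

theorem hall_sum (n : ℕ) (hn : 1 ≤ n) (k : ℕ) (hk : 1 ≤ k) :
    k * (Nat.factorial k) ^ (n - 1) =
      ∑ i ∈ Finset.Icc 1 k,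
        (Nat.factorial (k - i)) ^ (n - 1) * numSubgroupsOfIndex n i := by
  classical
  let x₀ : Fin k := ⟨0, hk⟩
  have hT : Fintype.card (Fin n → Equiv.Perm (Fin k)) = k.factorial ^ n := by
    simp [Fintype.card_perm]
  have hsum := Finset.card_eq_sum_card_fiberwise
    (s := (Finset.univ : Finset (Fin n → Equiv.Perm (Fin k)))) (t := Finset.Icc 1 k)
    (f := fun φ => (hallStab x₀ φ).index)
    (fun φ _ => by
      have := hallStab_index x₀ φ
      simpa using this)
  rw [Finset.card_univ, hT] at hsum
  apply Nat.eq_of_mul_eq_mul_left (Nat.factorial_pos (k - 1))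
  rw [← mul_assoc, mul_comm (k - 1).factorial k, Nat.mul_factorial_pred (by omega), ← pow_succ',
    Nat.sub_add_cancel hn, hsum, Finset.mul_sum]
  refine Finset.sum_congr rfl fun i hi => ?_
  rw [Finset.mem_Icc] at hi
  rw [← hallCardIndex hn x₀ i hi.1 hi.2, Nat.card_eq_fintype_card, Fintype.card_subtype]

/-- **M. Hall's recursion formula** for the number `N_n(k)` of subgroups of index `k`
in the free group of rank `n ≥ 1`: `N_n(1) = 1` and, for every `k ≥ 1`,
`N_n(k) = k·(k!)^(n−1) − ∑_{i=1}^{k−1} ((k−i)!)^(n−1)·N_n(i)`; equivalently,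
`k·(k!)^(n−1) = ∑_{i=1}^{k} ((k−i)!)^(n−1)·N_n(i)`. -/
theorem hall_recursion_formula (n : ℕ) (hn : 1 ≤ n) :
    numSubgroupsOfIndex n 1 = 1 ∧
    ∀ k : ℕ, 1 ≤ k →
      (numSubgroupsOfIndex n k =
          k * (Nat.factorial k) ^ (n - 1) -
            ∑ i ∈ Finset.Icc 1 (k - 1),
              (Nat.factorial (k - i)) ^ (n - 1) * numSubgroupsOfIndex n i) ∧
      k * (Nat.factorial k) ^ (n - 1) =
        ∑ i ∈ Finset.Icc 1 k,
          (Nat.factorial (k - i)) ^ (n - 1) * numSubgroupsOfIndex n i := by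
  refine ⟨?_, fun k hk => ⟨?_, hall_sum n hn k hk⟩⟩
  · have := hall_sum n hn 1 le_rfl
    simpa using this.symm
  · have := hall_sum n hn k hk
    obtain ⟨m, rfl⟩ : ∃ m, k = m + 1 := ⟨k - 1, by omega⟩
    rw [this, Finset.sum_Icc_succ_top (by omega)]
    simp
end

section
/- Let A be a finite type and let N be a nontrivial normal subgroup of FreeGroup A (N ≠ ⊥, N normal). Then N is finitely generated if and only if N has finite index in FreeGroup A. -/
theorem prefix_append_iff_aux {X : Type*} {p L M : List X} :
    p <+: L ++ M ↔ p <+: L ∨ ∃ t, p = L ++ t ∧ t <+: M := by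
  constructor
  · rintro ⟨r, hr⟩
    rw [List.append_eq_append_iff] at hr
    rcases hr with ⟨a, h1, _⟩ | ⟨c, h1, h2⟩
    · exact Or.inl ⟨a, h1.symm⟩
    · exact Or.inr ⟨c, h1, r, h2.symm⟩
  · rintro (h | ⟨t, rfl, h⟩)
    · exact h.trans (List.prefix_append _ _)
    · simpa using h

open FreeGroup in
theorem prefix_red {A : Type*} {L L' : List (A × Bool)} (h : Red L L') :
    ∀ p, p <+: L' → ∃ p', p' <+: L ∧ FreeGroup.mk p' = FreeGroup.mk p := by
  induction h with
  | refl => exact fun p hp => ⟨p, hp, rfl⟩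
  | @tail K K' _ hs ih =>
    intro p hp
    obtain ⟨p₁, hp₁, e₁⟩ : ∃ p₁, p₁ <+: K ∧ FreeGroup.mk p₁ = FreeGroup.mk p := by
      cases hs with
      | @not L₁ L₂ x b =>
        rw [prefix_append_iff_aux] at hp
        rcases hp with hp | ⟨t, rfl, ht⟩
        · exact ⟨p, hp.trans (List.prefix_append _ _), rfl⟩
        · refine ⟨L₁ ++ (x, b) :: (x, !b) :: t, ?_, ?_⟩
          · simpa using ht
          · exact Quot.sound Red.Step.not
    obtain ⟨p₂, hp₂, e₂⟩ := ih p₁ hp₁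
    exact ⟨p₂, hp₂, e₂.trans e₁⟩

open FreeGroup in
theorem prefix_closure {A : Type*} [DecidableEq A] (N : Subgroup (FreeGroup A)) [N.Normal]
    (S : Set (FreeGroup A)) (hS : Subgroup.closure S = N) (n : FreeGroup A) (hn : n ∈ N)
    (p : List (A × Bool)) (hp : p <+: n.toWord) :
    ∃ p', (p' = [] ∨ ∃ s ∈ S, p' <+: s.toWord) ∧
      (QuotientGroup.mk (FreeGroup.mk p') : FreeGroup A ⧸ N) = QuotientGroup.mk (FreeGroup.mk p) := by
  rw [← hS] at hn
  induction hn using Subgroup.closure_induction generalizing p with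
  | mem x hx => exact ⟨p, Or.inr ⟨x, hx, hp⟩, rfl⟩
  | one => exact ⟨p, Or.inl (by simpa using hp), rfl⟩
  | mul x y hx hy ihx ihy =>
    rw [toWord_mul] at hp
    obtain ⟨p₁, hp₁, e₁⟩ := prefix_red reduce.red p hp
    rw [← e₁]
    rw [prefix_append_iff_aux] at hp₁
    rcases hp₁ with h | ⟨t, rfl, ht⟩
    · exact ihx _ h
    · obtain ⟨p', h1, h2⟩ := ihy _ ht
      refine ⟨p', h1, h2.trans ?_⟩
      rw [hS] at hx
      rw [← mul_mk, mk_toWord, QuotientGroup.mk_mul, (QuotientGroup.eq_one_iff x).2 hx, one_mul]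
  | inv x hx ih =>
    rw [toWord_inv] at hp
    obtain ⟨t, ht⟩ := hp
    have h1 : x.toWord = invRev t ++ invRev p := by
      rw [← invRev_append, ht, invRev_invRev]
    obtain ⟨p', h2, h3⟩ := ih (invRev t) (h1 ▸ List.prefix_append _ _)
    refine ⟨p', h2, h3.trans ?_⟩
    have h4 : x = FreeGroup.mk (invRev t) * (FreeGroup.mk p)⁻¹ := by
      rw [inv_mk, mul_mk, ← h1, mk_toWord]
    rw [hS] at hx
    have h5 := (QuotientGroup.eq_one_iff x).2 hx
    rw [h4, QuotientGroup.mk_mul, QuotientGroup.mk_inv, mul_inv_eq_one] at h5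
    exact h5

open FreeGroup in
theorem exists_reduced_ext {A : Type*} [DecidableEq A] (N : Subgroup (FreeGroup A)) [N.Normal]
    (hN : N ≠ ⊥) (g : FreeGroup A) :
    ∃ u ∈ N, u ≠ 1 ∧ g.toWord <+: (g * u).toWord := by
  obtain ⟨v, hv, hv1⟩ := N.bot_or_exists_ne_one.resolve_left hN
  set L := reduceCyclically v.toWord with hL
  have hc : IsCyclicallyReduced L := reduceCyclically.isCyclicallyReduced isReduced_toWord
  have hconj := reduceCyclically.conj_conjugator_reduceCyclically v.toWord
  rw [← hL] at hconj
  set c := reduceCyclically.conjugator v.toWord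
  have hve : v = FreeGroup.mk c * FreeGroup.mk L * (FreeGroup.mk c)⁻¹ := by
    rw [inv_mk, mul_mk, mul_mk, hconj, mk_toWord]
  have hu : FreeGroup.mk L ∈ N := by
    have := (inferInstance : N.Normal).conj_mem v hv (FreeGroup.mk c)⁻¹
    rw [hve] at this
    convert this using 1
    group
  have hu1 : FreeGroup.mk L ≠ 1 := by
    intro h
    apply hv1
    rw [hve, h, mul_one, mul_inv_cancel]
  have hLne : L ≠ [] := by
    intro h; apply hu1; rw [h]; rfl
  have key : ∀ M : List (A × Bool), IsReduced (g.toWord ++ M) →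
      g.toWord <+: (g * FreeGroup.mk M).toWord := by
    intro M hM
    have : g * FreeGroup.mk M = FreeGroup.mk (g.toWord ++ M) := by
      rw [← mul_mk, mk_toWord]
    rw [this, toWord_mk, hM.reduce_eq]
    exact List.prefix_append _ _
  by_cases h1 : IsReduced (g.toWord ++ L)
  · exact ⟨_, hu, hu1, key _ h1⟩
  · refine ⟨(FreeGroup.mk L)⁻¹, N.inv_mem hu, inv_ne_one.2 hu1, ?_⟩
    rw [inv_mk]
    apply key
    have hg : IsReduced g.toWord := isReduced_toWord
    have hcr := hc.isReduced
    have hinv : IsReduced (invRev L) := by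
      rw [isReduced_iff_reduce_eq, reduce_invRev, hcr.reduce_eq]
    obtain ⟨_, hc2⟩ := hc
    unfold FreeGroup.IsReduced at *
    rw [List.isChain_append] at h1 ⊢
    push Not at h1
    obtain ⟨x, hx, y, hy, h3, h4⟩ := h1 hg hcr
    refine ⟨hg, hinv, ?_⟩
    intro x' hx' z hz h5
    obtain rfl : x = x' := by
      rw [Option.mem_def] at *; rw [hx] at hx'; simpa using hx'
    simp only [invRev, List.head?_reverse, List.getLast?_map, Option.mem_def, Option.map_eq_some_iff] at hz
    obtain ⟨z', hz', rfl⟩ := hz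
    have := hc2 z' (by simpa using hz') y hy
    simp only at h5 ⊢
    have h6 := this (h5.symm.trans h3)
    grind

open FreeGroup in
theorem all_cosets {A : Type*} [DecidableEq A] (N : Subgroup (FreeGroup A)) [N.Normal]
    (hN : N ≠ ⊥) (S : Set (FreeGroup A)) (hS : Subgroup.closure S = N) :
    ∀ (k : ℕ) (g : FreeGroup A), g.toWord.length = k →
    ∃ p', (p' = [] ∨ ∃ s ∈ S, p' <+: s.toWord) ∧
      (QuotientGroup.mk (FreeGroup.mk p') : FreeGroup A ⧸ N) = QuotientGroup.mk g := by
  intro k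
  induction k using Nat.strong_induction_on with
  | _ k ih =>
  intro g hk
  obtain ⟨u, hu, hu1, hpre⟩ := exists_reduced_ext N hN g
  set n := g * u * g⁻¹ with hn
  have hnN : n ∈ N := (inferInstance : N.Normal).conj_mem u hu g
  have he : g * u = n * g := by simp [hn]
  rw [he, toWord_mul] at hpre
  obtain ⟨p, hp, e⟩ := prefix_red reduce.red _ hpre
  rw [mk_toWord] at e
  rw [prefix_append_iff_aux] at hp
  rcases hp with hp | ⟨t, rfl, ht⟩
  · rw [← e]
    exact prefix_closure N S hS n hnN p hp
  · rw [← mul_mk, mk_toWord] at e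
    have hlt : t.length < k := by
      rcases lt_or_eq_of_le ht.length_le with h | h
      · omega
      · have := ht.eq_of_length h
        rw [this, mk_toWord] at e
        have h2 : n = 1 := by simpa using e
        exact absurd (by simpa [hn] using h2) hu1
    have hle : (FreeGroup.mk t).toWord.length ≤ t.length := norm_mk_le
    obtain ⟨p', h1, h2⟩ := ih _ (lt_of_le_of_lt hle hlt) (FreeGroup.mk t) rfl
    refine ⟨p', h1, h2.trans ?_⟩
    rw [← e, QuotientGroup.mk_mul, (QuotientGroup.eq_one_iff n).2 hnN, one_mul]

/-- A nontrivial normal subgroup of a finitely generated free group is finitely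
generated if and only if it has finite index. -/
theorem normal_fg_iff_finite_index {A : Type*} [Finite A]
    (N : Subgroup (FreeGroup A)) (hNormal : N.Normal) (hN : N ≠ ⊥) :
    N.FG ↔ N.index ≠ 0 := by
  classical
  constructor
  · rintro ⟨S, hS⟩
    let C : Set (List (A × Bool)) := {[]} ∪ ⋃ s ∈ S, {p | p <+: s.toWord}
    have hC : C.Finite := by
      refine (Set.finite_singleton _).union (S.finite_toSet.biUnion fun s _ => ?_)
      refine (s.toWord.inits.finite_toSet).subset fun p hp => ?_
      simpa using hp
    have hfin : Finite (FreeGroup A ⧸ N) := by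
      rw [← Set.finite_univ_iff]
      refine (hC.image fun p => (QuotientGroup.mk (FreeGroup.mk p) : FreeGroup A ⧸ N)).subset ?_
      rintro q -
      obtain ⟨g, rfl⟩ := QuotientGroup.mk_surjective q
      obtain ⟨p, h1, h2⟩ := all_cosets N hN S hS _ g rfl
      refine ⟨p, ?_, h2⟩
      rcases h1 with h | ⟨s, hs, h⟩
      · exact Or.inl h
      · exact Or.inr (Set.mem_biUnion hs h)
    exact Subgroup.index_ne_zero_of_finite
  · intro h
    have : N.FiniteIndex := ⟨h⟩
    rw [← Group.fg_iff_subgroup_fg]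
    infer_instance
end

section
/- Every nontrivial normal subgroup N of the free group FreeGroup ℕ of countably infinite rank is not finitely generated (equivalently, N has infinite rank). -/
/-- The retraction killing the generators with index at least `n`. -/
noncomputable def killAbove (n : ℕ) : FreeGroup ℕ →* FreeGroup ℕ :=
  FreeGroup.lift (fun i => if i < n then FreeGroup.of i else 1)

lemma killAbove_mk (n : ℕ) (L : List (ℕ × Bool)) (h : ∀ p ∈ L, p.1 < n) :
    killAbove n (FreeGroup.mk L) = FreeGroup.mk L := by
  induction L with
  | nil => exact map_one _
  | cons p L ih =>
    have e : FreeGroup.mk (p :: L) = FreeGroup.mk [p] * FreeGroup.mk L := by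
      rw [FreeGroup.mul_mk]; rfl
    rw [e, map_mul, ih (fun q hq => h q (List.mem_cons_of_mem _ hq))]
    congr 1
    have hp := h p List.mem_cons_self
    obtain ⟨i, b⟩ := p
    have hi : i < n := hp
    cases b <;> simp [killAbove, hi, FreeGroup.of, FreeGroup.inv_mk, FreeGroup.invRev]

lemma exists_bound (x : FreeGroup ℕ) : ∃ n, ∀ p ∈ x.toWord, p.1 < n := by
  refine ⟨(x.toWord.map Prod.fst).sum + 1, fun p hp => ?_⟩
  have := List.le_sum_of_mem (List.mem_map_of_mem (f := Prod.fst) hp)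
  omega

/-- Every nontrivial normal subgroup of the free group of countably infinite rank
is not finitely generated. -/
theorem normal_subgroup_of_freeGroupNat_not_fg (N : Subgroup (FreeGroup ℕ))
    (hNormal : N.Normal) (hN : N ≠ ⊥) :
    ¬ N.FG := by
  rintro ⟨S, rfl⟩
  obtain ⟨⟨w, hw⟩, hw0⟩ := Subgroup.ne_bot_iff_exists_ne_one.1 hN
  have hw1 : w ≠ 1 := fun h => hw0 (Subtype.ext h)
  choose f hf using exists_bound
  set n := S.sup f + f w with hn
  have fix : ∀ x ∈ Subgroup.closure (S : Set (FreeGroup ℕ)), killAbove n x = x := by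
    intro x hx
    have : Subgroup.closure (S : Set (FreeGroup ℕ)) ≤
        (killAbove n).eqLocus (MonoidHom.id _) := by
      rw [Subgroup.closure_le]
      intro s hs
      have h1 := killAbove_mk n s.toWord (fun p hp => by
        have := hf s p hp
        have := Finset.le_sup (f := f) (Finset.mem_coe.1 hs)
        omega)
      rw [FreeGroup.mk_toWord] at h1
      exact h1
    exact this hx
  have hc := fix _ (hNormal.conj_mem w hw (FreeGroup.of n))
  have ht : killAbove n (FreeGroup.of n) = 1 := by simp [killAbove]
  rw [map_mul, map_mul, map_inv, ht, fix w hw, one_mul, inv_one, mul_one,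
    eq_mul_inv_iff_mul_eq] at hc
  have hlet : ∀ p ∈ w.toWord, p.1 ≠ n := fun p hp => by
    have := hf w p hp
    omega
  have hne : w.toWord ≠ [] := fun h => hw1 (FreeGroup.toWord_eq_nil_iff.1 h)
  have hred : FreeGroup.IsReduced w.toWord := FreeGroup.isReduced_toWord
  have r1 : FreeGroup.IsReduced (w.toWord ++ [(n, true)]) := by
    unfold FreeGroup.IsReduced at *
    rw [List.isChain_append]
    refine ⟨hred, by simp, ?_⟩
    intro x hx y hy e
    simp at hy
    subst hy
    exact absurd e (hlet x (List.mem_of_mem_getLast? hx))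
  have r2 : FreeGroup.IsReduced ([(n, true)] ++ w.toWord) := by
    unfold FreeGroup.IsReduced at *
    rw [List.isChain_append]
    refine ⟨by simp, hred, ?_⟩
    intro x hx y hy e
    simp at hx
    subst hx
    exact absurd e.symm (hlet y (List.mem_of_mem_head? hy))
  have e : FreeGroup.mk (w.toWord ++ [(n, true)]) = FreeGroup.mk ([(n, true)] ++ w.toWord) := by
    rw [← FreeGroup.mul_mk, ← FreeGroup.mul_mk, FreeGroup.mk_toWord]
    exact hc
  have e2 := congrArg FreeGroup.toWord e
  rw [FreeGroup.toWord_mk, FreeGroup.toWord_mk, r1.reduce_eq, r2.reduce_eq] at e2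
  obtain ⟨a, L, hL⟩ := List.exists_cons_of_ne_nil hne
  rw [hL] at e2 hlet
  simp at e2
  exact hlet a List.mem_cons_self (by rw [e2.1])
end

section
/- For every nontrivial element w ≠ 1 of a free group FreeGroup A, there exists a subgroup H of FreeGroup A of index exactly |w| + 1 such that w ∉ H, where |w| denotes the length of the reduced word representing w (the length of FreeGroup.toWord w). -/
theorem exists_perm_extending_partial {X : Type*} [Finite X] (R : X → X → Prop)
    (hf : ∀ p q q', R p q → R p q' → q = q') (hi : ∀ p p' q, R p q → R p' q → p = p') :
    ∃ σ : Equiv.Perm X, ∀ p q, R p q → σ p = q := by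
  classical
  let e : {p // ∃ q, R p q} ≃ {q // ∃ p, R p q} :=
    { toFun := fun p => ⟨p.2.choose, p.1, p.2.choose_spec⟩
      invFun := fun q => ⟨q.2.choose, q.1, q.2.choose_spec⟩
      left_inv := fun p => Subtype.ext (hi _ _ _
        (Exists.choose_spec (⟨p.1, p.2.choose_spec⟩ : ∃ p', R p' p.2.choose)) p.2.choose_spec)
      right_inv := fun q => Subtype.ext (hf _ _ _
        (Exists.choose_spec (⟨q.1, q.2.choose_spec⟩ : ∃ q', R q.2.choose q')) q.2.choose_spec) }
  refine ⟨e.extendSubtype, fun p q h => ?_⟩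
  have hp : ∃ q, R p q := ⟨q, h⟩
  rw [e.extendSubtype_apply_of_mem p hp]
  exact hf _ _ _ hp.choose_spec h

/-- For every nontrivial element `w` of a free group there is a subgroup of index
`|w| + 1` not containing `w`, where `|w|` is the length of the reduced word of `w`. -/
theorem exists_subgroup_of_index_length_add_one_avoiding {A : Type*} [DecidableEq A]
    (w : FreeGroup A) (hw : w ≠ 1) :
    ∃ H : Subgroup (FreeGroup A),
      H.index = (FreeGroup.toWord w).length + 1 ∧ w ∉ H := by
  have hred : FreeGroup.IsReduced w.toWord := FreeGroup.isReduced_toWord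
  have hne : w.toWord ≠ [] := by simpa [FreeGroup.toWord_eq_nil_iff] using hw
  have hmk : FreeGroup.mk w.toWord = w := FreeGroup.mk_toWord
  generalize w.toWord = L at *
  have hpos : 0 < L.length := List.length_pos_iff.2 hne
  have hred' : ∀ (i : ℕ) (a : A) (b c : Bool), L[i]? = some (a, b) → L[i+1]? = some (a, c) →
      b = c := by
    intro i a b c h1 h2
    obtain ⟨l1, e1⟩ := List.getElem?_eq_some_iff.1 h1
    obtain ⟨l2, e2⟩ := List.getElem?_eq_some_iff.1 h2
    have := List.isChain_iff_getElem.1 hred i l2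
    rw [e1, e2] at this
    exact this rfl
  have key : ∀ a : A, ∃ σ : Equiv.Perm (Fin (L.length + 1)), ∀ p q : Fin (L.length + 1),
      (L[q.val]? = some (a, true) ∧ p.val = q.val + 1) ∨
      (L[p.val]? = some (a, false) ∧ q.val = p.val + 1) → σ p = q := by
    intro a
    apply exists_perm_extending_partial
    · rintro p q q' (⟨h1, h2⟩ | ⟨h1, h2⟩) (⟨h3, h4⟩ | ⟨h3, h4⟩)
      · ext; omega
      · rw [h2] at h3; exact absurd (hred' _ _ _ _ h1 h3) (by simp)
      · rw [h4] at h1; exact absurd (hred' _ _ _ _ h3 h1) (by simp)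
      · ext; omega
    · rintro p p' q (⟨h1, h2⟩ | ⟨h1, h2⟩) (⟨h3, h4⟩ | ⟨h3, h4⟩)
      · ext; omega
      · rw [h4] at h1; exact absurd (hred' _ _ _ _ h3 h1) (by simp)
      · rw [h2] at h3; exact absurd (hred' _ _ _ _ h1 h3) (by simp)
      · ext; omega
  choose σ hσ using key
  let φ : FreeGroup A →* Equiv.Perm (Fin (L.length + 1)) := FreeGroup.lift σ
  have hdrop : ∀ k (hk : k ≤ L.length),
      φ (FreeGroup.mk (L.drop k)) (Fin.last _) = ⟨k, by omega⟩ := by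
    intro k hk
    induction hk using Nat.decreasingInduction with
    | self =>
      rw [List.drop_length, ← FreeGroup.one_eq_mk, map_one]
      rfl
    | @of_succ k hk ih =>
      rw [List.drop_eq_getElem_cons hk, ← List.singleton_append, ← FreeGroup.mul_mk, map_mul,
        Equiv.Perm.mul_apply, ih]
      have hg : L[k]? = some L[k] := List.getElem?_eq_getElem hk
      rcases hx : L[k] with ⟨a, b⟩
      rw [hx] at hg
      cases b
      · have h := hσ a ⟨k, by omega⟩ ⟨k+1, by omega⟩ (Or.inr ⟨hg, rfl⟩)
        simp only [φ, FreeGroup.lift_mk, List.map_cons, List.map_nil, List.prod_singleton, cond]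
        rw [← h]; simp
      · have h := hσ a ⟨k+1, by omega⟩ ⟨k, by omega⟩ (Or.inl ⟨hg, rfl⟩)
        simpa only [φ, FreeGroup.lift_mk, List.map_cons, List.map_nil, List.prod_singleton, cond]
          using h
  letI : MulAction (FreeGroup A) (Fin (L.length + 1)) := MulAction.compHom _ φ
  have hsm : ∀ (g : FreeGroup A) (x : Fin (L.length + 1)), g • x = φ g x := fun _ _ => rfl
  haveI : MulAction.IsPretransitive (FreeGroup A) (Fin (L.length + 1)) := by
    refine (MulAction.isPretransitive_iff_base (Fin.last L.length)).2 fun x => ?_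
    exact ⟨_, hdrop x.val (by omega)⟩
  refine ⟨MulAction.stabilizer (FreeGroup A) (Fin.last L.length), ?_, ?_⟩
  · rw [MulAction.index_stabilizer_of_transitive]; simp
  · rw [MulAction.mem_stabilizer_iff, hsm]
    have h := hdrop 0 (by omega)
    rw [List.drop_zero, hmk] at h
    rw [h, Fin.ext_iff]
    simp only [Fin.val_last]
    omega
end

section
/- Free groups are residually finite: for every element w ≠ 1 of FreeGroup A there exists a normal subgroup N of FreeGroup A of finite index with w ∉ N (equivalently, there is a homomorphism from FreeGroup A to a finite group whose image of w is nontrivial). -/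
/-- On a finite subset `S` of a group, left multiplication by `a`, where it stays in `S`,
extends to a permutation of `S`. -/
theorem exists_perm_extending_mul {G : Type*} [Group G] (S : Set G) (hS : S.Finite) (a : G) :
    ∃ σ : Equiv.Perm S, ∀ x y : S, (y : G) = a * x → σ x = y := by
  classical
  have := hS.fintype
  let e : {x : S // a * (x : G) ∈ S} ≃ {y : S // a⁻¹ * (y : G) ∈ S} :=
    { toFun := fun x => ⟨⟨a * x.1, x.2⟩, by simp⟩
      invFun := fun y => ⟨⟨a⁻¹ * y.1, y.2⟩, by simp⟩
      left_inv := fun x => by ext; simp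
      right_inv := fun y => by ext; simp }
  refine ⟨e.extendSubtype, fun x y h => ?_⟩
  have hx : a * (x : G) ∈ S := h ▸ y.2
  rw [e.extendSubtype_apply_of_mem x hx]
  ext
  exact h.symm

/-- Free groups are residually finite: every nontrivial element is avoided by some
normal subgroup of finite index. -/
theorem freeGroup_residually_finite {A : Type*} (w : FreeGroup A) (hw : w ≠ 1) :
    ∃ N : Subgroup (FreeGroup A), N.Normal ∧ N.index ≠ 0 ∧ w ∉ N := by
  classical
  obtain ⟨W, rfl⟩ := Quot.exists_rep w
  change FreeGroup.mk W ≠ 1 at hw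
  let S : Set (FreeGroup A) := FreeGroup.mk '' {L | L ∈ W.tails}
  have hS : S.Finite := (List.finite_toSet W.tails).image _
  have : Finite S := hS
  have hmem : ∀ L, L <:+ W → FreeGroup.mk L ∈ S := fun L hL =>
    ⟨L, (List.mem_tails L W).2 hL, rfl⟩
  choose σ hσ using fun a : A => exists_perm_extending_mul S hS (FreeGroup.of a)
  let φ : FreeGroup A →* Equiv.Perm S := FreeGroup.lift σ
  have key : ∀ L (hL : L <:+ W),
      φ (FreeGroup.mk L) ⟨FreeGroup.mk [], hmem [] List.nil_suffix⟩
        = ⟨FreeGroup.mk L, hmem L hL⟩ := by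
    intro L
    induction L with
    | nil =>
      intro hL
      have h0 : φ (FreeGroup.mk []) = 1 := map_one φ
      rw [h0]; rfl
    | cons p L ih =>
      intro hL
      have hL' : L <:+ W := (List.suffix_cons p L).trans hL
      obtain ⟨a, b⟩ := p
      have hσa : φ (FreeGroup.of a) = σ a := FreeGroup.lift_apply_of
      have hc : FreeGroup.mk ((a, b) :: L) = FreeGroup.mk [(a, b)] * FreeGroup.mk L := by
        simp [FreeGroup.mul_mk]
      cases b with
      | true =>
        have h1 : φ (FreeGroup.mk ((a, true) :: L)) = σ a * φ (FreeGroup.mk L) := by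
          rw [hc, map_mul, ← hσa]; rfl
        rw [h1, Equiv.Perm.mul_apply, ih hL']
        exact hσ a _ _ hc
      | false =>
        have hi : FreeGroup.mk [(a, false)] = (FreeGroup.of a)⁻¹ := rfl
        have h1 : φ (FreeGroup.mk ((a, false) :: L)) = (σ a)⁻¹ * φ (FreeGroup.mk L) := by
          rw [hc, map_mul, ← hσa, hi, map_inv]
        rw [h1, Equiv.Perm.mul_apply, ih hL', Equiv.Perm.inv_eq_iff_eq]
        refine (hσ a _ _ ?_).symm
        change FreeGroup.mk L = FreeGroup.of a * FreeGroup.mk ((a, false) :: L)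
        rw [hc, hi, mul_inv_cancel_left]
  refine ⟨φ.ker, inferInstance, ?_, ?_⟩
  · rw [Subgroup.index_ker]
    exact Nat.card_pos.ne'
  · intro h
    have h1 : φ (FreeGroup.mk W) = 1 := h
    have h2 := key W List.suffix_rfl
    rw [h1] at h2
    exact hw (congrArg Subtype.val h2).symm
end

section
/- Let H be a finitely generated subgroup of a free group FreeGroup A. Then there exists a subgroup K of FreeGroup A of finite index such that H is a free factor of K (Marshall Hall's theorem). -/
/-- `H` is a free factor of `K`: `H ≤ K` and `K` is the internal free product of `H`
and some subgroup `L ≤ K`, i.e. the canonical homomorphism `H ∗ L →* K` induced by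
the inclusions is bijective. -/
def IsFreeFactor {G : Type*} [Group G] (H K : Subgroup G) : Prop :=
  ∃ (hHK : H ≤ K) (L : Subgroup G) (hLK : L ≤ K),
    Function.Bijective
      ⇑(Monoid.Coprod.lift (Subgroup.inclusion hHK) (Subgroup.inclusion hLK))

namespace MHall

open Monoid

/-- `EP σ E b g s`: `g` labels a path from `b` to `s` using only edges in `E`. -/
inductive EP {A S : Type*} (σ : A → Equiv.Perm S) (E : S → A → Prop) (b : S) :
    FreeGroup A → S → Prop
  | one : EP σ E b 1 b
  | pos {g s} (a : A) : EP σ E b g s → E s a → EP σ E b (FreeGroup.of a * g) (σ a s)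
  | neg {g s} (a : A) : EP σ E b g s → E ((σ a).symm s) a →
      EP σ E b ((FreeGroup.of a)⁻¹ * g) ((σ a).symm s)

/-- The permutation of `S × X` twisted by `c`. -/
def tw {S X : Type*} [Group X] (p : Equiv.Perm S) (c : S → X) : Equiv.Perm (S × X) where
  toFun q := (p q.1, c q.1 * q.2)
  invFun q := (p.symm q.1, (c (p.symm q.1))⁻¹ * q.2)
  left_inv q := by simp
  right_inv q := by simp

theorem core {A S : Type*} (σ : A → Equiv.Perm S) (E : S → A → Prop) (b : S)
    (H : Subgroup (FreeGroup A)) (t : S → FreeGroup A) (hb : t b = 1)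
    (hE : ∀ s a, E s a → (t (σ a s))⁻¹ * FreeGroup.of a * t s ∈ H)
    (ht : ∀ s, EP σ E b (t s) s)
    (T : Set (FreeGroup A)) (hT : Subgroup.closure T = H) (hTE : ∀ h ∈ T, EP σ E b h b) :
    IsFreeFactor H ((MulAction.stabilizer (Equiv.Perm S) b).comap (FreeGroup.lift σ)) := by
  classical
  set L : Subgroup (FreeGroup A) := Subgroup.closure
    {g | ∃ s a, ¬ E s a ∧ g = (t (σ a s))⁻¹ * FreeGroup.of a * t s} with hL
  have hEL : ∀ s a, ¬ E s a → (t (σ a s))⁻¹ * FreeGroup.of a * t s ∈ L := fun s a h =>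
    Subgroup.subset_closure ⟨s, a, h, rfl⟩
  let c : A → S → Coprod H L := fun a s =>
    if h : E s a then Coprod.inl ⟨_, hE s a h⟩ else Coprod.inr ⟨_, hEL s a h⟩
  let ρ : FreeGroup A →* Equiv.Perm (S × Coprod H L) := FreeGroup.lift fun a => tw (σ a) (c a)
  have ρof : ∀ a s x, ρ (FreeGroup.of a) (s, x) = (σ a s, c a s * x) := by
    intro a s x; simp [ρ, tw]
  have ρinv : ∀ a s x, ρ (FreeGroup.of a)⁻¹ (s, x)
      = ((σ a).symm s, (c a ((σ a).symm s))⁻¹ * x) := by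
    intro a s x
    rw [map_inv, Equiv.Perm.inv_eq_iff_eq, ρof]; simp
  -- structure of `ρ`
  have hP : ∀ g s x, ρ g (s, x) = (FreeGroup.lift σ g s, (ρ g (s, 1)).2 * x) := by
    intro g
    induction g using FreeGroup.induction_on with
    | C1 => simp
    | of a => intro s x; rw [ρof, ρof]; simp
    | inv_of a _ =>
      intro s x
      rw [ρinv, ρinv]; simp [Equiv.Perm.inv_def]
    | mul g h ihg ihh =>
      intro s x
      rw [map_mul, map_mul, Equiv.Perm.mul_apply, Equiv.Perm.mul_apply, Equiv.Perm.mul_apply,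
        ihh s x, ihg, ihh s 1, ihg _ (_ * 1)]
      simp [mul_assoc]
  -- equivariance
  let π : Coprod H L →* FreeGroup A := Coprod.lift H.subtype L.subtype
  have πc : ∀ a s, π (c a s) = (t (σ a s))⁻¹ * FreeGroup.of a * t s := by
    intro a s
    by_cases h : E s a <;> simp [π, c, h]
  have hΘ : ∀ g s x, t (ρ g (s, x)).1 * π (ρ g (s, x)).2 = g * (t s * π x) := by
    intro g
    induction g using FreeGroup.induction_on with
    | C1 => simp
    | of a => intro s x; rw [ρof]; simp [πc, mul_assoc]
    | inv_of a _ =>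
      intro s x
      rw [ρinv]; simp [πc, mul_assoc]
    | mul g h ihg ihh =>
      intro s x
      rw [map_mul, Equiv.Perm.mul_apply, mul_assoc, ← ihh, ← ihg]
  -- paths
  have hpath : ∀ g s, EP σ E b g s →
      ∃ h : (t s)⁻¹ * g ∈ H, ρ g (b, 1) = (s, Coprod.inl ⟨_, h⟩) := by
    intro g s h
    induction h with
    | one =>
      refine ⟨by simp [hb], ?_⟩
      have : (⟨(t b)⁻¹ * 1, by simp [hb]⟩ : H) = 1 := Subtype.ext (by simp [hb])
      rw [this]; simp
    | @pos g s a _ he ih =>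
      obtain ⟨h1, h2⟩ := ih
      have key : (t (σ a s))⁻¹ * (FreeGroup.of a * g)
        = ((t (σ a s))⁻¹ * FreeGroup.of a * t s) * ((t s)⁻¹ * g) := by group
      refine ⟨by rw [key]; exact H.mul_mem (hE _ _ he) h1, ?_⟩
      rw [map_mul, Equiv.Perm.mul_apply, h2, ρof]
      simp only [c, he, dif_pos, ← map_mul]
      congr 2
      exact Subtype.ext key.symm
    | @neg g s a _ he ih =>
      obtain ⟨h1, h2⟩ := ih
      have h3 := hE _ _ he
      have key : (t ((σ a).symm s))⁻¹ * ((FreeGroup.of a)⁻¹ * g)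
        = ((t (σ a ((σ a).symm s)))⁻¹ * FreeGroup.of a * t ((σ a).symm s))⁻¹
          * ((t s)⁻¹ * g) := by rw [Equiv.apply_symm_apply]; group
      refine ⟨by rw [key]; exact H.mul_mem (H.inv_mem h3) h1, ?_⟩
      rw [map_mul, Equiv.Perm.mul_apply, h2, ρinv]
      simp only [c, he, dif_pos, ← map_mul, ← map_inv]
      congr 2
      exact Subtype.ext key.symm
  have hσ : ∀ g s, EP σ E b g s → FreeGroup.lift σ g b = s := by
    intro g s h
    obtain ⟨_, h2⟩ := hpath g s h
    rw [hP] at h2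
    exact (Prod.ext_iff.1 h2).1
  set K := (MulAction.stabilizer (Equiv.Perm S) b).comap (FreeGroup.lift σ) with hK
  have memK : ∀ g, g ∈ K ↔ FreeGroup.lift σ g b = b := fun g => Iff.rfl
  have hHK : H ≤ K := by
    rw [← hT, Subgroup.closure_le]
    exact fun h hh => hσ _ _ (hTE h hh)
  have hLK : L ≤ K := by
    rw [hL, Subgroup.closure_le]
    rintro _ ⟨s, a, _, rfl⟩
    show FreeGroup.lift σ _ b = b
    rw [map_mul, map_mul, Equiv.Perm.mul_apply, Equiv.Perm.mul_apply, hσ _ _ (ht s), map_inv,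
      Equiv.Perm.inv_eq_iff_eq, hσ _ _ (ht _)]
    simp
  let φ : K →* Coprod H L := MonoidHom.mk' (fun k => (ρ k (b, 1)).2) (by
    intro k l
    have hl : FreeGroup.lift σ (l : FreeGroup A) b = b := l.2
    rw [Subgroup.coe_mul, map_mul, Equiv.Perm.mul_apply, hP l, hl, hP k])
  have hφ : ∀ k : K, φ k = (ρ k (b, 1)).2 := fun k => rfl
  refine ⟨hHK, L, hLK, ?_⟩
  set lam := Coprod.lift (Subgroup.inclusion hHK) (Subgroup.inclusion hLK) with hlam
  have hπ : K.subtype.comp lam = π := by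
    apply Coprod.hom_ext <;> ext x <;> simp [lam, π]
  have h1 : φ.comp lam = MonoidHom.id _ := by
    apply Coprod.hom_ext
    · have : ∀ h (hh : h ∈ Subgroup.closure T), φ ⟨h, hHK (hT ▸ hh)⟩
          = Coprod.inl (⟨h, hT ▸ hh⟩ : H) := by
        intro h hh
        induction hh using Subgroup.closure_induction with
        | mem x hx =>
          obtain ⟨h1, h2⟩ := hpath x b (hTE x hx)
          rw [hφ]; simp only [h2]
          congr 1
          exact Subtype.ext (by simp [hb])
        | one =>
          exact (map_one φ).trans (map_one _).symm
        | mul x y hx hy ihx ihy =>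
          have e := map_mul φ ⟨x, hHK (hT ▸ hx)⟩ ⟨y, hHK (hT ▸ hy)⟩
          rw [ihx, ihy, ← map_mul] at e
          exact e
        | inv x hx ihx =>
          have e := map_inv φ ⟨x, hHK (hT ▸ hx)⟩
          rw [ihx, ← map_inv] at e
          exact e
      ext x
      obtain ⟨x, hx⟩ := x
      exact this x (hT ▸ hx)
    · have : ∀ h (hh : h ∈ L), φ ⟨h, hLK hh⟩ = Coprod.inr (⟨h, hh⟩ : L) := by
        intro h hh
        induction hh using Subgroup.closure_induction with
        | mem x hx =>
          obtain ⟨s, a, he, rfl⟩ := hx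
          have ρt : ∀ s, ρ (t s) (b, 1) = (s, 1) := by
            intro s
            obtain ⟨h1, h2⟩ := hpath (t s) s (ht s)
            have : (⟨(t s)⁻¹ * t s, h1⟩ : H) = 1 := Subtype.ext (by simp)
            rw [h2, this, map_one]
          have e : ρ ((t (σ a s))⁻¹ * FreeGroup.of a * t s) (b, 1) = (b, c a s) := by
            rw [map_mul, map_mul, Equiv.Perm.mul_apply, Equiv.Perm.mul_apply, ρt, ρof, map_inv,
              Equiv.Perm.inv_eq_iff_eq, hP, hσ _ _ (ht _), ρt]
            simp
          rw [hφ]; simp only [e]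
          simp [c, he]
        | one =>
          exact (map_one φ).trans (map_one _).symm
        | mul x y hx hy ihx ihy =>
          have e := map_mul φ ⟨x, hLK hx⟩ ⟨y, hLK hy⟩
          rw [ihx, ihy, ← map_mul] at e
          exact e
        | inv x hx ihx =>
          have e := map_inv φ ⟨x, hLK hx⟩
          rw [ihx, ← map_inv] at e
          exact e
      ext x
      obtain ⟨x, hx⟩ := x
      exact this x hx
  refine Function.bijective_iff_has_inverse.2 ⟨φ, fun x => DFunLike.congr_fun h1 x, fun k => ?_⟩
  apply Subtype.ext
  have e1 : ((lam (φ k) : K) : FreeGroup A) = π (φ k) := DFunLike.congr_fun hπ (φ k)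
  have e2 := hΘ k b 1
  have e3 : (ρ (k : FreeGroup A) (b, 1)).1 = b := by
    rw [hP]; exact k.2
  rw [e3, hb] at e2
  rw [e1, hφ]
  simpa using e2

theorem main {A : Type*} (H : Subgroup (FreeGroup A)) (hH : H.FG) :
    ∃ K : Subgroup (FreeGroup A), K.index ≠ 0 ∧ IsFreeFactor H K := by
  classical
  obtain ⟨T, hT⟩ := hH
  -- words
  let W : Set (List (A × Bool)) := {w | w = [] ∨ ∃ h ∈ T, w <:+ h.toWord}
  have hWfin : W.Finite := by
    have : W ⊆ {[]} ∪ ⋃ h ∈ T, {w | w ∈ h.toWord.tails} := by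
      rintro w (rfl | ⟨h, hh, hw⟩)
      · simp
      · right
        simp only [Set.mem_iUnion]
        exact ⟨h, hh, by simpa using hw⟩
    refine Set.Finite.subset ?_ this
    refine (Set.finite_singleton _).union (T.finite_toSet.biUnion fun h _ => ?_)
    exact List.finite_toSet _
  have hWsuf : ∀ u w, w ∈ W → u <:+ w → u ∈ W := by
    rintro u w (rfl | ⟨h, hh, hw⟩) hu
    · left; simpa using hu
    · right; exact ⟨h, hh, hu.trans hw⟩
  let p : List (A × Bool) → FreeGroup A ⧸ H := fun w => (FreeGroup.mk w : FreeGroup A)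
  let S : Set (FreeGroup A ⧸ H) := p '' W
  have : Finite S := (hWfin.image p).to_subtype
  have : Fintype S := Fintype.ofFinite S
  let b : S := ⟨p [], [], Or.inl rfl, rfl⟩
  let E : S → A → Prop := fun s a => FreeGroup.of a • (s : FreeGroup A ⧸ H) ∈ S
  let E' : S → A → Prop := fun s a => (FreeGroup.of a)⁻¹ • (s : FreeGroup A ⧸ H) ∈ S
  let e : ∀ a, {s // E s a} ≃ {s // E' s a} := fun a =>
    { toFun := fun s => ⟨⟨_, s.2⟩, by simp [E']⟩
      invFun := fun s => ⟨⟨_, s.2⟩, by simp [E]⟩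
      left_inv := fun s => by simp
      right_inv := fun s => by simp }
  let σ : A → Equiv.Perm S := fun a => (e a).extendSubtype
  have hσ : ∀ s a (h : E s a), σ a s = ⟨_, h⟩ := by
    intro s a h
    exact Equiv.extendSubtype_apply_of_mem (e a) s h
  have hpath : ∀ w (hw : w ∈ W), EP σ E b (FreeGroup.mk w) ⟨p w, w, hw, rfl⟩ := by
    intro w
    induction w with
    | nil => intro hw; exact EP.one
    | cons x w ih =>
      intro hw
      obtain ⟨a, ε⟩ := x
      have hw' : w ∈ W := hWsuf _ _ hw (List.suffix_cons _ _)
      have ih := ih hw'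
      cases ε with
      | true =>
        have e1 : (FreeGroup.mk ((a, true) :: w) : FreeGroup A)
          = FreeGroup.of a * FreeGroup.mk w := rfl
        have e2 : p ((a, true) :: w) = FreeGroup.of a • p w := rfl
        have hE : E ⟨p w, w, hw', rfl⟩ a := ⟨_, hw, e2⟩
        have := EP.pos a ih hE
        rw [hσ _ _ hE] at this
        exact this
      | false =>
        have e1 : (FreeGroup.mk ((a, false) :: w) : FreeGroup A)
          = (FreeGroup.of a)⁻¹ * FreeGroup.mk w := rfl
        have e2 : p ((a, false) :: w) = (FreeGroup.of a)⁻¹ • p w := rfl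
        have hE : E ⟨p ((a, false) :: w), _, hw, rfl⟩ a := by
          show FreeGroup.of a • p ((a, false) :: w) ∈ S
          rw [e2, smul_inv_smul]
          exact ⟨w, hw', rfl⟩
        have e3 : (σ a).symm ⟨p w, w, hw', rfl⟩ = ⟨p ((a, false) :: w), _, hw, rfl⟩ := by
          rw [Equiv.symm_apply_eq, hσ _ _ hE]
          apply Subtype.ext
          show p w = FreeGroup.of a • p ((a, false) :: w)
          rw [e2, smul_inv_smul]
        have := EP.neg a ih (by rw [e3]; exact hE)
        rw [e3] at this
        exact this
  have hex : ∀ s : S, ∃ w ∈ W, p w = s ∧ (s = b → w = []) := by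
    intro s
    by_cases hs : s = b
    · exact ⟨[], Or.inl rfl, by rw [hs], fun _ => rfl⟩
    · obtain ⟨w, hw, h⟩ := s.2
      exact ⟨w, hw, h, fun h => absurd h hs⟩
  choose w hwW hpw hwb using hex
  refine ⟨_, ?_, core σ E b H (fun s => FreeGroup.mk (w s)) ?_ ?_ ?_ T hT ?_⟩
  · have : Finite (Equiv.Perm S) := inferInstance
    rw [Subgroup.index_comap]
    exact Subgroup.FiniteIndex.index_ne_zero
  · show FreeGroup.mk (w b) = 1
    rw [hwb b rfl]; rfl
  · intro s a h
    have h1 : p (w (σ a s)) = FreeGroup.of a • p (w s) := by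
      rw [hpw, hpw, hσ s a h]
    rw [mul_assoc]
    exact QuotientGroup.eq.1 h1
  · intro s
    have := hpath (w s) (hwW s)
    convert this using 1
    exact Subtype.ext (hpw s).symm
  · intro h hh
    have := hpath h.toWord (Or.inr ⟨h, hh, List.suffix_rfl⟩)
    rw [FreeGroup.mk_toWord] at this
    convert this using 1
    apply Subtype.ext
    show p [] = p h.toWord
    refine QuotientGroup.eq.2 ?_
    rw [FreeGroup.mk_toWord]
    have : h ∈ H := hT ▸ Subgroup.subset_closure hh
    rw [← FreeGroup.one_eq_mk]
    simpa using this

end MHall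

/-- **Marshall Hall's theorem**: every finitely generated subgroup of a free group
is a free factor of some subgroup of finite index. -/
theorem marshall_hall {A : Type*} (H : Subgroup (FreeGroup A)) (hH : H.FG) :
    ∃ K : Subgroup (FreeGroup A), K.index ≠ 0 ∧ IsFreeFactor H K := by
  exact MHall.main H hH
end

section
/- Let A be a finite type, let H be a finitely generated subgroup of FreeGroup A, and let S be a finite subset of FreeGroup A disjoint from H. Then there exists a finite-index subgroup K of FreeGroup A such that H is a free factor of K and K ∩ S = ∅ (finitely generated free groups are fully LERF); in particular, every finitely generated subgroup of FreeGroup A is closed in the profinite topology. -/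
namespace FullyLERF

open Monoid

/-- Extend a subgroup inclusion into a coproduct by junk values outside the subgroup. -/
noncomputable def ext {G X : Type*} [Group G] [Group X] (H : Subgroup G) (f : H →* X) (g : G) : X :=
  open Classical in if h : g ∈ H then f ⟨g, h⟩ else 1

theorem ext_of_mem {G X : Type*} [Group G] [Group X] {H : Subgroup G} (f : H →* X) {g : G}
    (h : g ∈ H) : ext H f g = f ⟨g, h⟩ := by
  simp [ext, h]

theorem ext_mul {G X : Type*} [Group G] [Group X] {H : Subgroup G} (f : H →* X) {g k : G}
    (h : g ∈ H) (h' : k ∈ H) : ext H f (g * k) = ext H f g * ext H f k := by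
  rw [ext_of_mem f h, ext_of_mem f h', ext_of_mem f (mul_mem h h'), ← map_mul]; rfl

theorem ext_inv {G X : Type*} [Group G] [Group X] {H : Subgroup G} (f : H →* X) {g : G}
    (h : g ∈ H) : ext H f g⁻¹ = (ext H f g)⁻¹ := by
  rw [ext_of_mem f h, ext_of_mem f (inv_mem h), ← map_inv]; rfl

/-- The skew product permutation. -/
def skew {W X : Type*} [Group X] (s : Equiv.Perm W) (c : W → X) : Equiv.Perm (W × X) where
  toFun p := (s p.1, c p.1 * p.2)
  invFun p := (s.symm p.1, (c (s.symm p.1))⁻¹ * p.2)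
  left_inv p := by simp
  right_inv p := by simp

/-- Partial permutations of a finite set extend. -/
theorem exists_perm {α : Type*} (W : Set α) [Finite W] (e : Equiv.Perm α) :
    ∃ s : Equiv.Perm W, ∀ w : W, e w ∈ W → (s w : α) = e w := by
  classical
  have := Fintype.ofFinite W
  let E : {w : W // e w ∈ W} ≃ {w : W // e.symm w ∈ W} :=
    { toFun := fun w => ⟨⟨e w.1, w.2⟩, by simp⟩
      invFun := fun w => ⟨⟨e.symm w.1, w.2⟩, by simp⟩
      left_inv := fun w => by simp
      right_inv := fun w => by simp }
  refine ⟨E.extendSubtype, fun w hw => ?_⟩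
  rw [Equiv.extendSubtype_apply_of_mem E w hw]; rfl

theorem main {A : Type*} (H : Subgroup (FreeGroup A)) (W : Set (FreeGroup A ⧸ H)) [Finite W]
    (good : FreeGroup A → Prop)
    (h1 : good 1)
    (h1W : ((1 : FreeGroup A) : FreeGroup A ⧸ H) ∈ W)
    (hind : ∀ (g : FreeGroup A), good g → ∀ P : FreeGroup A → Prop, P 1 →
      (∀ (g : FreeGroup A) (a : A), (g : FreeGroup A ⧸ H) ∈ W → ((FreeGroup.of a * g : FreeGroup A) : FreeGroup A ⧸ H) ∈ W →
        P g → P (FreeGroup.of a * g)) →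
      (∀ (g : FreeGroup A) (a : A), (g : FreeGroup A ⧸ H) ∈ W → (((FreeGroup.of a)⁻¹ * g : FreeGroup A) : FreeGroup A ⧸ H) ∈ W →
        P g → P ((FreeGroup.of a)⁻¹ * g)) → P g)
    (hgood : ∀ w ∈ W, ∃ g, good g ∧ (g : FreeGroup A ⧸ H) = w)
    (T : Set (FreeGroup A)) (hT : Subgroup.closure T = H) (hTg : ∀ g ∈ T, good g) :
    ∃ K : Subgroup (FreeGroup A),
      K.index ≠ 0 ∧ IsFreeFactor H K ∧ ∀ s, good s → s ∉ H → s ∉ K := by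
  classical
  let w0 : W := ⟨_, h1W⟩
  have ht : ∀ w : W, ∃ g, good g ∧ (g : FreeGroup A ⧸ H) = w ∧ (w = w0 → g = 1) := by
    intro w
    by_cases hw : w = w0
    · exact ⟨1, h1, by rw [hw], fun _ => rfl⟩
    · obtain ⟨g, hg, hg'⟩ := hgood w w.2
      exact ⟨g, hg, hg', fun h => absurd h hw⟩
  choose t htg htw ht1 using ht
  have ht0 : t w0 = 1 := ht1 w0 rfl
  have hσ : ∀ a : A, ∃ s : Equiv.Perm W, ∀ w : W, FreeGroup.of a • (w : FreeGroup A ⧸ H) ∈ W →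
      (s w : FreeGroup A ⧸ H) = FreeGroup.of a • (w : FreeGroup A ⧸ H) := fun a =>
    exists_perm W (MulAction.toPerm (FreeGroup.of a))
  choose s hs using hσ
  let σ : FreeGroup A →* Equiv.Perm W := FreeGroup.lift s
  have hσof : ∀ a, σ (FreeGroup.of a) = s a := fun a => FreeGroup.lift_apply_of
  let K : Subgroup (FreeGroup A) := (MulAction.stabilizer (Equiv.Perm W) w0).comap σ
  have hK : ∀ g, g ∈ K ↔ σ g w0 = w0 := fun g => Iff.rfl
  let el : A → W → FreeGroup A := fun a w => (t (s a w))⁻¹ * FreeGroup.of a * t w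
  let L : Subgroup (FreeGroup A) := Subgroup.closure
    {g | ∃ a w, ((s a w : W) : FreeGroup A ⧸ H) ≠ FreeGroup.of a • (w : FreeGroup A ⧸ H) ∧ g = el a w}
  let iH : FreeGroup A → Coprod H L := ext H Coprod.inl
  let iL : FreeGroup A → Coprod H L := ext L Coprod.inr
  let c : A → W → Coprod H L := fun a w =>
    if ((s a w : W) : FreeGroup A ⧸ H) = FreeGroup.of a • (w : FreeGroup A ⧸ H)
    then iH (el a w) else iL (el a w)
  let ρ : FreeGroup A →* Equiv.Perm (W × Coprod H L) := FreeGroup.lift fun a => skew (s a) (c a)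
  have hρof : ∀ a w x, ρ (FreeGroup.of a) (w, x) = (s a w, c a w * x) := by
    intro a w x
    have : ρ (FreeGroup.of a) = skew (s a) (c a) := FreeGroup.lift_apply_of
    rw [this]; rfl
  have hρinv : ∀ a w x, ρ (FreeGroup.of a)⁻¹ (s a w, x) = (w, (c a w)⁻¹ * x) := by
    intro a w x
    rw [map_inv, Equiv.Perm.inv_eq_iff_eq, hρof]; simp
  have hmemH : ∀ a w, ((s a w : W) : FreeGroup A ⧸ H) = FreeGroup.of a • (w : FreeGroup A ⧸ H) →
      el a w ∈ H := by
    intro a w h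
    rw [← htw, ← htw w] at h
    have := QuotientGroup.eq.1 h
    simpa [el, mul_assoc] using this
  have hmemL : ∀ a w, ((s a w : W) : FreeGroup A ⧸ H) ≠ FreeGroup.of a • (w : FreeGroup A ⧸ H) →
      el a w ∈ L := fun a w h => Subgroup.subset_closure ⟨a, w, h, rfl⟩
  -- structure of ρ
  have hρ : ∀ g w x, ρ g (w, x) = (σ g w, (ρ g (w, 1)).2 * x) := by
    intro g
    induction g using FreeGroup.induction_on with
    | C1 => simp
    | of a => intro w x; rw [hρof, hρof, hσof]; simp
    | inv_of a _ =>
      intro w x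
      obtain ⟨w, rfl⟩ := (s a).surjective w
      rw [hρinv, hρinv, map_inv, hσof]; simp
    | mul g k hg hk =>
      intro w x
      simp only [map_mul, Equiv.Perm.mul_apply]
      rw [hk w x, hg, hk w 1, hg _ (_ * 1)]
      simp [mul_assoc]
  -- the retraction to the free group
  let π : Coprod H L →* FreeGroup A := Coprod.lift H.subtype L.subtype
  have hπH : ∀ g ∈ H, π (iH g) = g := by
    intro g hg; simp [π, iH, ext_of_mem _ hg]
  have hπL : ∀ g ∈ L, π (iL g) = g := by
    intro g hg; simp [π, iL, ext_of_mem _ hg]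
  have hπc : ∀ a w, π (c a w) = el a w := by
    intro a w
    by_cases h : ((s a w : W) : FreeGroup A ⧸ H) = FreeGroup.of a • (w : FreeGroup A ⧸ H)
    · simp only [c, if_pos h]; exact hπH _ (hmemH a w h)
    · simp only [c, if_neg h]; exact hπL _ (hmemL a w h)
  have hπρ : ∀ g w x, π (ρ g (w, x)).2 = (t (σ g w))⁻¹ * g * t w * π x := by
    intro g
    induction g using FreeGroup.induction_on with
    | C1 => simp
    | of a => intro w x; rw [hρof, hσof]; simp [hπc, el]
    | inv_of a _ =>
      intro w x
      obtain ⟨w, rfl⟩ := (s a).surjective w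
      rw [hρinv, map_inv σ, hσof]; simp [hπc, el, mul_assoc]
    | mul g k hg hk =>
      intro w x
      simp only [map_mul, Equiv.Perm.mul_apply]
      rw [hρ k w x, hg]
      have := hk w x
      rw [hρ k w x] at this
      rw [this]; group
  -- behaviour on good elements
  have key : ∀ g, good g → ∃ w : W, (w : FreeGroup A ⧸ H) = g ∧
      ρ g (w0, 1) = (w, iH ((t w)⁻¹ * g)) := by
    intro g hg
    refine hind g hg (fun g => ∃ w : W, (w : FreeGroup A ⧸ H) = g ∧
      ρ g (w0, 1) = (w, iH ((t w)⁻¹ * g))) ?_ ?_ ?_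
    · refine ⟨w0, rfl, ?_⟩
      rw [ht0]; simp [iH, ext_of_mem _ (one_mem H)]
      exact (map_one Coprod.inl).symm
    · rintro g a hg1 hg2 ⟨w, hw, hw'⟩
      have hedge := hs a w (by rw [hw]; exact hg2)
      refine ⟨s a w, by rw [hedge, hw]; rfl, ?_⟩
      rw [map_mul, Equiv.Perm.mul_apply, hw', hρof]
      have hm := hmemH a w hedge
      have hm2 : (t w)⁻¹ * g ∈ H := by
        rw [← htw w] at hw; exact QuotientGroup.eq.1 hw
      simp only [c, if_pos hedge]
      rw [← ext_mul _ hm hm2]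
      congr 2; simp [el, mul_assoc]
    · rintro g a hg1 hg2 ⟨w, hw, hw'⟩
      let w' : W := ⟨_, hg2⟩
      have hw1 : FreeGroup.of a • (w' : FreeGroup A ⧸ H) = w := by
        rw [hw]
        change ((FreeGroup.of a * ((FreeGroup.of a)⁻¹ * g) : FreeGroup A) : FreeGroup A ⧸ H) = _
        simp
      have hedge := hs a w' (by rw [hw1]; exact w.2)
      have hsw : s a w' = w := Subtype.ext (hedge.trans hw1)
      refine ⟨w', rfl, ?_⟩
      rw [map_mul, Equiv.Perm.mul_apply, hw', ← hsw, hρinv]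
      have hm := hmemH a w' hedge
      have hm2 : (t w)⁻¹ * g ∈ H := by
        rw [← htw w] at hw; exact QuotientGroup.eq.1 hw
      simp only [c, if_pos hedge]
      simp only [iH]
      rw [← ext_inv _ hm, hsw, ← ext_mul _ (inv_mem hm) hm2]
      congr 2; simp [el, hsw, mul_assoc]
  have hσgood : ∀ g, good g → ((σ g w0 : W) : FreeGroup A ⧸ H) = g := by
    intro g hg
    obtain ⟨w, hw, hw'⟩ := key g hg
    rw [hρ] at hw'
    rw [← hw]; exact congrArg Subtype.val (Prod.ext_iff.1 hw').1
  have hHK : H ≤ K := by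
    rw [← hT, Subgroup.closure_le]
    intro g hg
    refine (hK g).2 (Subtype.ext ?_)
    rw [hσgood g (hTg g hg)]
    have : g ∈ H := hT ▸ Subgroup.subset_closure hg
    exact QuotientGroup.eq.2 (by simpa using this)
  have hσt : ∀ w, σ (t w) w0 = w := fun w => Subtype.ext (by rw [hσgood _ (htg w), htw])
  have hρt : ∀ w, ρ (t w) (w0, 1) = (w, 1) := by
    intro w
    obtain ⟨w', hw, hw'⟩ := key (t w) (htg w)
    have : w' = w := Subtype.ext (by rw [hw, htw])
    subst this
    rw [hw']; simp [iH, ext_of_mem _ (one_mem H)]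
    exact map_one Coprod.inl
  have hLK : L ≤ K := by
    rw [Subgroup.closure_le]
    rintro _ ⟨a, w, -, rfl⟩
    refine (hK _).2 ?_
    simp only [el, map_mul, Equiv.Perm.mul_apply, hσt, map_inv, hσof]
    rw [Equiv.Perm.inv_eq_iff_eq, hσt]
  let φ : K →* Coprod H L :=
    { toFun := fun k => (ρ k (w0, 1)).2
      map_one' := by simp
      map_mul' := fun k k' => by
        have h1 := hρ (k : FreeGroup A) w0 (ρ k' (w0, 1)).2
        have h2 := hρ (k' : FreeGroup A) w0 1
        rw [(hK _).1 k'.2, mul_one] at h2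
        simp only [Subgroup.coe_mul, map_mul, Equiv.Perm.mul_apply]
        rw [h2, h1] }
  have hφH : φ.comp (Subgroup.inclusion hHK) = Coprod.inl := by
    have : ∀ g (hg : g ∈ Subgroup.closure T) (hg' : g ∈ H),
        φ (Subgroup.inclusion hHK ⟨g, hg'⟩) = Coprod.inl ⟨g, hg'⟩ := by
      intro g hg
      induction hg using Subgroup.closure_induction with
      | mem g hg =>
        intro hg'
        obtain ⟨w, hw, hw'⟩ := key g (hTg g hg)
        have h3 : w = w0 := Subtype.ext (by
          rw [hw]; exact QuotientGroup.eq.2 (by simpa using hg'))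
        subst h3
        change (ρ g (w0, 1)).2 = _
        rw [hw', ht0]; simp [iH, ext_of_mem _ hg']
      | one => intro h; exact (map_one (φ.comp (Subgroup.inclusion hHK))).trans (map_one Coprod.inl).symm
      | mul x y hx hy ihx ihy =>
        intro h
        rw [hT] at hx hy
        have := congrArg₂ (· * ·) (ihx hx) (ihy hy)
        simp only [← map_mul] at this
        exact this
      | inv x hx ih =>
        intro h
        rw [hT] at hx
        have := congrArg (·⁻¹) (ih hx)
        simp only [← map_inv] at this
        exact this
    ext ⟨g, hg⟩
    exact this g (hT ▸ hg) hg
  have hφL : φ.comp (Subgroup.inclusion hLK) = Coprod.inr := by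
    have : ∀ g (hg : g ∈ L) (hg' : g ∈ L),
        φ (Subgroup.inclusion hLK ⟨g, hg'⟩) = Coprod.inr ⟨g, hg'⟩ := by
      intro g hg
      induction hg using Subgroup.closure_induction with
      | mem g hg =>
        intro hg'
        obtain ⟨a, w, hne, rfl⟩ := hg
        change (ρ (el a w) (w0, 1)).2 = _
        have h4 : ρ (el a w) (w0, 1) = (w0, c a w) := by
          simp only [el, map_mul, Equiv.Perm.mul_apply, hρt, map_inv]
          rw [Equiv.Perm.inv_eq_iff_eq, hρof, hρ (t _) w0 (c a w), hρt, hσt]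
          simp
        rw [h4]
        simp only [c, if_neg hne]
        exact ext_of_mem _ hg'
      | one => intro h; exact (map_one (φ.comp (Subgroup.inclusion hLK))).trans (map_one Coprod.inr).symm
      | mul x y hx hy ihx ihy =>
        intro h
        have := congrArg₂ (· * ·) (ihx hx) (ihy hy)
        simp only [← map_mul] at this
        exact this
      | inv x hx ih =>
        intro h
        have := congrArg (·⁻¹) (ih hx)
        simp only [← map_inv] at this
        exact this
    ext ⟨g, hg⟩
    exact this g hg hg
  refine ⟨K, ?_, ⟨hHK, L, hLK, ?_⟩, ?_⟩
  · simp only [K]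
    rw [Subgroup.index_comap]
    exact Subgroup.index_ne_zero_of_finite
  · have e1 : φ.comp (Coprod.lift (Subgroup.inclusion hHK) (Subgroup.inclusion hLK)) =
        MonoidHom.id _ := by
      apply Coprod.hom_ext
      · rw [MonoidHom.comp_assoc, Coprod.lift_comp_inl, hφH]; rfl
      · rw [MonoidHom.comp_assoc, Coprod.lift_comp_inr, hφL]; rfl
    have e2 : K.subtype.comp (Coprod.lift (Subgroup.inclusion hHK) (Subgroup.inclusion hLK)) = π := by
      apply Coprod.hom_ext <;> ext <;> simp [π]
    refine Function.bijective_iff_has_inverse.2 ⟨φ, fun x => DFunLike.congr_fun e1 x, fun k => ?_⟩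
    apply Subtype.ext
    refine (DFunLike.congr_fun e2 (φ k)).trans ?_
    change π (ρ k (w0, 1)).2 = k
    rw [hπρ, (hK _).1 k.2, ht0]; simp
  · intro g hg hgH hgK
    apply hgH
    have := hσgood g hg
    rw [(hK _).1 hgK] at this
    simpa using QuotientGroup.eq.1 this

end FullyLERF

/-- Finitely generated free groups are fully LERF: given a finitely generated
subgroup `H` and a finite set `S` disjoint from `H`, there is a finite-index
subgroup `K` containing `H` as a free factor and avoiding `S`. -/
theorem freeGroup_fully_lerf {A : Type*} [Finite A]
    (H : Subgroup (FreeGroup A)) (hH : H.FG)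
    (S : Finset (FreeGroup A)) (hS : ∀ s ∈ S, s ∉ H) :
    ∃ K : Subgroup (FreeGroup A),
      K.index ≠ 0 ∧ IsFreeFactor H K ∧ ∀ s ∈ S, s ∉ K := by
  classical
  obtain ⟨T, hT⟩ := hH
  let q : List (A × Bool) → FreeGroup A ⧸ H := fun l => (FreeGroup.mk l : FreeGroup A)
  let B : Set (FreeGroup A) := insert 1 ((T : Set (FreeGroup A)) ∪ S)
  have hB : B.Finite := ((T.finite_toSet.union S.finite_toSet).insert 1)
  let V : Set (List (A × Bool)) := ⋃ g ∈ B, {l | l <:+ g.toWord}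
  have hV : V.Finite := by
    refine hB.biUnion fun g _ => ?_
    refine (List.finite_toSet g.toWord.tails).subset ?_
    intro l hl
    simpa using hl
  have hVs : ∀ l ∈ V, ∀ l', l' <:+ l → l' ∈ V := by
    intro l hl l' h
    simp only [V, Set.mem_iUnion, Set.mem_ofPred_eq] at hl ⊢
    obtain ⟨g, hg, hl⟩ := hl
    exact ⟨g, hg, h.trans hl⟩
  have hVB : ∀ g ∈ B, g.toWord ∈ V := by
    intro g hg
    simp only [V, Set.mem_iUnion, Set.mem_ofPred_eq]
    exact ⟨g, hg, List.suffix_rfl⟩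
  have hV0 : [] ∈ V := hVs _ (hVB 1 (Set.mem_insert _ _)) _ List.nil_suffix
  have : Finite (Set.image q V) := (hV.image q).to_subtype
  suffices hm : ∃ K : Subgroup (FreeGroup A), K.index ≠ 0 ∧ IsFreeFactor H K ∧
      ∀ s, (∃ l ∈ V, FreeGroup.mk l = s) → s ∉ H → s ∉ K by
    obtain ⟨K, hK1, hK2, hK3⟩ := hm
    refine ⟨K, hK1, hK2, fun s hs => hK3 s ⟨_, hVB s ?_, FreeGroup.mk_toWord⟩ (hS s hs)⟩
    exact Or.inr (Or.inr hs)
  refine FullyLERF.main H (Set.image q V) (fun g => ∃ l ∈ V, FreeGroup.mk l = g)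
    ⟨[], hV0, rfl⟩ ⟨[], hV0, rfl⟩ ?_ ?_ T hT ?_
  · rintro _ ⟨l, hl, rfl⟩ P p1 p2 p3
    induction l with
    | nil => exact p1
    | cons x l ih =>
      have hl' := hVs _ hl l (List.suffix_cons x l)
      obtain ⟨a, b⟩ := x
      cases b
      · have e : FreeGroup.mk ((a, false) :: l) = (FreeGroup.of a)⁻¹ * FreeGroup.mk l := by
          simp [FreeGroup.of, FreeGroup.inv_mk, FreeGroup.mul_mk, FreeGroup.invRev]
        rw [e]
        exact p3 _ _ ⟨l, hl', rfl⟩ ⟨_, hl, by simp only [q]; rw [e]⟩ (ih hl')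
      · have e : FreeGroup.mk ((a, true) :: l) = FreeGroup.of a * FreeGroup.mk l := by
          simp [FreeGroup.of, FreeGroup.mul_mk]
        rw [e]
        exact p2 _ _ ⟨l, hl', rfl⟩ ⟨_, hl, by simp only [q]; rw [e]⟩ (ih hl')
  · rintro _ ⟨l, hl, rfl⟩
    exact ⟨_, ⟨l, hl, rfl⟩, rfl⟩
  · intro g hg
    exact ⟨_, hVB g (Or.inr (Or.inl hg)), FreeGroup.mk_toWord⟩
end

section
/- If H and K are finitely generated subgroups of a free group FreeGroup A, then the intersection H ⊓ K is finitely generated; i.e., free groups satisfy the Howson property. -/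
/-- Elements of `H` have representing words whose prefixes stay close to `H`. -/
theorem howson_qc {A : Type*} [DecidableEq A] (H : Subgroup (FreeGroup A)) (hH : H.FG) :
    ∃ S : Set (FreeGroup A), ∃ T : Set A, S.Finite ∧ T.Finite ∧ ∀ h ∈ H,
      (∀ p q, h.toWord = p ++ q → ∃ s ∈ S, FreeGroup.mk p * s⁻¹ ∈ H) ∧
      ∀ x ∈ h.toWord, x.1 ∈ T := by
  obtain ⟨X, rfl⟩ := hH
  set H := Subgroup.closure (X : Set (FreeGroup A)) with hHdef
  let S : Set (FreeGroup A) :=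
    insert 1 (⋃ x ∈ X, FreeGroup.mk '' {p | p ∈ (FreeGroup.toWord x).inits})
  let T : Set A := ⋃ x ∈ X, Prod.fst '' {y | y ∈ FreeGroup.toWord x}
  have key : ∀ h ∈ H, ∃ L, FreeGroup.mk L = h ∧
      (∀ p q, L = p ++ q → ∃ s ∈ S, FreeGroup.mk p * s⁻¹ ∈ H) ∧ ∀ x ∈ L, x.1 ∈ T := by
    intro h hh
    induction hh using Subgroup.closure_induction with
    | mem x hx =>
      refine ⟨x.toWord, FreeGroup.mk_toWord, ?_, ?_⟩
      · intro p q hpq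
        refine ⟨FreeGroup.mk p, Or.inr ?_, by rw [mul_inv_cancel]; exact H.one_mem⟩
        simp only [Set.mem_iUnion]
        refine ⟨x, hx, p, ?_, rfl⟩
        simp [hpq]
      · intro y hy
        simp only [T, Set.mem_iUnion]
        exact ⟨x, hx, y, hy, rfl⟩
    | one =>
      refine ⟨[], rfl, ?_, by simp⟩
      intro p q hpq
      have : p = [] := by simp_all
      subst this
      exact ⟨1, Or.inl rfl, by simpa [FreeGroup.one_eq_mk] using H.one_mem⟩
    | mul x y hx hy ihx ihy =>
      obtain ⟨L, rfl, h1, h2⟩ := ihx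
      obtain ⟨M, rfl, h3, h4⟩ := ihy
      refine ⟨L ++ M, FreeGroup.mul_mk.symm, ?_, ?_⟩
      · intro p q hpq
        rcases List.append_eq_append_iff.1 hpq with ⟨a, rfl, ha⟩ | ⟨a, ha, -⟩
        · obtain ⟨s, hs, hm⟩ := h3 a q ha
          refine ⟨s, hs, ?_⟩
          rw [← FreeGroup.mul_mk, mul_assoc]
          exact H.mul_mem hx hm
        · exact h1 p a ha
      · intro x hx
        rcases List.mem_append.1 hx with h | h
        · exact h2 x h
        · exact h4 x h
    | inv x hx ihx =>
      obtain ⟨L, rfl, h1, h2⟩ := ihx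
      refine ⟨FreeGroup.invRev L, FreeGroup.inv_mk.symm, ?_, ?_⟩
      · intro p q hpq
        have hL : L = FreeGroup.invRev q ++ FreeGroup.invRev p := by
          rw [← FreeGroup.invRev_append, ← hpq, FreeGroup.invRev_invRev]
        obtain ⟨s, hs, hm⟩ := h1 _ _ hL
        refine ⟨s, hs, ?_⟩
        have := H.mul_mem (H.inv_mem hx) hm
        rw [hL, ← FreeGroup.mul_mk] at this
        rw [← FreeGroup.inv_mk, ← FreeGroup.inv_mk] at this
        convert this using 1
        group
      · intro x hx
        simp only [FreeGroup.invRev, List.mem_reverse, List.mem_map] at hx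
        obtain ⟨y, hy, rfl⟩ := hx
        exact h2 y hy
  refine ⟨S, T, ?_, ?_, ?_⟩
  · exact (Set.Finite.biUnion X.finite_toSet
      fun x _ => (List.finite_toSet _).image _).insert _
  · exact Set.Finite.biUnion X.finite_toSet fun x _ => (List.finite_toSet _).image _
  · intro h hh
    obtain ⟨L, rfl, h1, h2⟩ := key h hh
    have hred : FreeGroup.Red L (FreeGroup.mk L).toWord := by
      rw [FreeGroup.toWord_mk]; exact FreeGroup.reduce.red
    constructor
    · intro p q hpq
      rw [hpq] at hred
      obtain ⟨L3, L4, hL, h3, -⟩ := FreeGroup.Red.to_append_iff.1 hred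
      have : FreeGroup.mk p = FreeGroup.mk L3 := by
        rw [← FreeGroup.reduce.self (L := L3), FreeGroup.reduce.eq_of_red h3,
          FreeGroup.reduce.self]
      rw [this]
      exact h1 _ _ hL
    · intro x hx
      exact h2 x (hred.sublist.subset hx)

/-- A subgroup whose reduced words use finitely many letters and whose prefixes lie in
finitely many cosets is finitely generated. -/
theorem howson_fg {A : Type*} [DecidableEq A] (J : Subgroup (FreeGroup A))
    (R : Set (FreeGroup A)) (T : Set A) (hR : R.Finite) (hT : T.Finite)
    (h : ∀ g ∈ J, (∀ p q, g.toWord = p ++ q → ∃ r ∈ R, FreeGroup.mk p * r⁻¹ ∈ J) ∧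
      ∀ x ∈ g.toWord, x.1 ∈ T) : J.FG := by
  let R' := insert 1 R
  have hR' : R'.Finite := hR.insert 1
  let G0 : Set (FreeGroup A) := R' ∪
    (fun z : (FreeGroup A × FreeGroup A) × (A × Bool) => z.1.1 * FreeGroup.mk [z.2] * z.1.2⁻¹) ''
      ((R' ×ˢ R') ×ˢ (T ×ˢ Set.univ))
  have hG0 : G0.Finite := hR'.union (((hR'.prod hR').prod (hT.prod Set.finite_univ)).image _)
  let G : Set (FreeGroup A) := G0 ∩ J
  have hle : Subgroup.closure G ≤ J := (Subgroup.closure_le _).2 Set.inter_subset_right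
  rw [Subgroup.fg_iff]
  refine ⟨G, le_antisymm hle ?_, hG0.inter_of_left _⟩
  intro g hg
  obtain ⟨h1, h2⟩ := h g hg
  have key : ∀ p q, g.toWord = p ++ q →
      ∃ r ∈ R', FreeGroup.mk p * r⁻¹ ∈ Subgroup.closure G := by
    intro p
    induction p using List.reverseRecOn with
    | nil =>
      intro q _
      refine ⟨1, Or.inl rfl, ?_⟩
      simpa [FreeGroup.one_eq_mk] using (Subgroup.closure G).one_mem
    | append_singleton p x ih =>
      intro q hq
      obtain ⟨r, hr, hm⟩ := ih (x :: q) (by simpa using hq)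
      obtain ⟨r', hr', hm'⟩ := h1 _ _ hq
      refine ⟨r', Or.inr hr', ?_⟩
      have e : FreeGroup.mk (p ++ [x]) * r'⁻¹
          = (FreeGroup.mk p * r⁻¹) * (r * FreeGroup.mk [x] * r'⁻¹) := by
        rw [← FreeGroup.mul_mk]; group
      have hJ : r * FreeGroup.mk [x] * r'⁻¹ ∈ J := by
        rw [e] at hm'
        exact (J.mul_mem_cancel_left (hle hm)).1 hm'
      rw [e]
      refine Subgroup.mul_mem _ hm (Subgroup.subset_closure ⟨Or.inr ?_, hJ⟩)
      refine ⟨((r, r'), x), ⟨⟨hr, Or.inr hr'⟩, h2 x (by simp [hq]), Set.mem_univ _⟩, rfl⟩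
  obtain ⟨r, hr, hm⟩ := key g.toWord [] (by simp)
  rw [FreeGroup.mk_toWord] at hm
  have hrJ : r ∈ J := by
    have := (J.mul_mem_cancel_left hg).1 (hle hm)
    simpa using this
  have : r ∈ Subgroup.closure G := Subgroup.subset_closure ⟨Or.inl hr, hrJ⟩
  simpa using Subgroup.mul_mem _ hm this

/-- **Howson's theorem**: the intersection of two finitely generated subgroups of a
free group is finitely generated. -/
theorem freeGroup_howson {A : Type*} (H K : Subgroup (FreeGroup A))
    (hH : H.FG) (hK : K.FG) :
    (H ⊓ K).FG := by
  classical
  obtain ⟨S1, T1, hS1, hT1, h1⟩ := howson_qc H hH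
  obtain ⟨S2, T2, hS2, hT2, h2⟩ := howson_qc K hK
  let f : FreeGroup A × FreeGroup A → FreeGroup A := fun z =>
    if hz : ∃ r, r * z.1⁻¹ ∈ H ∧ r * z.2⁻¹ ∈ K then hz.choose else 1
  refine howson_fg (H ⊓ K) (f '' (S1 ×ˢ S2)) T1 ((hS1.prod hS2).image f) hT1 ?_
  rintro g ⟨hgH, hgK⟩
  refine ⟨?_, (h1 g hgH).2⟩
  intro p q hpq
  obtain ⟨s1, hs1, m1⟩ := (h1 g hgH).1 p q hpq
  obtain ⟨s2, hs2, m2⟩ := (h2 g hgK).1 p q hpq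
  refine ⟨f (s1, s2), ⟨(s1, s2), ⟨hs1, hs2⟩, rfl⟩, ?_⟩
  have hz : ∃ r, r * (s1, s2).1⁻¹ ∈ H ∧ r * (s1, s2).2⁻¹ ∈ K := ⟨_, m1, m2⟩
  have hf : f (s1, s2) = hz.choose := dif_pos hz
  obtain ⟨n1, n2⟩ := hz.choose_spec
  rw [← hf] at n1 n2
  constructor
  · have := H.mul_mem m1 (H.inv_mem n1)
    simpa [mul_assoc] using this
  · have := K.mul_mem m2 (K.inv_mem n2)
    simpa [mul_assoc] using this
end

section
/- Let H and K be finitely generated subgroups of a free group FreeGroup A. Then rr(H ⊓ K) ≤ 2 · rr(H) · rr(K), i.e., rank(H ⊓ K) − 1 ≤ 2 · (rank(H) − 1) · (rank(K) − 1) in truncated natural-number subtraction (the Hanna Neumann inequality). -/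
namespace HN

open Finset

variable {A : Type*} {X : Type*} [MulAction (FreeGroup A) X]

/-- The permutation of `X × C₁` attached to a letter. -/
noncomputable def letterPerm (X : Type*) [MulAction (FreeGroup A) X] (a : A) :
    Equiv.Perm (X × ((X × A) →₀ ℚ)) where
  toFun p := (FreeGroup.of a • p.1, p.2 + Finsupp.single (p.1, a) 1)
  invFun p := ((FreeGroup.of a)⁻¹ • p.1, p.2 - Finsupp.single ((FreeGroup.of a)⁻¹ • p.1, a) 1)
  left_inv p := by simp
  right_inv p := by simp

/-- The skew product action. -/
noncomputable def skew (X : Type*) [MulAction (FreeGroup A) X] :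
    FreeGroup A →* Equiv.Perm (X × ((X × A) →₀ ℚ)) :=
  FreeGroup.lift (letterPerm X)

/-- The chain of the path starting at `x` spelled by `g`. -/
noncomputable def chain (g : FreeGroup A) (x : X) : (X × A) →₀ ℚ := (skew X g (x, 0)).2

theorem skew_of (a : A) (x : X) (t : (X × A) →₀ ℚ) :
    skew X (FreeGroup.of a) (x, t) = (FreeGroup.of a • x, t + Finsupp.single (x, a) 1) := by
  simp [skew, letterPerm]

theorem skew_of_inv (a : A) (x : X) (t : (X × A) →₀ ℚ) :
    skew X (FreeGroup.of a)⁻¹ (x, t) =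
      ((FreeGroup.of a)⁻¹ • x, t - Finsupp.single ((FreeGroup.of a)⁻¹ • x, a) 1) := by
  rw [map_inv, Equiv.Perm.inv_eq_iff_eq, skew_of]
  simp

theorem skew_apply (g : FreeGroup A) : ∀ (x : X) (t : (X × A) →₀ ℚ),
    skew X g (x, t) = (g • x, t + chain g x) := by
  induction g using FreeGroup.induction_on with
  | C1 => intro x t; simp [chain]
  | of a => intro x t; simp only [chain, skew_of]; simp
  | inv_of a _ => intro x t; simp only [chain, skew_of_inv]; simp [sub_eq_add_neg]
  | mul g h hg hh =>
    intro x t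
    simp only [chain, map_mul, Equiv.Perm.mul_apply]
    rw [hh, hg, hh x 0, hg]
    simp [mul_smul, add_assoc]

theorem chain_one (x : X) : chain (1 : FreeGroup A) x = 0 := by simp [chain]

theorem chain_of (a : A) (x : X) : chain (FreeGroup.of a) x = Finsupp.single (x, a) 1 := by
  simp [chain, skew_of]

theorem chain_of_inv (a : A) (x : X) :
    chain (FreeGroup.of a)⁻¹ x = - Finsupp.single ((FreeGroup.of a)⁻¹ • x, a) 1 := by
  simp only [chain, skew_of_inv]; simp

theorem chain_mul (g h : FreeGroup A) (x : X) :
    chain (g * h) x = chain h x + chain g (h • x) := by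
  have := skew_apply (g * h) x 0
  rw [map_mul, Equiv.Perm.mul_apply, skew_apply, skew_apply] at this
  have := congrArg Prod.snd this
  simpa using this.symm

/-- Integration of a cochain along a path. -/
noncomputable def ev (f : X × A → ℚ) (g : FreeGroup A) (x : X) : ℚ :=
  Finsupp.linearCombination ℚ f (chain g x)

theorem ev_one (f : X × A → ℚ) (x : X) : ev f 1 x = 0 := by simp [ev, chain_one]

theorem ev_of (f : X × A → ℚ) (a : A) (x : X) : ev f (FreeGroup.of a) x = f (x, a) := by
  simp [ev, chain_of]

theorem ev_mul (f : X × A → ℚ) (g h : FreeGroup A) (x : X) :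
    ev f (g * h) x = ev f h x + ev f g (h • x) := by simp [ev, chain_mul]

theorem ev_inv (f : X × A → ℚ) (g : FreeGroup A) (x : X) :
    ev f g⁻¹ x = - ev f g (g⁻¹ • x) := by
  have := ev_mul f g g⁻¹ x
  rw [mul_inv_cancel, ev_one] at this
  linarith

/-- A cocycle is determined by its values on letters. -/
theorem ev_unique (f : X × A → ℚ) (c : FreeGroup A → X → ℚ)
    (hm : ∀ g h x, c (g * h) x = c h x + c g (h • x))
    (ho : ∀ a x, c (FreeGroup.of a) x = f (x, a)) (g : FreeGroup A) : ∀ x, ev f g x = c g x := by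
  have h1 : ∀ x, c 1 x = 0 := fun x => by have := hm 1 1 x; simp at this; exact this
  induction g using FreeGroup.induction_on with
  | C1 => intro x; rw [ev_one, h1]
  | of a => intro x; rw [ev_of, ho]
  | inv_of a h =>
    intro x
    rw [ev_inv, h]
    have := hm (FreeGroup.of a) (FreeGroup.of a)⁻¹ x
    rw [mul_inv_cancel, h1] at this
    linarith
  | mul g h hg hh => intro x; rw [ev_mul, hg, hh, hm]

/-- Path support, with connectivity. -/
theorem exists_support [DecidableEq X] [DecidableEq A] (g : FreeGroup A) :
    ∀ x : X, ∃ S : Finset (X × A), (chain g x).support ⊆ S ∧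
      ∀ u : X → ℚ, (∀ e ∈ S, u (FreeGroup.of e.2 • e.1) = u e.1) →
        u (g • x) = u x ∧ ∀ e ∈ S, u e.1 = u x := by
  induction g using FreeGroup.induction_on with
  | C1 => intro x; exact ⟨∅, by simp [chain_one]⟩
  | of a =>
    intro x
    refine ⟨{(x, a)}, ?_, ?_⟩
    · rw [chain_of]; exact Finsupp.support_single_subset
    · intro u hu; simpa using hu
  | inv_of a _ =>
    intro x
    refine ⟨{((FreeGroup.of a)⁻¹ • x, a)}, ?_, ?_⟩
    · rw [chain_of_inv, Finsupp.support_neg]; exact Finsupp.support_single_subset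
    · intro u hu
      have := hu _ (mem_singleton_self _)
      simp at this
      simp [this]
  | mul g h hg hh =>
    intro x
    obtain ⟨S, hS, hSu⟩ := hh x
    obtain ⟨T, hT, hTu⟩ := hg (h • x)
    refine ⟨S ∪ T, ?_, ?_⟩
    · rw [chain_mul]
      exact Finsupp.support_add.trans (union_subset_union hS hT)
    · intro u hu
      obtain ⟨h1, h2⟩ := hSu u fun e he => hu e (mem_union_left _ he)
      obtain ⟨h3, h4⟩ := hTu u fun e he => hu e (mem_union_right _ he)
      refine ⟨by rw [mul_smul, h3, h1], fun e he => ?_⟩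
      rcases mem_union.1 he with he | he
      · exact h2 e he
      · rw [h4 e he, h1]

/-- Target of an edge. -/
def tgt (e : X × A) : X := FreeGroup.of e.2 • e.1

/-- Vertices of a finite edge set. -/
def verts [DecidableEq X] (E : Finset (X × A)) : Finset X := E.image Prod.fst ∪ E.image tgt

theorem fst_mem [DecidableEq X] {E : Finset (X × A)} {e} (he : e ∈ E) : e.1 ∈ verts E :=
  mem_union_left _ (mem_image_of_mem _ he)

theorem tgt_mem [DecidableEq X] {E : Finset (X × A)} {e} (he : e ∈ E) : tgt e ∈ verts E :=
  mem_union_right _ (mem_image_of_mem _ he)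

/-- Coboundary on a finite edge set. -/
def cob [DecidableEq X] (E : Finset (X × A)) : (verts E → ℚ) →ₗ[ℚ] (E → ℚ) where
  toFun u e := u ⟨tgt e.1, tgt_mem e.2⟩ - u ⟨e.1.1, fst_mem e.2⟩
  map_add' u v := by ext e; simp; ring
  map_smul' c u := by ext e; simp; ring

/-- Evaluation of cochains supported on `E` on a family of paths. -/
noncomputable def evE (E : Finset (X × A)) {ι : Type*} (b : ι → FreeGroup A) (x : X) :
    (E → ℚ) →ₗ[ℚ] (ι → ℚ) where
  toFun f i := ∑ e : E, chain (b i) x e.1 * f e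
  map_add' u v := by ext e; simp [mul_add, sum_add_distrib]
  map_smul' c u := by ext e; simp [mul_sum]; congr; ext; ring

theorem evE_ext (E : Finset (X × A)) {ι : Type*} (b : ι → FreeGroup A) (x : X) (f : X × A → ℚ)
    (i : ι) (h : (∀ e, e ∉ E → f e = 0) ∨ (chain (b i) x).support ⊆ E) :
    evE E b x (fun e => f e.1) i = ev f (b i) x := by
  classical
  have : evE E b x (fun e => f e.1) i = ∑ e ∈ E, chain (b i) x e * f e := by
    simp only [evE, LinearMap.coe_mk, AddHom.coe_mk]
    exact Finset.sum_coe_sort E (fun e => chain (b i) x e * f e)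
  rw [this, ev, Finsupp.linearCombination_apply, Finsupp.sum]
  simp only [smul_eq_mul]
  rcases h with h | h
  · trans ∑ e ∈ E ∪ (chain (b i) x).support, chain (b i) x e * f e
    · apply Finset.sum_subset subset_union_left
      intro e _ he
      simp [h e he]
    · symm
      apply Finset.sum_subset subset_union_right
      intro e _ he
      simp [Finsupp.notMem_support_iff.1 he]
  · symm
    apply Finset.sum_subset h
    intro e _ he
    simp [Finsupp.notMem_support_iff.1 he]

theorem upper [DecidableEq X] [MulAction.IsPretransitive (FreeGroup A) X] (x₀ : X)
    (S : Finset (FreeGroup A))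
    (hS : Subgroup.closure (S : Set (FreeGroup A)) = MulAction.stabilizer (FreeGroup A) x₀)
    (E : Finset (X × A)) (hE : E.Nonempty) :
    E.card + 1 ≤ S.card + (verts E).card := by
  classical
  set L := evE E (fun i : S => (i : FreeGroup A)) x₀ with hL
  have hker : LinearMap.ker L ≤ LinearMap.range (cob E) := by
    intro f hf
    set f' : X × A → ℚ := fun e => if h : e ∈ E then f ⟨e, h⟩ else 0 with hf'
    have hff : f = fun e => f' e.1 := by ext e; simp [hf']
    have h0 : ∀ h ∈ Subgroup.closure (S : Set (FreeGroup A)), ev f' h x₀ = 0 := by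
      intro h hh
      have key : ∀ h ∈ Subgroup.closure (S : Set (FreeGroup A)), h • x₀ = x₀ := by
        intro h hh; rw [hS] at hh; exact hh
      induction hh using Subgroup.closure_induction with
      | mem h hh =>
        rw [← evE_ext E (fun i : S => (i : FreeGroup A)) x₀ f' ⟨h, hh⟩
          (Or.inl fun e he => by simp [hf', he]), ← hff]
        exact congrFun (LinearMap.mem_ker.1 hf) _
      | one => exact ev_one _ _
      | mul g h hg hh h1 h2 => rw [ev_mul, key h hh, h1, h2, add_zero]
      | inv g hg h1 => rw [ev_inv, key _ (inv_mem hg), h1, neg_zero]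
    have heq : ∀ g g' : FreeGroup A, g • x₀ = g' • x₀ → ev f' g x₀ = ev f' g' x₀ := by
      intro g g' h
      have hm : (g'⁻¹ * g) • x₀ = x₀ := by rw [mul_smul, h, inv_smul_smul]
      have : g = g' * (g'⁻¹ * g) := by group
      rw [this, ev_mul, hm, h0 _ (by rw [hS]; exact hm), zero_add]
    choose t ht using fun x : X => MulAction.exists_smul_eq (FreeGroup A) x₀ x
    refine ⟨fun v => ev f' (t v.1) x₀, ?_⟩
    ext e
    have h1 := heq (t (tgt e.1)) (FreeGroup.of e.1.2 * t e.1.1) (by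
      rw [ht, mul_smul, ht]; rfl)
    simp only [cob, LinearMap.coe_mk, AddHom.coe_mk]
    rw [h1, ev_mul, ht, ev_of, hff]
    simp
  have h1 := LinearMap.finrank_range_add_finrank_ker L
  have h2 := LinearMap.finrank_range_add_finrank_ker (cob E)
  have h3 := Submodule.finrank_mono hker
  have h4 := Submodule.finrank_le (LinearMap.range L)
  have h5 : 0 < Module.finrank ℚ (LinearMap.ker (cob E)) := by
    obtain ⟨e, he⟩ := hE
    rw [Module.finrank_pos_iff_exists_ne_zero]
    refine ⟨⟨fun _ => 1, by ext e; simp [cob]⟩, fun h => ?_⟩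
    have := congrFun (congrArg Subtype.val h) ⟨e.1, fst_mem he⟩
    simp at this
  simp only [Module.finrank_fintype_fun_eq_card, Fintype.card_coe] at h1 h2 h4
  omega

theorem lower [DecidableEq X] (x₀ : X) {n : ℕ} (b : Fin n → FreeGroup A)
    (hb : ∀ i, b i • x₀ = x₀)
    (hφ : ∀ y : Fin n → ℚ, ∃ φ : MulAction.stabilizer (FreeGroup A) x₀ →* Multiplicative ℚ,
      ∀ i, φ ⟨b i, hb i⟩ = Multiplicative.ofAdd (y i)) :
    ∃ E : Finset (X × A), n + (verts E).card ≤ E.card + 1 := by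
  classical
  choose S hS hSu using fun i => exists_support (b i) x₀
  set E := univ.biUnion S with hE
  have hSE : ∀ i, S i ⊆ E := fun i => subset_biUnion_of_mem S (mem_univ i)
  refine ⟨E, ?_⟩
  set L := evE E b x₀ with hL
  have hsurj : LinearMap.range L = ⊤ := by
    rw [LinearMap.range_eq_top]
    intro y
    obtain ⟨φ, hφ⟩ := hφ y
    -- transversal
    let O := MulAction.orbit (FreeGroup A) x₀
    have ht : ∀ x : X, ∃ g : FreeGroup A, x ∈ O → g • x₀ = x := by
      intro x
      by_cases hx : x ∈ O
      · obtain ⟨g, hg⟩ := hx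
        exact ⟨g, fun _ => hg⟩
      · exact ⟨1, fun h => absurd h hx⟩
    choose t ht using ht
    have hO : ∀ (g : FreeGroup A) (x : X), g • x ∈ O ↔ x ∈ O := fun g x => by
      constructor
      · rintro ⟨k, hk⟩
        exact ⟨g⁻¹ * k, by simp only at hk ⊢; rw [mul_smul, hk, inv_smul_smul]⟩
      · rintro ⟨k, hk⟩
        exact ⟨g * k, by simp only at hk ⊢; rw [mul_smul, hk]⟩
    have hst : ∀ (g : FreeGroup A) (x : X), x ∈ O →
        (t (g • x))⁻¹ * g * t x ∈ MulAction.stabilizer (FreeGroup A) x₀ := by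
      intro g x hx
      rw [MulAction.mem_stabilizer_iff, mul_smul, mul_smul, ht x hx, inv_smul_eq_iff,
        ht _ ((hO g x).2 hx)]
    let c : FreeGroup A → X → ℚ := fun g x =>
      if hx : x ∈ O then Multiplicative.toAdd (φ ⟨_, hst g x hx⟩) else 0
    have hc : ∀ g h x, c (g * h) x = c h x + c g (h • x) := by
      intro g h x
      by_cases hx : x ∈ O
      · have hx' := (hO h x).2 hx
        simp only [c, dif_pos hx, dif_pos hx']
        rw [← toAdd_mul, mul_comm, ← map_mul]
        congr 2
        ext1
        simp only [Subgroup.coe_mul, mul_smul]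
        group
      · have hx' := fun h' => hx ((hO h x).1 h')
        simp only [c, dif_neg hx, dif_neg hx', add_zero]
    have hev := ev_unique (fun e => c (FreeGroup.of e.2) e.1) c hc (fun _ _ => rfl)
    refine ⟨fun e => c (FreeGroup.of e.1.2) e.1.1, ?_⟩
    ext i
    rw [hL, evE_ext E b x₀ (fun e => c (FreeGroup.of e.2) e.1) i (Or.inr ((hS i).trans (hSE i))),
      hev]
    have hx₀ : x₀ ∈ O := MulAction.mem_orbit_self x₀
    simp only [c, dif_pos hx₀]
    have hts : t x₀ ∈ MulAction.stabilizer (FreeGroup A) x₀ := ht x₀ hx₀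
    have : (⟨_, hst (b i) x₀ hx₀⟩ : MulAction.stabilizer (FreeGroup A) x₀) =
        (⟨t x₀, hts⟩)⁻¹ * ⟨b i, hb i⟩ * ⟨t x₀, hts⟩ := by
      ext1
      simp [hb i]
    have h2 : φ ⟨_, hst (b i) x₀ hx₀⟩ = Multiplicative.ofAdd (y i) := by
      rw [this, φ.map_mul, φ.map_mul, φ.map_inv, hφ, mul_comm, mul_inv_cancel_left]
    rw [h2]
    rfl
  have hle : LinearMap.range (cob E) ≤ LinearMap.ker L := by
    rintro _ ⟨u, rfl⟩
    set u' : X → ℚ := fun x => if h : x ∈ verts E then u ⟨x, h⟩ else 0 with hu'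
    have hev := ev_unique (fun e => u' (FreeGroup.of e.2 • e.1) - u' e.1)
      (fun (g : FreeGroup A) x => u' (g • x) - u' x)
      (fun g h x => by simp only [mul_smul]; ring) (fun _ _ => rfl)
    rw [LinearMap.mem_ker]
    have : cob E u = fun e : E => u' (FreeGroup.of e.1.2 • e.1.1) - u' e.1.1 := by
      ext e
      have h1 : FreeGroup.of e.1.2 • e.1.1 ∈ verts E := tgt_mem e.2
      simp only [hu', dif_pos h1, dif_pos (fst_mem e.2)]
      rfl
    rw [this]
    ext i
    rw [hL, evE_ext E b x₀ (fun e => u' (FreeGroup.of e.2 • e.1) - u' e.1) i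
      (Or.inr ((hS i).trans (hSE i))), hev, hb]
    simp
  have hk : LinearMap.ker (cob E) ≤ Submodule.span ℚ {(fun _ => 1 : verts E → ℚ)} := by
    intro u hu
    set u' : X → ℚ := fun x => if h : x ∈ verts E then u ⟨x, h⟩ else 0 with hu'
    have hcl : ∀ e ∈ E, u' (FreeGroup.of e.2 • e.1) = u' e.1 := by
      intro e he
      have h1 : FreeGroup.of e.2 • e.1 ∈ verts E := tgt_mem he
      simp only [hu', dif_pos h1, dif_pos (fst_mem he)]
      have := congrFun (LinearMap.mem_ker.1 hu) ⟨e, he⟩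
      exact sub_eq_zero.1 this
    have hcon : ∀ e ∈ E, u' e.1 = u' x₀ := by
      intro e he
      obtain ⟨i, _, hi⟩ := mem_biUnion.1 he
      exact (hSu i u' fun e he => hcl e (hSE i he)).2 e hi
    have hall : ∀ v ∈ verts E, u' v = u' x₀ := by
      intro v hv
      rcases mem_union.1 hv with hv | hv
      · obtain ⟨e, he, rfl⟩ := mem_image.1 hv
        exact hcon e he
      · obtain ⟨e, he, rfl⟩ := mem_image.1 hv
        exact (hcl e he).trans (hcon e he)
    rw [Submodule.mem_span_singleton]
    refine ⟨u' x₀, ?_⟩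
    ext v
    rw [Pi.smul_apply, ← hall v.1 v.2]
    simp [hu']
  have h1 := LinearMap.finrank_range_add_finrank_ker L
  have h2 := LinearMap.finrank_range_add_finrank_ker (cob E)
  have h3 := Submodule.finrank_mono hle
  have h5 := (Submodule.finrank_mono hk).trans (finrank_span_le_card _)
  rw [hsurj, finrank_top] at h1
  simp only [Module.finrank_fintype_fun_eq_card, Fintype.card_coe, Fintype.card_fin,
    Set.toFinset_singleton, card_singleton] at h1 h2 h5
  omega

/-- Degree in a finite edge set. -/
def deg [DecidableEq X] (E : Finset (X × A)) (v : X) : ℕ :=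
  (E.filter fun e => e.1 = v).card + (E.filter fun e => tgt e = v).card

theorem sum_deg [DecidableEq X] (E : Finset (X × A)) :
    ∑ v ∈ verts E, ((deg E v : ℤ) - 2) = 2 * ((E.card : ℤ) - (verts E).card) := by
  have h1 := Finset.card_eq_sum_card_fiberwise (f := Prod.fst) (s := E) (t := verts E)
    (fun e he => fst_mem he)
  have h2 := Finset.card_eq_sum_card_fiberwise (f := tgt) (s := E) (t := verts E)
    (fun e he => tgt_mem he)
  rw [Finset.sum_sub_distrib]
  simp only [deg, Nat.cast_add, Finset.sum_add_distrib]
  rw [← Nat.cast_sum, ← Nat.cast_sum, ← h1, ← h2]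
  simp
  ring

/-- Trimming: there is a subgraph without leaves. -/
theorem trim [DecidableEq X] (m : ℕ) (h : ∃ E : Finset (X × A), m + (verts E).card ≤ E.card) :
    ∃ E : Finset (X × A), m + (verts E).card ≤ E.card ∧ ∀ v ∈ verts E, 2 ≤ deg E v := by
  classical
  obtain ⟨E₀, h₀⟩ := h
  have hex : ∃ k, ∃ E : Finset (X × A), E.card = k ∧ m + (verts E).card ≤ E.card := ⟨_, E₀, rfl, h₀⟩
  obtain ⟨E, hk, hE⟩ := Nat.find_spec hex
  refine ⟨E, hE, fun v hv => ?_⟩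
  by_contra hlt
  -- there is exactly one incident edge
  have hinc : ∃ e ∈ E, (e.1 = v ∨ tgt e = v) := by
    rcases mem_union.1 hv with hv | hv
    · obtain ⟨e, he, h⟩ := mem_image.1 hv
      exact ⟨e, he, Or.inl h⟩
    · obtain ⟨e, he, h⟩ := mem_image.1 hv
      exact ⟨e, he, Or.inr h⟩
  obtain ⟨e, he, hev⟩ := hinc
  have huniq : ∀ e' ∈ E, (e'.1 = v ∨ tgt e' = v) → e' = e := by
    intro e' he' hev'
    by_contra hne
    apply hlt
    have hsub : ({e, e'} : Finset (X × A)) ⊆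
        (E.filter fun e => e.1 = v) ∪ (E.filter fun e => tgt e = v) := by
      intro z hz
      simp only [mem_insert, mem_singleton] at hz
      rcases hz with rfl | rfl <;> simp only [mem_union, mem_filter] <;> tauto
    have := (card_le_card hsub).trans (card_union_le _ _)
    rwa [card_pair (Ne.symm hne)] at this
  have hv' : verts (E.erase e) ⊆ (verts E).erase v := by
    intro w hw
    have : ∃ e' ∈ E.erase e, e'.1 = w ∨ tgt e' = w := by
      rcases mem_union.1 hw with hv | hv
      · obtain ⟨e, he, h⟩ := mem_image.1 hv
        exact ⟨e, he, Or.inl h⟩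
      · obtain ⟨e, he, h⟩ := mem_image.1 hv
        exact ⟨e, he, Or.inr h⟩
    obtain ⟨e', he', hw'⟩ := this
    obtain ⟨hne, heE⟩ := mem_erase.1 he'
    rw [mem_erase]
    constructor
    · rintro rfl
      exact hne (huniq e' heE hw')
    · rcases hw' with rfl | rfl
      · exact fst_mem heE
      · exact tgt_mem heE
  have h1 := card_le_card hv'
  rw [card_erase_of_mem hv] at h1
  have h2 := card_erase_of_mem he
  have h3 : 0 < E.card := card_pos.2 ⟨e, he⟩
  have h4 : 0 < (verts E).card := card_pos.2 ⟨v, hv⟩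
  refine Nat.find_min hex (m := (E.erase e).card) (by omega) ⟨_, rfl, by omega⟩

section proj
variable {Y : Type*} [MulAction (FreeGroup A) Y] [DecidableEq X] [DecidableEq Y] [DecidableEq A]

/-- Image of an edge set under a map of vertices. -/
def img (p : X → Y) (E : Finset (X × A)) : Finset (Y × A) := E.image fun e => (p e.1, e.2)

theorem verts_img (p : X → Y) (hp : ∀ (g : FreeGroup A) x, p (g • x) = g • p x)
    (E : Finset (X × A)) : verts (img p E) = (verts E).image p := by
  ext y
  simp only [verts, img, mem_union, mem_image, tgt]
  grind

theorem deg_le (p : X → Y) (hp : ∀ (g : FreeGroup A) x, p (g • x) = g • p x)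
    (E : Finset (X × A)) (v : X) : deg E v ≤ deg (img p E) (p v) := by
  apply Nat.add_le_add
  · apply card_le_card_of_injOn (fun e => (p e.1, e.2))
    · intro e he
      simp only [mem_coe, mem_filter, img] at he ⊢
      exact ⟨mem_image_of_mem _ he.1, by rw [he.2]⟩
    · intro e he e' he' h
      simp only [mem_coe, mem_filter, Prod.mk.injEq] at he he' h
      exact Prod.ext (he.2.trans he'.2.symm) h.2
  · apply card_le_card_of_injOn (fun e => (p e.1, e.2))
    · intro e he
      simp only [mem_coe, mem_filter, img] at he ⊢
      exact ⟨mem_image_of_mem _ he.1, by rw [← he.2, tgt, tgt, hp]⟩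
    · intro e he e' he' h
      simp only [mem_coe, mem_filter, Prod.mk.injEq] at he he' h
      refine Prod.ext ?_ h.2
      have := he.2.trans he'.2.symm
      rw [tgt, tgt, h.2] at this
      exact smul_left_cancel _ this

end proj

theorem exists_basis (L : Subgroup (FreeGroup A)) : ∃ (n : ℕ) (b : Fin n → L), rkSubgroup L ≤ n ∧
    ∀ y : Fin n → ℚ, ∃ φ : L →* Multiplicative ℚ, ∀ i, φ (b i) = Multiplicative.ofAdd (y i) := by
  classical
  have key : ∃ T : Finset (IsFreeGroup.Generators L), rkSubgroup L ≤ T.card := by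
    cases finite_or_infinite (IsFreeGroup.Generators L) with
    | inl hfin =>
      have := Fintype.ofFinite (IsFreeGroup.Generators L)
      refine ⟨univ, ?_⟩
      let S : Finset (FreeGroup A) := univ.image fun i => (IsFreeGroup.of i : L).1
      have hS : Subgroup.closure (S : Set (FreeGroup A)) = L := by
        have h1 : (S : Set (FreeGroup A)) =
            L.subtype '' (Set.range (IsFreeGroup.of : _ → L)) := by
          ext; simp [S]
        have h2 : Subgroup.closure (Set.range (IsFreeGroup.of : _ → L)) = ⊤ := by
          have h3 : Set.range (IsFreeGroup.of : _ → L) =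
              (IsFreeGroup.mulEquiv L).toMonoidHom '' Set.range FreeGroup.of := by
            rw [← Set.range_comp]; rfl
          rw [h3, ← MonoidHom.map_closure, FreeGroup.closure_range_of]
          exact Subgroup.map_top_of_surjective _ (IsFreeGroup.mulEquiv L).surjective
        rw [h1, ← MonoidHom.map_closure, h2]
        rw [← MonoidHom.range_eq_map, Subgroup.range_subtype]
      have h4 : rkSubgroup L ≤ S.card := Nat.sInf_le ⟨S, rfl, hS⟩
      exact h4.trans card_image_le
    | inr hinf =>
      obtain ⟨T, hT⟩ := Infinite.exists_subset_card_eq (IsFreeGroup.Generators L) (rkSubgroup L)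
      exact ⟨T, hT.ge⟩
  obtain ⟨T, hT⟩ := key
  refine ⟨T.card, fun i => IsFreeGroup.of (T.equivFin.symm i).1, hT, fun y => ?_⟩
  refine ⟨IsFreeGroup.lift fun j => if h : j ∈ T then Multiplicative.ofAdd (y (T.equivFin ⟨j, h⟩))
    else 1, fun i => ?_⟩
  simp [IsFreeGroup.lift_of]

theorem exists_gen {G : Type*} [Group G] (H : Subgroup G) (hH : H.FG) :
    ∃ S : Finset G, S.card = rkSubgroup H ∧ Subgroup.closure (S : Set G) = H := by
  obtain ⟨S, hS⟩ := hH
  exact Nat.sInf_mem (s := {n : ℕ | ∃ S : Finset G, S.card = n ∧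
    Subgroup.closure (S : Set G) = H}) ⟨_, S, rfl, hS⟩

end HN

/-- **Hanna Neumann inequality**: for finitely generated subgroups `H, K` of a free
group, `rank(H ⊓ K) − 1 ≤ 2·(rank(H) − 1)·(rank(K) − 1)` (truncated subtraction). -/
theorem hanna_neumann_inequality {A : Type*} (H K : Subgroup (FreeGroup A))
    (hH : H.FG) (hK : K.FG) :
    rkSubgroup (H ⊓ K) - 1 ≤ 2 * ((rkSubgroup H - 1) * (rkSubgroup K - 1)) := by
  classical
  by_cases hr : rkSubgroup (H ⊓ K) ≤ 1
  · omega
  obtain ⟨n, b, hn, hb⟩ := HN.exists_basis (H ⊓ K)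
  obtain ⟨S, hSc, hS⟩ := HN.exists_gen H hH
  obtain ⟨T, hTc, hT⟩ := HN.exists_gen K hK
  let x₀ : FreeGroup A ⧸ H := ((1 : FreeGroup A) : FreeGroup A ⧸ H)
  let y₀ : FreeGroup A ⧸ K := ((1 : FreeGroup A) : FreeGroup A ⧸ K)
  have hx₀ : MulAction.stabilizer (FreeGroup A) x₀ = H := MulAction.stabilizer_quotient H
  have hy₀ : MulAction.stabilizer (FreeGroup A) y₀ = K := MulAction.stabilizer_quotient K
  have hst : MulAction.stabilizer (FreeGroup A) (x₀, y₀) = H ⊓ K := by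
    ext g
    have h1 : g ∈ H ↔ g • x₀ = x₀ := by
      rw [← MulAction.mem_stabilizer_iff, hx₀]
    have h2 : g ∈ K ↔ g • y₀ = y₀ := by
      rw [← MulAction.mem_stabilizer_iff, hy₀]
    rw [MulAction.mem_stabilizer_iff, Subgroup.mem_inf, h1, h2, Prod.smul_mk, Prod.mk.injEq]
  obtain ⟨E, hE, hd⟩ := HN.trim (A := A) (X := (FreeGroup A ⧸ H) × (FreeGroup A ⧸ K)) (n - 1) (by
    obtain ⟨E, hE⟩ := HN.lower (x₀, y₀) (fun i => (b i : FreeGroup A))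
      (fun i => by
        have : (b i : FreeGroup A) ∈ MulAction.stabilizer (FreeGroup A) (x₀, y₀) := by
          rw [hst]; exact (b i).2
        exact this)
      (fun y => by
        obtain ⟨φ, hφ⟩ := hb y
        exact ⟨φ.comp (MulEquiv.subgroupCongr hst).toMonoidHom, fun i => hφ i⟩)
    exact ⟨E, by omega⟩)
  have hne : E.Nonempty := by
    rw [← Finset.card_pos]; omega
  have hp1 : ∀ (g : FreeGroup A) (x : (FreeGroup A ⧸ H) × (FreeGroup A ⧸ K)),
    (g • x).1 = g • x.1 := fun _ _ => rfl
  have hp2 : ∀ (g : FreeGroup A) (x : (FreeGroup A ⧸ H) × (FreeGroup A ⧸ K)),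
    (g • x).2 = g • x.2 := fun _ _ => rfl
  set E1 := HN.img Prod.fst E with hE1
  set E2 := HN.img Prod.snd E with hE2
  have hv1 := HN.verts_img Prod.fst hp1 E
  have hv2 := HN.verts_img Prod.snd hp2 E
  have u1 := HN.upper x₀ S (hS.trans hx₀.symm) E1 (hne.image _)
  have u2 := HN.upper y₀ T (hT.trans hy₀.symm) E2 (hne.image _)
  have d1 := HN.deg_le Prod.fst hp1 E
  have d2 := HN.deg_le Prod.snd hp2 E
  have s0 := HN.sum_deg E
  have s1 := HN.sum_deg E1
  have s2 := HN.sum_deg E2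
  have e1 : ∀ v ∈ HN.verts E1, (0 : ℤ) ≤ (HN.deg E1 v : ℤ) - 2 := by
    intro v hv
    rw [hv1] at hv
    obtain ⟨w, hw, rfl⟩ := Finset.mem_image.1 hv
    have h1 := d1 w
    rw [← hE1] at h1
    have := hd w hw
    omega
  have e2 : ∀ v ∈ HN.verts E2, (0 : ℤ) ≤ (HN.deg E2 v : ℤ) - 2 := by
    intro v hv
    rw [hv2] at hv
    obtain ⟨w, hw, rfl⟩ := Finset.mem_image.1 hv
    have h1 := d2 w
    rw [← hE2] at h1
    have := hd w hw
    omega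
  have main : ∑ v ∈ HN.verts E, ((HN.deg E v : ℤ) - 2) ≤
      (∑ v ∈ HN.verts E1, ((HN.deg E1 v : ℤ) - 2)) *
        (∑ v ∈ HN.verts E2, ((HN.deg E2 v : ℤ) - 2)) := by
    rw [Finset.sum_mul_sum, ← Finset.sum_product']
    trans ∑ v ∈ HN.verts E, ((HN.deg E1 v.1 : ℤ) - 2) * ((HN.deg E2 v.2 : ℤ) - 2)
    · apply Finset.sum_le_sum
      intro v hv
      have h0 := hd v hv
      have h1 := d1 v
      have h2 := d2 v
      rw [← hE1] at h1
      rw [← hE2] at h2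
      rcases Nat.eq_or_lt_of_le h0 with h | h
      · rw [← h]
        have : (0 : ℤ) ≤ ((HN.deg E1 v.1 : ℤ) - 2) * ((HN.deg E2 v.2 : ℤ) - 2) :=
          mul_nonneg (by omega) (by omega)
        simpa using this
      · have a1 : (HN.deg E v : ℤ) - 2 ≤ (HN.deg E1 v.1 : ℤ) - 2 := by omega
        have a2 : (1 : ℤ) ≤ (HN.deg E2 v.2 : ℤ) - 2 := by omega
        have a3 : (0 : ℤ) ≤ (HN.deg E v : ℤ) - 2 := by omega
        nlinarith
    · apply Finset.sum_le_sum_of_subset_of_nonneg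
      · intro v hv
        rw [Finset.mem_product, hv1, hv2]
        exact ⟨Finset.mem_image_of_mem _ hv, Finset.mem_image_of_mem _ hv⟩
      · intro v hv _
        rw [Finset.mem_product] at hv
        exact mul_nonneg (e1 _ hv.1) (e2 _ hv.2)
  have f1 := Finset.sum_nonneg e1
  have f2 := Finset.sum_nonneg e2
  rw [s1] at f1 main
  rw [s2] at f2 main
  rw [s0] at main
  rw [hSc] at u1
  rw [hTc] at u2
  obtain ⟨i, hi⟩ : ∃ i, rkSubgroup H = i + 1 := ⟨rkSubgroup H - 1, by omega⟩
  obtain ⟨j, hj⟩ : ∃ j, rkSubgroup K = j + 1 := ⟨rkSubgroup K - 1, by omega⟩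
  rw [hi] at u1 ⊢
  rw [hj] at u2 ⊢
  simp only [Nat.add_sub_cancel]
  have g1 : (E1.card : ℤ) - (HN.verts E1).card ≤ i := by omega
  have g2 : (E2.card : ℤ) - (HN.verts E2).card ≤ j := by omega
  have g3 : ((E1.card : ℤ) - (HN.verts E1).card) * ((E2.card : ℤ) - (HN.verts E2).card) ≤ i * j :=
    mul_le_mul g1 g2 (by omega) (by omega)
  have g4 : ((rkSubgroup (H ⊓ K) - 1 : ℕ) : ℤ) ≤ (E.card : ℤ) - (HN.verts E).card := by omega
  zify
  nlinarith
end

section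
/- Let H and K be finitely generated subgroups of a free group F = FreeGroup A and let T ⊆ F be a set of double coset representatives for H\F/K. Then the (finitely supported) sum ∑_{w ∈ T} rr(H^w ⊓ K) ≤ 2 · rr(H) · rr(K), where H^w = w⁻¹Hw (the strengthened Hanna Neumann inequality of W. Neumann). -/
/-- The reduced rank of a subgroup: `rank − 1` (truncated subtraction in `ℕ`). -/
noncomputable def rrSubgroup {G : Type*} [Group G] (H : Subgroup G) : ℕ :=
  rkSubgroup H - 1

/-- The conjugate subgroup `H^w = w⁻¹ H w`. -/
def conjSubgroup {G : Type*} [Group G] (w : G) (H : Subgroup G) : Subgroup G :=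
  Subgroup.map (MulAut.conj w⁻¹).toMonoidHom H

namespace SHN

open Classical in
/-- Endpoints of a Schreier-graph edge: `false` is the tail, `true` is the head. -/
noncomputable def ep {A V : Type*} [MulAction (FreeGroup A) V] (b : Bool) (e : V × A) : V :=
  if b = true then FreeGroup.of e.2 • e.1 else e.1

section
variable {A V : Type*} [MulAction (FreeGroup A) V]

@[simp] lemma ep_true (e : V × A) : ep true e = FreeGroup.of e.2 • e.1 := rfl
@[simp] lemma ep_false (e : V × A) : ep false e = e.1 := rfl

/-- Integration of edge labels: existence of the cocycle. -/
lemma exists_cocycle (c : V × A → ZMod 2) :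
    ∃ I : FreeGroup A → V → ZMod 2, (∀ v, I 1 v = 0) ∧
      (∀ x y v, I (x * y) v = I y v + I x (y • v)) ∧
      (∀ a v, I (FreeGroup.of a) v = c (v, a)) := by
  let P : A → Equiv.Perm (V × ZMod 2) := fun a =>
    { toFun := fun z => (FreeGroup.of a • z.1, z.2 + c (z.1, a))
      invFun := fun z => ((FreeGroup.of a)⁻¹ • z.1, z.2 - c ((FreeGroup.of a)⁻¹ • z.1, a))
      left_inv := by intro z; simp
      right_inv := by intro z; simp }
  let Ψ := FreeGroup.lift P
  have hof : ∀ a v s, Ψ (FreeGroup.of a) (v, s) = (FreeGroup.of a • v, s + c (v, a)) := by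
    intro a v s
    simp [Ψ, P]
  have key : ∀ x : FreeGroup A, ∀ v s, Ψ x (v, s) = (x • v, s + (Ψ x (v, 0)).2) := by
    intro x
    induction x using FreeGroup.induction_on with
    | C1 => intro v s; simp
    | of a => intro v s; simp [hof]
    | inv_of a ih =>
      intro v s
      have h : ∀ s, Ψ (FreeGroup.of a)⁻¹ (v, s) =
          ((FreeGroup.of a)⁻¹ • v, s - c ((FreeGroup.of a)⁻¹ • v, a)) := by
        intro s
        simp only [map_inv]
        rw [Equiv.Perm.inv_eq_iff_eq, hof]
        simp
      rw [h, h]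
      simp [sub_eq_add_neg]
    | mul x y hx hy =>
      intro v s
      simp only [map_mul, Equiv.Perm.mul_apply]
      rw [hy v s, hy v 0, hx _ (s + _), hx _ (0 + _)]
      simp [mul_smul, add_assoc]
  refine ⟨fun x v => (Ψ x (v, 0)).2, ?_, ?_, ?_⟩
  · intro v; simp
  · intro x y v
    simp only [map_mul, Equiv.Perm.mul_apply]
    rw [key y v 0, key x _ (0 + _)]
  · intro a v; simp [hof]

/-- A geodesic spanning tree of a transitive Schreier graph. -/
lemma exists_tree [Nonempty A] [MulAction.IsPretransitive (FreeGroup A) V] (ρ : V) :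
    ∃ (q : V → V × A) (b : V → Bool) (h : V → ℕ),
      ∀ v, v ≠ ρ → ep (b v) (q v) = v ∧ h (ep (!b v) (q v)) < h v := by
  classical
  let h : V → ℕ := fun v => sInf {n | ∃ x : FreeGroup A, x • ρ = v ∧ x.norm = n}
  have hne : ∀ v, {n | ∃ x : FreeGroup A, x • ρ = v ∧ x.norm = n}.Nonempty := by
    intro v
    obtain ⟨x, hx⟩ := MulAction.exists_smul_eq (FreeGroup A) ρ v
    exact ⟨_, x, hx, rfl⟩
  have : ∀ v, ∃ qb : (V × A) × Bool, v ≠ ρ → ep qb.2 qb.1 = v ∧ h (ep (!qb.2) qb.1) < h v := by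
    intro v
    by_cases hv : v = ρ
    · exact ⟨((v, Classical.arbitrary A), true), fun h => (h hv).elim⟩
    · obtain ⟨x, hx, hn⟩ := Nat.sInf_mem (hne v)
      have hx1 : x.toWord ≠ [] := by
        intro h0
        rw [FreeGroup.toWord_eq_nil_iff] at h0
        subst h0
        simp at hx
        exact hv hx.symm
      obtain ⟨⟨a, b⟩, L, hL⟩ := List.exists_cons_of_ne_nil hx1
      have hxe : x = FreeGroup.mk [(a, b)] * FreeGroup.mk L := by
        rw [FreeGroup.mul_mk, ← FreeGroup.mk_toWord (x := x), hL]; rfl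
      have hlt : h (FreeGroup.mk L • ρ) < h v := by
        calc h (FreeGroup.mk L • ρ) ≤ (FreeGroup.mk L).norm := Nat.sInf_le ⟨_, rfl, rfl⟩
          _ ≤ L.length := FreeGroup.norm_mk_le
          _ < x.norm := by simp [FreeGroup.norm, hL]
          _ = h v := hn
      rw [hxe, mul_smul] at hx
      cases b with
      | true =>
        refine ⟨((FreeGroup.mk L • ρ, a), true), fun _ => ⟨?_, ?_⟩⟩
        · exact hx
        · exact hlt
      | false =>
        have hx' : (FreeGroup.of a)⁻¹ • (FreeGroup.mk L • ρ) = v := hx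
        refine ⟨((v, a), false), fun _ => ⟨rfl, ?_⟩⟩
        simp only [Bool.not_false, ep_true]
        rw [← hx', smul_inv_smul]
        rw [hx']
        exact hlt
  choose qb hqb using this
  exact ⟨fun v => (qb v).1, fun v => (qb v).2, h, hqb⟩

lemma tree_inj {ρ : V} {q : V → V × A} {b : V → Bool} {h : V → ℕ}
    (hq : ∀ v, v ≠ ρ → ep (b v) (q v) = v ∧ h (ep (!b v) (q v)) < h v)
    {v v' : V} (hv : v ≠ ρ) (hv' : v' ≠ ρ) (e : q v = q v') : v = v' := by
  obtain ⟨h1, h2⟩ := hq v hv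
  obtain ⟨h3, h4⟩ := hq v' hv'
  rw [e] at h1 h2
  by_cases hb : b v = b v'
  · rw [← h1, hb, h3]
  · have hb1 : b v' = !b v := by
      revert hb; cases b v <;> cases b v' <;> simp
    have hb2 : b v = !b v' := by
      revert hb; cases b v <;> cases b v' <;> simp
    rw [← hb1, h3] at h2
    rw [← hb2, h1] at h4
    omega

/-- Transversal associated with a spanning tree. -/
lemma exists_transversal {ρ : V} {q : V → V × A} {b : V → Bool} {h : V → ℕ}
    (hq : ∀ v, v ≠ ρ → ep (b v) (q v) = v ∧ h (ep (!b v) (q v)) < h v) :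
    ∃ t : V → FreeGroup A, t ρ = 1 ∧
      (∀ v, v ≠ ρ → t (FreeGroup.of (q v).2 • (q v).1) = FreeGroup.of (q v).2 * t (q v).1) := by
  classical
  let F : (v : V) → ((u : V) → h u < h v → FreeGroup A) → FreeGroup A := fun v rec =>
    if hv : v = ρ then 1 else
      (if b v = true then FreeGroup.of (q v).2 else (FreeGroup.of (q v).2)⁻¹) *
        rec (ep (!b v) (q v)) (hq v hv).2
  let t : V → FreeGroup A := (measure h).wf.fix F
  have ht : ∀ v, t v = F v (fun u _ => t u) := fun v => (measure h).wf.fix_eq F v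
  refine ⟨t, by rw [ht]; simp [F], ?_⟩
  intro v hv
  have h1 := ht v
  simp only [F, dif_neg hv] at h1
  have h2 := (hq v hv).1
  cases hb : b v with
  | true =>
    simp only [hb, ep_true, if_true, Bool.not_true, ep_false] at h1 h2
    rw [h2, h1]
  | false =>
    simp only [hb, ep_true, Bool.not_false, ep_false] at h1 h2
    rw [h2, h1]
    simp [h2]

lemma transversal_smul {ρ : V} {q : V → V × A} {b : V → Bool} {h : V → ℕ}
    (hq : ∀ v, v ≠ ρ → ep (b v) (q v) = v ∧ h (ep (!b v) (q v)) < h v)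
    {α : Type*} (f : V → α) (g : V → α) (hρ : f ρ = g ρ)
    (hstep : ∀ v, v ≠ ρ → (f (ep true (q v)) = g (ep true (q v)) ↔
      f (ep false (q v)) = g (ep false (q v)))) : ∀ v, f v = g v := by
  intro v
  induction hn : h v using Nat.strong_induction_on generalizing v with
  | _ n ih =>
    by_cases hv : v = ρ
    · rw [hv, hρ]
    · obtain ⟨h1, h2⟩ := hq v hv
      have h3 := ih _ (hn ▸ h2) _ rfl
      have h4 := hstep v hv
      cases hb : b v <;> rw [hb] at h1 h3 <;> simp only [Bool.not_true, Bool.not_false] at h3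
      · rw [h1] at h4; exact h4.1 h3
      · rw [h1] at h4; exact h4.2 h3

lemma rk_mem {G : Type*} [Group G] {H : Subgroup G} (hH : H.FG) :
    ∃ S : Finset G, S.card = rkSubgroup H ∧ Subgroup.closure (S : Set G) = H := by
  obtain ⟨S, hS⟩ := hH
  exact Nat.sInf_mem (s := {n : ℕ | ∃ S : Finset G, S.card = n ∧ Subgroup.closure (S : Set G) = H})
    ⟨_, S, rfl, hS⟩

lemma rk_le {G : Type*} [Group G] {H : Subgroup G} (S : Finset G)
    (hS : Subgroup.closure (S : Set G) = H) : rkSubgroup H ≤ S.card :=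
  Nat.sInf_le ⟨S, rfl, hS⟩

lemma exists_schreier [Nonempty A] [MulAction.IsPretransitive (FreeGroup A) V] (ρ : V)
    (hfg : (MulAction.stabilizer (FreeGroup A) ρ).FG) :
    ∃ (N : Finset (V × A)) (q : V → V × A) (b : V → Bool) (h : V → ℕ),
      (∀ v, v ≠ ρ → ep (b v) (q v) = v ∧ h (ep (!b v) (q v)) < h v) ∧
      N.card = rkSubgroup (MulAction.stabilizer (FreeGroup A) ρ) ∧
      ∀ e, e ∈ N ↔ ∀ v, v ≠ ρ → q v ≠ e := by
  classical
  obtain ⟨q, b, h, hq⟩ := exists_tree (A := A) ρ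
  obtain ⟨t, htρ, ht⟩ := exists_transversal hq
  have htv : ∀ v, t v • ρ = v := by
    apply transversal_smul hq (fun v => t v • ρ) id
    · simp [htρ]
    · intro v hv
      simp [ht v hv, mul_smul]
  let N : Set (V × A) := {e | ∀ v, v ≠ ρ → q v ≠ e}
  let ℓ : V × A → FreeGroup A := fun e =>
    (t (FreeGroup.of e.2 • e.1))⁻¹ * FreeGroup.of e.2 * t e.1
  have hℓ : ∀ e, ℓ e ∈ MulAction.stabilizer (FreeGroup A) ρ := by
    intro e
    rw [MulAction.mem_stabilizer_iff]
    simp only [ℓ, mul_smul, htv]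
    rw [inv_smul_eq_iff, htv]
  have hℓ1 : ∀ e, e ∉ N → ℓ e = 1 := by
    intro e he
    simp only [N, Set.mem_ofPred_eq, not_forall, not_not] at he
    obtain ⟨v, hv, rfl⟩ := he
    simp only [ℓ, ht v hv]
    group
  -- generation
  have hgen : Subgroup.closure (ℓ '' N) = MulAction.stabilizer (FreeGroup A) ρ := by
    apply le_antisymm
    · rw [Subgroup.closure_le]
      rintro _ ⟨e, -, rfl⟩
      exact hℓ e
    · have hmem : ∀ e, ℓ e ∈ Subgroup.closure (ℓ '' N) := by
        intro e
        by_cases he : e ∈ N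
        · exact Subgroup.subset_closure ⟨e, he, rfl⟩
        · rw [hℓ1 e he]; exact one_mem _
      have key : ∀ x : FreeGroup A, ∀ v, (t (x • v))⁻¹ * x * t v ∈ Subgroup.closure (ℓ '' N) := by
        intro x
        induction x using FreeGroup.induction_on with
        | C1 => intro v; simp
        | of a => intro v; exact hmem (v, a)
        | inv_of a ih =>
          intro v
          have := inv_mem (ih ((FreeGroup.of a)⁻¹ • v))
          simpa [mul_assoc] using this
        | mul x y hx hy =>
          intro v
          have := mul_mem (hx (y • v)) (hy v)
          simpa [mul_assoc, mul_smul] using this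
      intro x hx
      have := key x ρ
      rw [MulAction.mem_stabilizer_iff.1 hx, htρ] at this
      simpa using this
  -- independence
  obtain ⟨S, hScard, hS⟩ := rk_mem hfg
  choose I hI1 hImul hIof using fun c : V × A → ZMod 2 => exists_cocycle (A := A) (V := V) c
  let ext : (N → ZMod 2) → V × A → ZMod 2 := fun c e => if he : e ∈ N then c ⟨e, he⟩ else 0
  have hIt : ∀ c v, I (ext c) (t v) ρ = 0 := by
    intro c
    apply transversal_smul hq (fun v => I (ext c) (t v) ρ) (fun _ => 0)
    · simp [htρ, hI1]
    · intro v hv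
      have : q v ∉ N := fun hN => hN v hv rfl
      have h0 : ext c ((q v).1, (q v).2) = 0 := by simp [ext, this]
      simp [ht v hv, hImul, hIof, htv, h0]
  have hIℓ : ∀ c (e : N), I (ext c) (ℓ e) ρ = c e := by
    intro c e
    have h1 : t (FreeGroup.of e.1.2 • e.1.1) * ℓ e = FreeGroup.of e.1.2 * t e.1.1 := by
      simp only [ℓ]; group
    have h2 := hImul (ext c) (t (FreeGroup.of e.1.2 • e.1.1)) (ℓ e) ρ
    rw [h1, MulAction.mem_stabilizer_iff.1 (hℓ e), hIt, hImul, hIt, hIof, htv] at h2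
    simpa [ext] using h2.symm
  have hinj : Function.Injective (fun (c : N → ZMod 2) (s : S) => I (ext c) s ρ) := by
    intro c c' hcc
    have hall : ∀ x ∈ Subgroup.closure (S : Set (FreeGroup A)),
        I (ext c) x ρ = I (ext c') x ρ := by
      intro x hx
      induction hx using Subgroup.closure_induction with
      | mem x hx => exact congrFun hcc ⟨x, hx⟩
      | one => simp [hI1]
      | mul x y hx hy ihx ihy =>
        rw [hS] at hy
        rw [hImul, hImul, MulAction.mem_stabilizer_iff.1 hy, ihx, ihy]
      | inv x hx ih =>
        rw [hS] at hx
        have hr : x⁻¹ • ρ = ρ := by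
          rw [inv_smul_eq_iff]; exact (MulAction.mem_stabilizer_iff.1 hx).symm
        have e1 := hImul (ext c) x x⁻¹ ρ
        have e2 := hImul (ext c') x x⁻¹ ρ
        rw [mul_inv_cancel, hI1, hr] at e1 e2
        rw [ih] at e1
        exact add_right_cancel (e1.symm.trans e2)
    ext e
    rw [← hIℓ c e, ← hIℓ c' e, hall _ (hS ▸ hℓ e)]
  have hfin1 : Finite (N → ZMod 2) := Finite.of_injective _ hinj
  have hfin : Finite N := by
    have hdelta : Function.Injective (fun (e : N) => (Pi.single e 1 : N → ZMod 2)) := by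
      intro e e' hee
      by_contra hne
      have := congrFun hee e
      simp [hne] at this
    exact Finite.of_injective _ hdelta
  have hNfin : N.Finite := Set.toFinite N
  have hle : hNfin.toFinset.card ≤ rkSubgroup (MulAction.stabilizer (FreeGroup A) ρ) := by
    have h1 := Nat.card_le_card_of_injective _ hinj
    rw [Nat.card_fun, Nat.card_fun, Nat.card_zmod, Nat.card_eq_fintype_card (α := S),
      Fintype.card_coe, hScard] at h1
    have h2 := (Nat.pow_le_pow_iff_right (by norm_num : 1 < 2)).1 h1
    rw [← Set.ncard_eq_toFinset_card N hNfin]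
    exact h2
  have hge : rkSubgroup (MulAction.stabilizer (FreeGroup A) ρ) ≤ hNfin.toFinset.card := by
    calc _ ≤ (hNfin.toFinset.image ℓ).card := rk_le _ (by simpa using hgen)
      _ ≤ _ := Finset.card_image_le
  exact ⟨hNfin.toFinset, q, b, h, hq, le_antisymm hle hge, fun e => by simp [N]⟩

/-- Degree of a vertex with respect to a finite set of edges. -/
noncomputable def deg (E : Finset (V × A)) (v : V) : ℕ := by
  classical
  exact (E.filter (fun e => ep false e = v)).card + (E.filter (fun e => ep true e = v)).card

/-- All edges outside the induced subgraph are injectively assigned to an endpoint outside. -/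
def Star (C : Finset V) (E : Finset (V × A)) : Prop :=
  ∃ b : V × A → Bool, (∀ e, e ∉ E → ep (b e) e ∉ C) ∧
    ∀ e, e ∉ E → ∀ e', e' ∉ E → ep (b e) e = ep (b e') e' → e = e'

/-- Finite connected induced subgraph outside of which the graph is a forest. -/
structure IsCore (C : Finset V) (E : Finset (V × A)) : Prop where
  nonempty : C.Nonempty
  mem : ∀ e, e ∈ E ↔ ep false e ∈ C ∧ ep true e ∈ C
  star : Star C E
  conn : ∀ S : Set V, (∀ e ∈ E, (ep false e ∈ S ↔ ep true e ∈ S)) →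
    ∀ v ∈ C, v ∈ S → ∀ u ∈ C, u ∈ S

lemma exists_core [Nonempty A] [MulAction.IsPretransitive (FreeGroup A) V] (ρ : V)
    (hfg : (MulAction.stabilizer (FreeGroup A) ρ).FG) :
    ∃ (C : Finset V) (E : Finset (V × A)), IsCore C E ∧
      E.card + 1 = C.card + rkSubgroup (MulAction.stabilizer (FreeGroup A) ρ) := by
  classical
  obtain ⟨N, q, b, h, hq, hN, hNm⟩ := exists_schreier (A := A) ρ hfg
  have hanc : ∀ v, ∃ C : Finset V, v ∈ C ∧ ρ ∈ C ∧ ∀ x ∈ C, x ≠ ρ → ep (!b x) (q x) ∈ C := by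
    intro v
    induction hn : h v using Nat.strong_induction_on generalizing v with
    | _ n ih =>
      by_cases hv : v = ρ
      · subst hv
        refine ⟨{v}, by simp, by simp, ?_⟩
        intro x hx hne
        exact (hne (by simpa using hx)).elim
      · obtain ⟨C, h1, h2, h3⟩ := ih _ (hn ▸ (hq v hv).2) _ rfl
        refine ⟨insert v C, by simp, by simp [h2], ?_⟩
        intro x hx hne
        rcases Finset.mem_insert.1 hx with rfl | hx
        · exact Finset.mem_insert_of_mem h1
        · exact Finset.mem_insert_of_mem (h3 x hx hne)
  choose anc ha1 ha2 ha3 using hanc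
  let C : Finset V := insert ρ (N.biUnion fun e => anc (ep false e) ∪ anc (ep true e))
  have hρC : ρ ∈ C := Finset.mem_insert_self _ _
  have hpar : ∀ x ∈ C, x ≠ ρ → ep (!b x) (q x) ∈ C := by
    intro x hx hne
    rcases Finset.mem_insert.1 hx with rfl | hx
    · exact (hne rfl).elim
    · apply Finset.mem_insert_of_mem
      rw [Finset.mem_biUnion] at hx ⊢
      obtain ⟨e, he, hx⟩ := hx
      refine ⟨e, he, ?_⟩
      rw [Finset.mem_union] at hx ⊢
      exact hx.imp (fun hx => ha3 _ _ hx hne) (fun hx => ha3 _ _ hx hne)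
  have hNC : ∀ e ∈ N, ∀ β, ep β e ∈ C := by
    intro e he β
    apply Finset.mem_insert_of_mem
    rw [Finset.mem_biUnion]
    refine ⟨e, he, ?_⟩
    rw [Finset.mem_union]
    cases β
    · exact Or.inl (ha1 _)
    · exact Or.inr (ha1 _)
  have hqC : ∀ x ∈ C, x ≠ ρ → ∀ β, ep β (q x) ∈ C := by
    intro x hx hne β
    by_cases hβ : β = b x
    · rw [hβ, (hq x hne).1]; exact hx
    · have : β = !b x := by revert hβ; cases b x <;> cases β <;> simp
      rw [this]; exact hpar x hx hne
  have hex : ∀ e, e ∉ N → ∃ x, x ≠ ρ ∧ q x = e := by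
    intro e he
    rw [hNm] at he
    push Not at he
    exact he
  let E : Finset (V × A) := N ∪ (C.erase ρ).image q
  have hE : ∀ e, e ∈ E ↔ ep false e ∈ C ∧ ep true e ∈ C := by
    intro e
    constructor
    · intro he
      rcases Finset.mem_union.1 he with he | he
      · exact ⟨hNC e he _, hNC e he _⟩
      · obtain ⟨x, hx, rfl⟩ := Finset.mem_image.1 he
        rw [Finset.mem_erase] at hx
        exact ⟨hqC x hx.2 hx.1 _, hqC x hx.2 hx.1 _⟩
    · rintro ⟨h1, h2⟩
      by_cases he : e ∈ N
      · exact Finset.mem_union_left _ he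
      · obtain ⟨x, hx, rfl⟩ := hex e he
        apply Finset.mem_union_right
        apply Finset.mem_image_of_mem
        rw [Finset.mem_erase]
        refine ⟨hx, ?_⟩
        have h3 := (hq x hx).1
        cases hb : b x <;> rw [hb] at h3
        · rw [← h3]; exact h1
        · rw [← h3]; exact h2
  refine ⟨C, E, ⟨⟨ρ, hρC⟩, hE, ?_, ?_⟩, ?_⟩
  · have : ∀ e, ∃ x, e ∉ N → x ≠ ρ ∧ q x = e := by
      intro e
      by_cases he : e ∈ N
      · exact ⟨ρ, fun h => (h he).elim⟩
      · obtain ⟨x, hx⟩ := hex e he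
        exact ⟨x, fun _ => hx⟩
    choose p hp using this
    have hEN : ∀ e, e ∉ E → e ∉ N := fun e he hn => he (Finset.mem_union_left _ hn)
    have hep : ∀ e, e ∉ E → ep (b (p e)) e = p e := by
      intro e he
      obtain ⟨h1, h2⟩ := hp e (hEN e he)
      have := (hq _ h1).1
      rwa [h2] at this
    refine ⟨fun e => b (p e), ?_, ?_⟩
    · intro e he hc
      rw [hep e he] at hc
      obtain ⟨h1, h2⟩ := hp e (hEN e he)
      apply he
      rw [← h2]
      exact Finset.mem_union_right _ (Finset.mem_image_of_mem _ (Finset.mem_erase.2 ⟨h1, hc⟩))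
    · intro e he e' he' heq
      rw [hep e he, hep e' he'] at heq
      rw [← (hp e (hEN e he)).2, ← (hp e' (hEN e' he')).2, heq]
  · intro S hS
    have hstep : ∀ x ∈ C, x ≠ ρ → (x ∈ S ↔ ep (!b x) (q x) ∈ S) := by
      intro x hx hne
      have h1 := hS (q x) ((hE _).2 ⟨hqC x hx hne _, hqC x hx hne _⟩)
      have h2 := (hq x hne).1
      cases hb : b x <;> rw [hb] at h2 <;> rw [h2] at h1
      · exact h1
      · exact h1.symm
    have hroot : ∀ x ∈ C, (x ∈ S ↔ ρ ∈ S) := by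
      intro x
      induction hn : h x using Nat.strong_induction_on generalizing x with
      | _ n ih =>
        intro hx
        by_cases hne : x = ρ
        · rw [hne]
        · rw [hstep x hx hne]
          exact ih _ (hn ▸ (hq x hne).2) _ rfl (hpar x hx hne)
    intro v hv hvS u hu
    exact (hroot u hu).2 ((hroot v hv).1 hvS)
  · have hdisj : Disjoint N ((C.erase ρ).image q) := by
      rw [Finset.disjoint_left]
      intro e he he'
      obtain ⟨x, hx, rfl⟩ := Finset.mem_image.1 he'
      exact (hNm _).1 he x (Finset.mem_erase.1 hx).1 rfl
    rw [Finset.card_union_of_disjoint hdisj, Finset.card_image_of_injOn, hN, add_assoc,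
      Finset.card_erase_add_one hρC, add_comm]
    intro x hx y hy hxy
    exact tree_inj hq (Finset.mem_erase.1 hx).1 (Finset.mem_erase.1 hy).1 hxy

lemma prune (r : ℕ) (hr : 1 ≤ r) (n : ℕ) : ∀ (C : Finset V) (E : Finset (V × A)),
    C.card = n → IsCore C E → E.card + 1 = C.card + r →
    ∃ (C' : Finset V) (E' : Finset (V × A)), IsCore C' E' ∧ E'.card + 1 = C'.card + r ∧
      ∀ v ∈ C', 2 ≤ deg E' v := by
  classical
  induction n with
  | zero =>
    intro C E h0 hc
    rw [Finset.card_eq_zero] at h0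
    exact absurd hc.nonempty (by simp [h0])
  | succ n ih =>
    intro C E hn hc hcard
    by_cases hall : ∀ v ∈ C, 2 ≤ deg E v
    · exact ⟨C, E, hc, hcard, hall⟩
    push Not at hall
    obtain ⟨v, hv, hd⟩ := hall
    by_cases hd0 : deg E v = 0
    · exfalso
      unfold deg at hd0
      have h1 : E.filter (fun e => ep false e = v) = ∅ := Finset.card_eq_zero.1 (by omega)
      have h2 : E.filter (fun e => ep true e = v) = ∅ := Finset.card_eq_zero.1 (by omega)
      rw [Finset.filter_eq_empty_iff] at h1 h2
      have h3 := hc.conn {v} (fun e he => by simp [h1 he, h2 he, -ep_true, -ep_false]) v hv rfl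
      have hE : E = ∅ := by
        rw [Finset.eq_empty_iff_forall_notMem]
        intro e he
        exact h1 he (h3 _ ((hc.mem e).1 he).1)
      have hC : C.card = 1 := by
        rw [Finset.card_eq_one]
        refine ⟨v, ?_⟩
        ext u
        simp only [Finset.mem_singleton]
        exact ⟨fun hu => h3 u hu, fun hu => hu ▸ hv⟩
      rw [hE, hC] at hcard
      simp at hcard
      omega
    · have hβ : ∃ β : Bool, (E.filter (fun e => ep β e = v)).card = 1 ∧
          E.filter (fun e => ep (!β) e = v) = ∅ := by
        unfold deg at hd hd0
        by_cases h1 : (E.filter (fun e => ep false e = v)).card = 1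
        · exact ⟨false, h1, Finset.card_eq_zero.1 (by simp only [Bool.not_false]; omega)⟩
        · exact ⟨true, by omega, Finset.card_eq_zero.1 (by simp only [Bool.not_true]; omega)⟩
      obtain ⟨β, hβ1, hβ2⟩ := hβ
      obtain ⟨e0, he0⟩ := Finset.card_eq_one.1 hβ1
      rw [Finset.filter_eq_empty_iff] at hβ2
      have he0' : e0 ∈ E ∧ ep β e0 = v := by
        have : e0 ∈ E.filter (fun e => ep β e = v) := by rw [he0]; simp
        simpa using this
      have huniq : ∀ e ∈ E, ep β e = v → e = e0 := by
        intro e he hev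
        have : e ∈ E.filter (fun e => ep β e = v) := by simp [he, hev]
        rw [he0] at this
        simpa using this
      have hno : ∀ e ∈ E, e ≠ e0 → ∀ γ, ep γ e ≠ v := by
        intro e he hne γ hγ
        by_cases h : γ = β
        · exact hne (huniq e he (h ▸ hγ))
        · have : γ = !β := by revert h; cases γ <;> cases β <;> simp
          exact hβ2 he (this ▸ hγ)
      have hends : ∀ e ∈ E, ∀ γ, ep γ e ∈ C := by
        intro e he γ
        cases γ
        · exact ((hc.mem e).1 he).1
        · exact ((hc.mem e).1 he).2
      have hcv : ep (!β) e0 ≠ v := hβ2 he0'.1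
      have hcard' : (C.erase v).card + 1 = C.card := Finset.card_erase_add_one hv
      have hcardE : (E.erase e0).card + 1 = E.card := Finset.card_erase_add_one he0'.1
      refine ih (C.erase v) (E.erase e0) (by omega) ⟨?_, ?_, ?_, ?_⟩ (by omega)
      · exact ⟨_, Finset.mem_erase.2 ⟨hcv, hends e0 he0'.1 _⟩⟩
      · intro e
        simp only [Finset.mem_erase]
        constructor
        · rintro ⟨h1, h2⟩
          exact ⟨⟨hno e h2 h1 _, hends e h2 _⟩, ⟨hno e h2 h1 _, hends e h2 _⟩⟩
        · rintro ⟨⟨h1, h2⟩, ⟨h3, h4⟩⟩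
          refine ⟨?_, (hc.mem e).2 ⟨h2, h4⟩⟩
          rintro rfl
          cases β
          · exact h1 he0'.2
          · exact h3 he0'.2
      · obtain ⟨b, hb1, hb2⟩ := hc.star
        have hcase : ∀ e, e ∉ E.erase e0 → e = e0 ∨ (e ≠ e0 ∧ e ∉ E) := by
          intro e he
          rw [Finset.mem_erase] at he
          tauto
        refine ⟨Function.update b e0 β, ?_, ?_⟩
        · intro e he
          rcases hcase e he with rfl | ⟨h1, h2⟩
          · simp [he0'.2]
          · rw [Function.update_of_ne h1]
            exact fun h => hb1 e h2 (Finset.mem_of_mem_erase h)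
        · intro e he e' he' heq
          rcases hcase e he with rfl | ⟨h1, h2⟩ <;> rcases hcase e' he' with rfl | ⟨h3, h4⟩
          · rfl
          · rw [Function.update_self, Function.update_of_ne h3, he0'.2] at heq
            exact (hb1 e' h4 (heq ▸ hv)).elim
          · rw [Function.update_self, Function.update_of_ne h1, he0'.2] at heq
            exact (hb1 e h2 (heq ▸ hv)).elim
          · rw [Function.update_of_ne h1, Function.update_of_ne h3] at heq
            exact hb2 e h2 e' h4 heq
      · intro S hS v1 hv1 hv1S u hu
        rw [Finset.mem_erase] at hv1 hu
        have := hc.conn {x | if x = v then ep (!β) e0 ∈ S else x ∈ S} ?_ v1 hv1.2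
          (by simpa [hv1.1] using hv1S) u hu.2
        · simpa [hu.1] using this
        · intro e he
          by_cases hee : e = e0
          · subst hee
            cases β
            · have h1 := he0'.2
              have h2 : ep true e ≠ v := hcv
              show (if _ then _ else _) ↔ (if _ then _ else _)
              rw [if_pos h1, if_neg h2]; rfl
            · have h1 := he0'.2
              have h2 : ep false e ≠ v := hcv
              show (if _ then _ else _) ↔ (if _ then _ else _)
              rw [if_pos h1, if_neg h2]; rfl
          · show (if _ then _ else _) ↔ (if _ then _ else _)
            rw [if_neg (hno e he hee _), if_neg (hno e he hee _)]
            exact hS e (Finset.mem_erase.2 ⟨hee, he⟩)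

lemma sum_deg (C : Finset V) (E : Finset (V × A))
    (h : ∀ e ∈ E, ep false e ∈ C ∧ ep true e ∈ C) : ∑ v ∈ C, deg E v = 2 * E.card := by
  classical
  unfold deg
  rw [Finset.sum_add_distrib,
    ← Finset.card_eq_sum_card_fiberwise (fun e he => (h e he).1),
    ← Finset.card_eq_sum_card_fiberwise (fun e he => (h e he).2)]
  ring

lemma deg_mono {E E' : Finset (V × A)} (h : E ⊆ E') (v : V) : deg E v ≤ deg E' v := by
  classical
  unfold deg
  exact add_le_add (Finset.card_le_card (Finset.filter_subset_filter _ h))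
    (Finset.card_le_card (Finset.filter_subset_filter _ h))

/-- Upper bound for the Euler characteristic of a finite subgraph `(C', D)`. -/
lemma local_bound {C C' : Finset V} {E D : Finset (V × A)} [DecidableEq V] (r : ℕ)
    (hE : ∀ e, e ∈ E ↔ ep false e ∈ C ∧ ep true e ∈ C) (hs : Star C E)
    (hD : ∀ e ∈ D, ep false e ∈ C' ∧ ep true e ∈ C')
    (hcard : C'.card + r ≤ D.card + 1) :
    2 * (r - 1) ≤ ∑ x ∈ C ∩ C', (deg E x - 2) := by
  classical
  obtain ⟨b, hb1, hb2⟩ := hs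
  have h1 : (D \ E).card ≤ (C' \ C).card := by
    apply Finset.card_le_card_of_injOn (fun e => ep (b e) e)
    · intro e he
      have he := Finset.mem_sdiff.1 he
      refine Finset.mem_coe.2 (Finset.mem_sdiff.2 ⟨?_, hb1 e he.2⟩)
      change ep (b e) e ∈ C'
      cases b e
      · exact (hD e he.1).1
      · exact (hD e he.1).2
    · intro e he e' he' hee
      exact hb2 e (Finset.mem_sdiff.1 he).2 e' (Finset.mem_sdiff.1 he').2 hee
  have h2 : ∑ x ∈ C ∩ C', deg (D ∩ E) x = 2 * (D ∩ E).card := by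
    apply sum_deg
    intro e he
    rw [Finset.mem_inter] at he
    have h3 := hD e he.1
    have h4 := (hE e).1 he.2
    exact ⟨Finset.mem_inter.2 ⟨h4.1, h3.1⟩, Finset.mem_inter.2 ⟨h4.2, h3.2⟩⟩
  have h3 : ∑ x ∈ C ∩ C', deg (D ∩ E) x ≤ ∑ x ∈ C ∩ C', ((deg E x - 2) + 2) := by
    apply Finset.sum_le_sum
    intro x _
    have := deg_mono (Finset.inter_subset_right : D ∩ E ⊆ E) x
    omega
  rw [Finset.sum_add_distrib, Finset.sum_const, smul_eq_mul] at h3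
  have h4 := Finset.card_sdiff_add_card_inter D E
  have h5 := Finset.card_sdiff_add_card_inter C' C
  rw [Finset.inter_comm C' C] at h5
  omega

lemma orbit_bound [Nonempty A] {C : Finset V} {E : Finset (V × A)}
    (hE : ∀ e, e ∈ E ↔ ep false e ∈ C ∧ ep true e ∈ C) (hs : Star C E) (x : V)
    (hfg : (MulAction.stabilizer (FreeGroup A) x).FG) [DecidableEq V]
    [DecidablePred (· ∈ MulAction.orbit (FreeGroup A) x)] :
    2 * (rkSubgroup (MulAction.stabilizer (FreeGroup A) x) - 1) ≤
      ∑ y ∈ C.filter (· ∈ MulAction.orbit (FreeGroup A) x), (deg E y - 2) := by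
  classical
  let x' : MulAction.orbit (FreeGroup A) x := ⟨x, MulAction.mem_orbit_self x⟩
  have hst : MulAction.stabilizer (FreeGroup A) x' = MulAction.stabilizer (FreeGroup A) x := by
    ext g
    simp only [MulAction.mem_stabilizer_iff, x', Subtype.ext_iff]
    rfl
  obtain ⟨C', D, hc, hcard⟩ := exists_core (A := A) x' (by rw [hst]; exact hfg)
  rw [hst] at hcard
  have hfi : Function.Injective (fun e : MulAction.orbit (FreeGroup A) x × A => ((e.1 : V), e.2)) := by
    rintro ⟨a, b⟩ ⟨c, d⟩ h
    simp only [Prod.mk.injEq] at h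
    exact Prod.ext (Subtype.ext h.1) h.2
  refine (local_bound (C' := C'.image Subtype.val)
    (D := D.image (fun e => ((e.1 : V), e.2))) _ hE hs ?_ ?_).trans ?_
  · intro e he
    obtain ⟨e1, he1, rfl⟩ := Finset.mem_image.1 he
    have := (hc.mem e1).1 he1
    exact ⟨Finset.mem_image.2 ⟨_, this.1, rfl⟩, Finset.mem_image.2 ⟨_, this.2, rfl⟩⟩
  · rw [Finset.card_image_of_injective _ hfi,
      Finset.card_image_of_injective _ Subtype.val_injective]
    omega
  · apply Finset.sum_le_sum_of_subset
    intro y hy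
    rw [Finset.mem_inter] at hy
    obtain ⟨z, _, rfl⟩ := Finset.mem_image.1 hy.2
    exact Finset.mem_filter.2 ⟨hy.1, z.2⟩
end

section
variable {A V W : Type*} [MulAction (FreeGroup A) V] [MulAction (FreeGroup A) W]

lemma ep_prod (b : Bool) (u : V) (v : W) (a : A) :
    ep b ((u, v), a) = (ep b (u, a), ep b (v, a)) := by
  cases b <;> rfl

lemma prod_core {C : Finset V} {E : Finset (V × A)} {C' : Finset W} {E' : Finset (W × A)}
    (hE : ∀ e, e ∈ E ↔ ep false e ∈ C ∧ ep true e ∈ C) (hs : Star C E)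
    (hE' : ∀ e, e ∈ E' ↔ ep false e ∈ C' ∧ ep true e ∈ C') (hs' : Star C' E') :
    ∃ P : Finset ((V × W) × A),
      (∀ e, e ∈ P ↔ ep false e ∈ C ×ˢ C' ∧ ep true e ∈ C ×ˢ C') ∧ Star (C ×ˢ C') P ∧
      ∀ u v, deg P (u, v) ≤ deg E u ∧ deg P (u, v) ≤ deg E' v := by
  classical
  let P : Finset ((V × W) × A) :=
    ((E ×ˢ E').filter (fun z => z.1.2 = z.2.2)).image (fun z => ((z.1.1, z.2.1), z.1.2))
  have hP : ∀ u v a, ((u, v), a) ∈ P ↔ (u, a) ∈ E ∧ (v, a) ∈ E' := by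
    intro u v a
    simp only [P, Finset.mem_image, Finset.mem_filter, Finset.mem_product]
    constructor
    · rintro ⟨⟨⟨u', a'⟩, ⟨v', a''⟩⟩, ⟨⟨h1, h2⟩, h3⟩, h4⟩
      simp only [Prod.mk.injEq] at h3 h4
      obtain ⟨⟨rfl, rfl⟩, rfl⟩ := h4
      subst h3
      exact ⟨h1, h2⟩
    · rintro ⟨h1, h2⟩
      exact ⟨((u, a), (v, a)), ⟨⟨h1, h2⟩, rfl⟩, rfl⟩
  refine ⟨P, ?_, ?_, ?_⟩
  · rintro ⟨⟨u, v⟩, a⟩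
    rw [hP, hE, hE', ep_prod, ep_prod, Finset.mem_product, Finset.mem_product]
    tauto
  · obtain ⟨b, hb1, hb2⟩ := hs
    obtain ⟨b', hb1', hb2'⟩ := hs'
    refine ⟨fun e => if (e.1.1, e.2) ∈ E then b' (e.1.2, e.2) else b (e.1.1, e.2), ?_, ?_⟩
    · rintro ⟨⟨u, v⟩, a⟩ he hmem
      rw [hP] at he
      rw [ep_prod, Finset.mem_product] at hmem
      by_cases h : (u, a) ∈ E
      · simp only [h, if_true] at hmem
        exact hb1' _ (fun h' => he ⟨h, h'⟩) hmem.2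
      · simp only [h, if_false] at hmem
        exact hb1 _ h hmem.1
    · have hin : ∀ (u : V) (a : A), (u, a) ∈ E → ∀ β, ep β (u, a) ∈ C := by
        intro u a h β
        cases β
        · exact ((hE _).1 h).1
        · exact ((hE _).1 h).2
      have hback : ∀ {X : Type _} [MulAction (FreeGroup A) X] (x y : X) (a : A) (β : Bool),
          ep β (x, a) = ep β (y, a) → x = y := by
        intro X _ x y a β h
        cases β
        · exact h
        · exact smul_left_cancel _ h
      rintro ⟨⟨u, v⟩, a⟩ he ⟨⟨u', v'⟩, a'⟩ he' heq
      rw [hP] at he he'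
      simp only [ep_prod, Prod.mk.injEq] at heq
      by_cases h : (u, a) ∈ E <;> by_cases h' : (u', a') ∈ E
      · simp only [h, h', if_true] at heq
        have h1 := hb2' _ (fun k => he ⟨h, k⟩) _ (fun k => he' ⟨h', k⟩) heq.2
        simp only [Prod.mk.injEq] at h1
        obtain ⟨rfl, rfl⟩ := h1
        have := hback _ _ _ _ heq.1
        rw [this]
      · simp only [h, h', if_true, if_false] at heq
        exact (hb1 _ h' (heq.1 ▸ hin u a h _)).elim
      · simp only [h, h', if_true, if_false] at heq
        exact (hb1 _ h (heq.1 ▸ hin u' a' h' _)).elim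
      · simp only [h, h', if_false] at heq
        have h1 := hb2 _ h _ h' heq.1
        simp only [Prod.mk.injEq] at h1
        obtain ⟨rfl, rfl⟩ := h1
        have : v = v' := by
          have := heq.2
          cases hb : b (u, a) <;> rw [hb] at this
          · exact this
          · exact smul_left_cancel _ this
        rw [this]
  · intro u v
    have h1 : ∀ β, (P.filter (fun e => ep β e = (u, v))).card ≤
        (E.filter (fun e => ep β e = u)).card := by
      intro β
      apply Finset.card_le_card_of_injOn (fun e => (e.1.1, e.2))
      · rintro ⟨⟨x, y⟩, a⟩ he
        have he := Finset.mem_filter.1 he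
        rw [hP, ep_prod, Prod.mk.injEq] at he
        exact Finset.mem_coe.2 (Finset.mem_filter.2 ⟨he.1.1, he.2.1⟩)
      · rintro ⟨⟨x, y⟩, a⟩ he ⟨⟨x', y'⟩, a'⟩ he' heq
        have he := (Finset.mem_filter.1 he).2
        have he' := (Finset.mem_filter.1 he').2
        simp only [Prod.mk.injEq] at heq
        obtain ⟨rfl, rfl⟩ := heq
        rw [ep_prod, Prod.mk.injEq] at he he'
        have := he.2.trans he'.2.symm
        have : y = y' := by
          cases β
          · exact this
          · exact smul_left_cancel _ this
        rw [this]
    have h2 : ∀ β, (P.filter (fun e => ep β e = (u, v))).card ≤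
        (E'.filter (fun e => ep β e = v)).card := by
      intro β
      apply Finset.card_le_card_of_injOn (fun e => (e.1.2, e.2))
      · rintro ⟨⟨x, y⟩, a⟩ he
        have he := Finset.mem_filter.1 he
        rw [hP, ep_prod, Prod.mk.injEq] at he
        exact Finset.mem_coe.2 (Finset.mem_filter.2 ⟨he.1.2, he.2.2⟩)
      · rintro ⟨⟨x, y⟩, a⟩ he ⟨⟨x', y'⟩, a'⟩ he' heq
        have he := (Finset.mem_filter.1 he).2
        have he' := (Finset.mem_filter.1 he').2
        simp only [Prod.mk.injEq] at heq
        obtain ⟨rfl, rfl⟩ := heq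
        rw [ep_prod, Prod.mk.injEq] at he he'
        have := he.1.trans he'.1.symm
        have : x = x' := by
          cases β
          · exact this
          · exact smul_left_cancel _ this
        rw [this]
    unfold deg
    have h3 := Nat.add_le_add (h1 false) (h1 true)
    have h4 := Nat.add_le_add (h2 false) (h2 true)
    constructor
    · convert h3
    · convert h4
end

section
variable {A : Type*}

lemma exists_leafless [Nonempty A] (H : Subgroup (FreeGroup A)) (hH : H.FG)
    (h0 : 1 ≤ rkSubgroup H) :
    ∃ (C : Finset (FreeGroup A ⧸ H)) (E : Finset ((FreeGroup A ⧸ H) × A)),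
      (∀ e, e ∈ E ↔ ep false e ∈ C ∧ ep true e ∈ C) ∧ Star C E ∧
      ∑ v ∈ C, (deg E v - 2) = 2 * (rkSubgroup H - 1) := by
  have hst : MulAction.stabilizer (FreeGroup A) ((1 : FreeGroup A) : FreeGroup A ⧸ H) = H :=
    MulAction.stabilizer_quotient H
  obtain ⟨C, E, hc, hcard⟩ := exists_core (A := A) ((1 : FreeGroup A) : FreeGroup A ⧸ H)
    (by rw [hst]; exact hH)
  rw [hst] at hcard
  obtain ⟨C, E, hc, hcard, hdeg⟩ := prune _ h0 _ C E rfl hc hcard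
  refine ⟨C, E, hc.mem, hc.star, ?_⟩
  have h1 := sum_deg C E (fun e he => (hc.mem e).1 he)
  have h2 : ∑ v ∈ C, deg E v = ∑ v ∈ C, ((deg E v - 2) + 2) :=
    Finset.sum_congr rfl (fun v hv => by have := hdeg v hv; omega)
  rw [Finset.sum_add_distrib, Finset.sum_const, smul_eq_mul] at h2
  omega

lemma rk_bot {G : Type*} [Group G] : rkSubgroup (⊥ : Subgroup G) = 0 := by
  have := rk_le (H := (⊥ : Subgroup G)) ∅ (by simp)
  simpa using this

lemma eq_bot_of_rk {G : Type*} [Group G] {H : Subgroup G} (hH : H.FG) (h : rkSubgroup H = 0) :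
    H = ⊥ := by
  obtain ⟨S, h1, h2⟩ := rk_mem hH
  rw [h, Finset.card_eq_zero] at h1
  rw [← h2, h1]; simp

lemma rk_not_fg {G : Type*} [Group G] {H : Subgroup G} (hH : ¬ H.FG) : rkSubgroup H = 0 := by
  unfold rkSubgroup
  convert Nat.sInf_empty
  rw [Set.eq_empty_iff_forall_notMem]
  rintro n ⟨S, -, hS⟩
  exact hH ⟨S, hS⟩
end
end SHN

/-- **Strengthened Hanna Neumann inequality** (W. Neumann): for finitely generated
subgroups `H, K` of a free group `F` and a set `T` of double coset representatives
for `H\F/K`, the finitely supported sum `∑_{w ∈ T} rr(H^w ⊓ K)` is at most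
`2·rr(H)·rr(K)` (stated via all finite partial sums). -/
theorem strengthened_hanna_neumann {A : Type*} (H K : Subgroup (FreeGroup A))
    (hH : H.FG) (hK : K.FG) (T : Set (FreeGroup A))
    (hT : ∀ g : FreeGroup A,
      ∃! w : FreeGroup A, w ∈ T ∧ ∃ h ∈ H, ∃ k ∈ K, g = h * w * k) :
    ∀ T' : Finset (FreeGroup A), ↑T' ⊆ T →
      ∑ w ∈ T', rrSubgroup (conjSubgroup w H ⊓ K) ≤
        2 * (rrSubgroup H * rrSubgroup K) := by
  classical
  intro T' hT'
  by_cases hH0 : rkSubgroup H = 0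
  · have hb := SHN.eq_bot_of_rk hH hH0
    have : ∀ w, rrSubgroup (conjSubgroup w H ⊓ K) = 0 := by
      intro w
      simp [rrSubgroup, conjSubgroup, hb, SHN.rk_bot]
    simp [this]
  by_cases hK0 : rkSubgroup K = 0
  · have hb := SHN.eq_bot_of_rk hK hK0
    have : ∀ w, rrSubgroup (conjSubgroup w H ⊓ K) = 0 := by
      intro w
      simp [rrSubgroup, hb, SHN.rk_bot]
    simp [this]
  have hA : Nonempty A := by
    by_contra hA
    rw [not_nonempty_iff] at hA
    apply hH0
    rw [Subsingleton.elim H ⊥, SHN.rk_bot]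
  obtain ⟨C, E, hE, hs, hsum⟩ := SHN.exists_leafless H hH (Nat.one_le_iff_ne_zero.2 hH0)
  obtain ⟨C', E', hE', hs', hsum'⟩ := SHN.exists_leafless K hK (Nat.one_le_iff_ne_zero.2 hK0)
  obtain ⟨P, hP, hPs, hdeg⟩ := SHN.prod_core hE hs hE' hs'
  let pt : FreeGroup A → (FreeGroup A ⧸ H) × (FreeGroup A ⧸ K) := fun w =>
    (((w⁻¹ : FreeGroup A) : FreeGroup A ⧸ H), ((1 : FreeGroup A) : FreeGroup A ⧸ K))
  have hstab : ∀ w, MulAction.stabilizer (FreeGroup A) (pt w) = conjSubgroup w H ⊓ K := by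
    intro w
    ext x
    rw [MulAction.mem_stabilizer_iff, Subgroup.mem_inf]
    have h1 : x • pt w = (((x * w⁻¹ : FreeGroup A) : FreeGroup A ⧸ H),
      ((x * 1 : FreeGroup A) : FreeGroup A ⧸ K)) := rfl
    rw [h1]
    simp only [pt, Prod.mk.injEq, QuotientGroup.eq, mul_one, inv_mem_iff]
    apply and_congr _ Iff.rfl
    simp only [conjSubgroup, Subgroup.mem_map]
    constructor
    · intro h
      refine ⟨_, inv_mem h, ?_⟩
      simp [mul_assoc]
    · rintro ⟨y, hy, rfl⟩
      simpa [mul_assoc] using hy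
  have hdisj : ∀ w ∈ T, ∀ w' ∈ T, ∀ z, z ∈ MulAction.orbit (FreeGroup A) (pt w) →
      z ∈ MulAction.orbit (FreeGroup A) (pt w') → w = w' := by
    rintro w hw w' hw' z ⟨x, rfl⟩ ⟨y, hy⟩
    have h1 : (((y * w'⁻¹ : FreeGroup A) : FreeGroup A ⧸ H),
        ((y * 1 : FreeGroup A) : FreeGroup A ⧸ K)) =
        (((x * w⁻¹ : FreeGroup A) : FreeGroup A ⧸ H),
        ((x * 1 : FreeGroup A) : FreeGroup A ⧸ K)) := hy
    rw [Prod.mk.injEq, QuotientGroup.eq, QuotientGroup.eq] at h1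
    obtain ⟨hh, hk⟩ := h1
    obtain ⟨v, -, hv⟩ := hT w'
    have e1 := hv w ⟨hw, _, hh, _, inv_mem hk, by group⟩
    have e2 := hv w' ⟨hw', 1, one_mem _, 1, one_mem _, by simp⟩
    rw [e1, e2]
  have hw : ∀ w, 2 * rrSubgroup (conjSubgroup w H ⊓ K) ≤
      ∑ y ∈ (C ×ˢ C').filter (· ∈ MulAction.orbit (FreeGroup A) (pt w)), (SHN.deg P y - 2) := by
    intro w
    by_cases hfg : (conjSubgroup w H ⊓ K).FG
    · have := SHN.orbit_bound hP hPs (pt w) (by rw [hstab]; exact hfg)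
      rw [hstab] at this
      exact this
    · simp [rrSubgroup, SHN.rk_not_fg hfg]
  have h1 : 2 * ∑ w ∈ T', rrSubgroup (conjSubgroup w H ⊓ K) ≤
      ∑ y ∈ C ×ˢ C', (SHN.deg P y - 2) := by
    rw [Finset.mul_sum]
    refine (Finset.sum_le_sum fun w _ => hw w).trans ?_
    rw [← Finset.sum_biUnion]
    · apply Finset.sum_le_sum_of_subset
      intro y hy
      obtain ⟨w, _, hy⟩ := Finset.mem_biUnion.1 hy
      exact (Finset.mem_filter.1 hy).1
    · intro w hw w' hw' hne
      rw [Function.onFun, Finset.disjoint_left]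
      intro z hz hz'
      exact hne (hdisj w (hT' hw) w' (hT' hw') z (Finset.mem_filter.1 hz).2
        (Finset.mem_filter.1 hz').2)
  have h2 : ∑ y ∈ C ×ˢ C', (SHN.deg P y - 2) ≤
      (∑ u ∈ C, (SHN.deg E u - 2)) * ∑ v ∈ C', (SHN.deg E' v - 2) := by
    rw [Finset.sum_mul_sum, ← Finset.sum_product']
    apply Finset.sum_le_sum
    rintro ⟨u, v⟩ -
    obtain ⟨h3, h4⟩ := hdeg u v
    rcases Nat.eq_zero_or_pos (SHN.deg E' v - 2) with h5 | h5
    · omega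
    · calc SHN.deg P (u, v) - 2 ≤ SHN.deg E u - 2 := by omega
        _ ≤ _ := Nat.le_mul_of_pos_right _ h5
  rw [hsum, hsum'] at h2
  have h3 := h1.trans h2
  unfold rrSubgroup at h3 ⊢
  nlinarith
end

section
/- Let H and K be finitely generated subgroups of a free group F = FreeGroup A and let T ⊆ F be a set of double coset representatives for H\F/K. Then the set {w ∈ T | H^w ⊓ K ≠ ⊥} is finite; i.e., for all but finitely many double cosets HwK, the intersection w⁻¹Hw ⊓ K is the trivial subgroup. -/
namespace FGInt

open FreeGroup

/-- The vertices visited by the path from `1` spelled by the word `L`. -/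
def Vis {A : Type*} (L : List (A × Bool)) : Set (FreeGroup A) :=
  {g | ∃ p q, L = p ++ q ∧ g = mk p}

theorem vis_append {A : Type*} {L M : List (A × Bool)} {g : FreeGroup A}
    (h : g ∈ Vis (L ++ M)) : g ∈ Vis L ∨ ∃ x ∈ Vis M, g = mk L * x := by
  obtain ⟨p, q, e, rfl⟩ := h
  rcases List.append_eq_append_iff.1 e with ⟨a, h1, h2⟩ | ⟨a, h1, h2⟩
  · right
    exact ⟨mk a, ⟨a, q, h2, rfl⟩, by rw [h1, mul_mk]⟩
  · left
    exact ⟨p, a, h1, rfl⟩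

theorem vis_append_left {A : Type*} {L M : List (A × Bool)} {g : FreeGroup A}
    (h : g ∈ Vis L) : g ∈ Vis (L ++ M) := by
  obtain ⟨p, q, e, rfl⟩ := h
  exact ⟨p, q ++ M, by simp [e], rfl⟩

theorem vis_append_right {A : Type*} {L M : List (A × Bool)} {g : FreeGroup A}
    (h : g ∈ Vis M) : mk L * g ∈ Vis (L ++ M) := by
  obtain ⟨p, q, e, rfl⟩ := h
  exact ⟨L ++ p, q, by simp [e], by rw [mul_mk]⟩

theorem vis_step {A : Type*} {L M : List (A × Bool)} (h : Red.Step L M) : Vis M ⊆ Vis L := by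
  intro g hg
  cases h with
  | @not L1 L2 x b =>
    rcases vis_append hg with h | ⟨y, hy, rfl⟩
    · exact vis_append_left h
    · have e : mk L1 = mk (L1 ++ [(x, b), (x, !b)]) := by
        have h := @Red.Step.not A L1 [] x b
        rw [List.append_nil] at h
        exact (Quot.sound h).symm
      rw [e]
      have := vis_append_right (L := L1 ++ [(x, b), (x, !b)]) hy
      simpa using this

theorem vis_red {A : Type*} {L M : List (A × Bool)} (h : Red L M) : Vis M ⊆ Vis L := by
  induction h with
  | refl => exact subset_rfl
  | tail _ h ih => exact (vis_step h).trans ih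

theorem vis_mul {A : Type*} [DecidableEq A] {x y g : FreeGroup A}
    (h : g ∈ Vis (x * y).toWord) : g ∈ Vis x.toWord ∨ ∃ z ∈ Vis y.toWord, g = x * z := by
  rw [toWord_mul] at h
  have := vis_append (vis_red reduce.red h)
  rwa [mk_toWord] at this

theorem vis_inv {A : Type*} [DecidableEq A] {x g : FreeGroup A}
    (h : g ∈ Vis (x⁻¹).toWord) : ∃ z ∈ Vis x.toWord, g = x⁻¹ * z := by
  obtain ⟨p, q, e, rfl⟩ := h
  rw [toWord_inv] at e
  have e2 : x.toWord = invRev q ++ invRev p := by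
    rw [← invRev_append, ← e, invRev_invRev]
  refine ⟨mk (invRev q), ⟨_, _, e2, rfl⟩, ?_⟩
  have : x = mk (invRev q) * mk (invRev p) := by rw [mul_mk, ← e2, mk_toWord]
  rw [← inv_mk, ← inv_mk] at this
  rw [this, ← inv_mk]
  group

theorem vis_finite {A : Type*} (L : List (A × Bool)) : (Vis L).Finite := by
  refine ((List.finite_toSet L.inits).image (fun p => mk p)).subset ?_
  rintro g ⟨p, q, e, rfl⟩
  exact ⟨p, by simp [e], rfl⟩

theorem vis_norm {A : Type*} [DecidableEq A] {x g : FreeGroup A}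
    (h : g ∈ Vis x.toWord) : g.norm ≤ x.norm := by
  obtain ⟨p, q, e, rfl⟩ := h
  refine norm_mk_le.trans ?_
  rw [FreeGroup.norm, e]; simp

/-- Quasiconvexity of finitely generated subgroups. -/
theorem quasiconvex {A : Type*} [DecidableEq A] (H : Subgroup (FreeGroup A)) (hH : H.FG) :
    ∃ B : Set (FreeGroup A), B.Finite ∧
      ∀ h ∈ H, ∀ g ∈ Vis h.toWord, ∃ x ∈ H, ∃ b ∈ B, g = x * b := by
  obtain ⟨S, rfl⟩ := hH
  refine ⟨(⋃ s ∈ S, Vis s.toWord) ∪ {1},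
    (S.finite_toSet.biUnion (fun s _ => vis_finite _)).union (Set.finite_singleton 1), ?_⟩
  intro h hh
  induction hh using Subgroup.closure_induction with
  | mem s hs =>
    intro g hg
    exact ⟨1, one_mem _, g, Or.inl (Set.mem_biUnion hs hg), by simp⟩
  | one =>
    rintro g ⟨p, q, e, rfl⟩
    rw [toWord_one] at e
    obtain ⟨rfl, rfl⟩ := List.append_eq_nil_iff.1 e.symm
    exact ⟨1, one_mem _, 1, Or.inr rfl, by simp [one_eq_mk]⟩
  | mul x y hx hy ihx ihy =>
    intro g hg
    rcases vis_mul hg with h | ⟨z, hz, rfl⟩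
    · exact ihx g h
    · obtain ⟨a, ha, b, hb, rfl⟩ := ihy z hz
      exact ⟨x * a, mul_mem hx ha, b, hb, by group⟩
  | inv x hx ihx =>
    intro g hg
    obtain ⟨z, hz, rfl⟩ := vis_inv hg
    obtain ⟨a, ha, b, hb, rfl⟩ := ihx z hz
    exact ⟨x⁻¹ * a, mul_mem (inv_mem hx) ha, b, hb, by group⟩

theorem norm_pow_ge {A : Type*} [DecidableEq A] {x : FreeGroup A} (hx : x ≠ 1) (n : ℕ) :
    n ≤ (x ^ n).norm := by
  rcases n with _ | n
  · simp
  rw [FreeGroup.norm, toWord_pow, reduceCyclically.reduce_flatten_replicate_succ isReduced_toWord]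
  have : 1 ≤ (reduceCyclically x.toWord).length := by
    rw [Nat.one_le_iff_ne_zero]
    intro h0
    rw [List.length_eq_zero_iff] at h0
    have h := reduceCyclically.conj_conjugator_reduceCyclically x.toWord
    rw [h0] at h
    apply hx
    rw [← mk_toWord (x := x), ← h, List.append_nil, ← mul_mk, ← inv_mk, mul_inv_cancel]
  simp only [List.length_append, List.length_flatten, List.map_replicate, List.sum_replicate,
    smul_eq_mul]
  nlinarith

theorem overlap {A : Type*} [DecidableEq A] {w u v : FreeGroup A} (e : u = w * v * w⁻¹)
    (hu : 2 * w.norm + 2 ≤ u.norm) :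
    ∃ g ∈ Vis u.toWord, ∃ z ∈ Vis v.toWord, g = w * z := by
  set p := u.toWord.take (w.norm + 1) with hp
  set q := u.toWord.drop (w.norm + 1) with hq
  have epq : u.toWord = p ++ q := by simp [hp, hq]
  have hr : IsReduced (p ++ q) := epq ▸ isReduced_toWord
  have np : (mk p).norm = w.norm + 1 := by
    rw [FreeGroup.norm, toWord_mk, (hr.infix ⟨[], q, by simp⟩ : IsReduced p).reduce_eq, hp,
      List.length_take]
    change min _ u.norm = _
    omega
  have nq : (mk q).norm = u.norm - (w.norm + 1) := by
    rw [FreeGroup.norm, toWord_mk, (hr.infix ⟨p, [], by simp⟩ : IsReduced q).reduce_eq, hq,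
      List.length_drop]
    rfl
  have hu' : u = mk p * mk q := by rw [mul_mk, ← epq, mk_toWord]
  have hm : mk p ∈ Vis u.toWord := ⟨p, q, epq, rfl⟩
  refine ⟨_, hm, ?_⟩
  have hm2 := hm
  rw [e] at hm2
  rcases vis_mul hm2 with h | ⟨z, hz, h⟩
  · rcases vis_mul h with h | h
    · have := vis_norm h
      omega
    · exact h
  · exfalso
    obtain ⟨y, hy, rfl⟩ := vis_inv hz
    have e3 : mk p = u * y := by rw [h, e]; group
    have e4 : mk q = y⁻¹ := by
      rw [hu'] at e3
      have : mk p * (mk q * y) = mk p * 1 := by rw [mul_one, ← mul_assoc, ← e3]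
      exact eq_inv_of_mul_eq_one_left (mul_left_cancel this)
    rw [e4, norm_inv_eq] at nq
    have := vis_norm hy
    omega

end FGInt

open FGInt in
/-- For finitely generated subgroups `H, K` of a free group `F` and a set `T` of
double coset representatives for `H\F/K`, the intersection `H^w ⊓ K` is trivial
for all but finitely many `w ∈ T`. -/
theorem finitely_many_nontrivial_intersections {A : Type*}
    (H K : Subgroup (FreeGroup A)) (hH : H.FG) (hK : K.FG) (T : Set (FreeGroup A))
    (hT : ∀ g : FreeGroup A,
      ∃! w : FreeGroup A, w ∈ T ∧ ∃ h ∈ H, ∃ k ∈ K, g = h * w * k) :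
    {w ∈ T | conjSubgroup w H ⊓ K ≠ ⊥}.Finite := by
  classical
  obtain ⟨B, hB, hBH⟩ := quasiconvex H hH
  obtain ⟨C, hC, hCK⟩ := quasiconvex K hK
  refine ((hB.prod hC).image (fun bc => (hT (bc.1 * bc.2⁻¹)).choose)).subset ?_
  rintro w ⟨hwT, hw⟩
  obtain ⟨k, hk, hk1⟩ := Subgroup.ne_bot_iff_exists_ne_one.1 hw |>.elim
    (fun a ha => (⟨a.1, a.2, fun h => ha (Subtype.ext h)⟩ :
      ∃ k, k ∈ conjSubgroup w H ⊓ K ∧ k ≠ 1))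
  obtain ⟨⟨h, hh, e⟩, hkK⟩ := hk
  have e' : h = w * k * w⁻¹ := by
    rw [← e]; simp [MulAut.conj_apply]; group
  have hh1 : h ≠ 1 := by
    rintro rfl
    exact hk1 (by rw [← e]; simp)
  set n := 2 * w.norm + 2
  have en : h ^ n = w * k ^ n * w⁻¹ := by rw [e', conj_pow]
  obtain ⟨g, hg, z, hz, hgz⟩ := overlap en (norm_pow_ge hh1 n)
  obtain ⟨x, hx, b, hb, rfl⟩ := hBH _ (pow_mem hh n) g hg
  obtain ⟨y, hy, c, hc, rfl⟩ := hCK _ (pow_mem hkK n) z hz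
  refine ⟨(b, c), ⟨hb, hc⟩, ?_⟩
  refine (hT (b * c⁻¹)).unique (hT (b * c⁻¹)).choose_spec.1 ⟨hwT, x⁻¹, inv_mem hx, y, hy, ?_⟩
  have : b = x⁻¹ * (w * (y * c)) := by rw [← hgz]; group
  rw [this]; group
end
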